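/- arXiv:1308.3806 — 4 statements merged into one kernel-verified Lean document; each statement's English description precedes it below -/
import Mathlib

section
/- Let Q be an infinite set of positive integers, n ≥ 1 an integer and τ > 2 + 1/n a real number. Then the Hausdorff dimension of W*_{τ,n}(Q) is at least (n + ν(Q))/τ; in particular W*_{τ,n}(Q) is nonempty. -/
/-!
The dimension bound is obtained from a Cantor set inside `W*`, carrying a probability measure to
which the mass distribution principle applies.

Fix `t < (n + ν(Q)) / τ`. There is `σ ∈ [0, 1]` with `τ t < n + σ` and `#(Q ∩ [N, 2N)) ≥ N ^ σ` for
arbitrarily large `N` (`frequently_block_nonempty`, `frequently_block_card`). A *node* of level `N`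
is a pair `(p, q)` with `q ∈ Q ∩ [N, 2N)` and all coordinates of `p` coprime to `q`. Its ball is
centred at `p/q + (3/4) q^{-τ} (1, …, 1)` and has radius `(2N)^{-τ} / 8`, so that it lies in the
annulus `(5/8) q^{-τ} ≤ |x - p/q| < q^{-τ}`: its points are approximated by `p/q`, but not by the
same rational point written with a larger denominator.

Let `x` lie in the nested balls of nodes of levels `N_0 < N_1 < …`. A denominator `a` with
`4 N_k ≤ a^{τ-1}` and `2a ≤ N_k^{τ-1}` that approximates `x` must be that of the level `N_k` node
(`IsNode.eq_of_approx`), because distinct rationals with denominators `a` and `q` are `1/(aq)`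
apart. The remaining large denominators lie in gaps `N_k^{τ-1} ≤ 2a`, `a^{τ-1} ≤ 4 N_{k+1}`; they
are excluded by keeping only nodes of level `N_{k+1}` that are far from all rationals with such
denominators (`Avoids`, `IsNode.not_approx_of_avoids`). A sieve shows that in a ball of level `N_k`
a positive proportion of the reduced points remains (`card_avoids_ge`): the proportion lost to `a`
is `≪ a^{-β}` for any `β < n (τ - 2)`, and since `τ > 2 + 1/n` one can take `β > 1`, so the losses
sum to a small quantity.

If each level is chosen large enough in terms of the previous one, every node gets the same number
`M` of children, and the children are so evenly distributed that a ball of radius `2ρ` contains at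
most `C (ρ / r)^t M` of their centres, `r` being the radius of the parent (`exists_children`). At
large scales this is the count of reduced fractions denominator by denominator
(`card_nodes_large_scale`), at small scales the separation of distinct fractions
(`card_nodes_small_scale`). The uniform measure on the resulting tree then gives mass `≪ ρ^t` to
every set of diameter at most `ρ` (`le_dimH_of_cantor`), whence `dim W* ≥ t`.
-/

open MeasureTheory Filter
open scoped ENNReal

/-- The exponent of convergence `ν(S)` of a set `S` of positive integers. -/
noncomputable def expConv (S : Set ℕ) : ℝ :=
  sInf {ν : ℝ | 0 < ν ∧ Summable (fun q : S => ((q : ℕ) : ℝ) ^ (-ν))}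

/-- The set of pairs `(p, q) ∈ ℤⁿ × Q` approximating `x ∈ ℝⁿ` at order `τ`,
i.e. with `|x - p/q| < q^{-τ}` in the supremum norm. -/
def approxPairs (n : ℕ) (τ : ℝ) (Q : Set ℕ) (x : Fin n → ℝ) : Set ((Fin n → ℤ) × ℕ) :=
  {pq | pq.2 ∈ Q ∧ ‖x - fun i => (pq.1 i : ℝ) / (pq.2 : ℝ)‖ < (pq.2 : ℝ) ^ (-τ)}

/-- The liminf set `W*_{τ,n}(Q)`: points of `ℝⁿ` which are `τ`-approximable by
infinitely many rationals with denominators in `Q`, but only finitely many with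
(positive) denominators outside `Q`. -/
def WStar (n : ℕ) (τ : ℝ) (Q : Set ℕ) : Set (Fin n → ℝ) :=
  {x | (approxPairs n τ Q x).Infinite ∧
    (approxPairs n τ ({q | 0 < q} \ Q) x).Finite}

/-! ### Sieving integers in an interval -/

/-- The integers in the real interval `[a, b]` divisible by no element of `S`. -/
noncomputable def sievedIcc (S : Finset ℕ) (a b : ℝ) : Finset ℤ :=
  (Finset.Icc ⌈a⌉ ⌊b⌋).filter (fun m => ∀ p ∈ S, ¬ ((p : ℤ) ∣ m))

lemma mem_sievedIcc {S : Finset ℕ} {a b : ℝ} {m : ℤ} :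
    m ∈ sievedIcc S a b ↔ (a ≤ m ∧ (m : ℝ) ≤ b) ∧ ∀ p ∈ S, ¬ ((p : ℤ) ∣ m) := by
  simp [sievedIcc, Int.ceil_le, Int.le_floor]

/-- Legendre's recursion: the multiples of `p` in `[a, b]` that survive the sieve by `S` correspond to
the survivors in `[a/p, b/p]`. -/
lemma card_sievedIcc_insert (S : Finset ℕ) (hS : ∀ p ∈ S, p.Prime) (p : ℕ) (hp : p.Prime)
    (hpS : p ∉ S) (a b : ℝ) :
    (sievedIcc (insert p S) a b).card + (sievedIcc S (a / p) (b / p)).card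
      = (sievedIcc S a b).card := by
  have hp0 : (0 : ℝ) < p := by exact_mod_cast hp.pos
  have himg : ((sievedIcc S a b).filter (fun m => (p : ℤ) ∣ m))
      = (sievedIcc S (a / p) (b / p)).image (fun m => (p : ℤ) * m) := by
    ext m
    simp only [Finset.mem_filter, Finset.mem_image, mem_sievedIcc]
    constructor
    · rintro ⟨⟨⟨h1, h2⟩, h3⟩, k, rfl⟩
      refine ⟨k, ⟨⟨?_, ?_⟩, ?_⟩, rfl⟩
      · rw [div_le_iff₀ hp0]; push_cast at h1; linarith
      · rw [le_div_iff₀ hp0]; push_cast at h2; linarith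
      · intro l hl hd
        exact h3 l hl (hd.mul_left _)
    · rintro ⟨k, ⟨⟨h1, h2⟩, h3⟩, rfl⟩
      refine ⟨⟨⟨?_, ?_⟩, ?_⟩, dvd_mul_right _ _⟩
      · rw [div_le_iff₀ hp0] at h1; push_cast; linarith
      · rw [le_div_iff₀ hp0] at h2; push_cast; linarith
      · intro l hl hd
        rcases (Nat.prime_iff_prime_int.mp (hS l hl)).dvd_or_dvd hd with h | h
        · have h' : l ∣ p := by exact_mod_cast h
          have := (Nat.prime_dvd_prime_iff_eq (hS l hl) hp).mp h'
          subst this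
          exact hpS hl
        · exact h3 l hl h
  have hneg : (sievedIcc (insert p S) a b)
      = (sievedIcc S a b).filter (fun m => ¬ ((p : ℤ) ∣ m)) := by
    ext m
    simp only [Finset.mem_filter, mem_sievedIcc, Finset.forall_mem_insert]
    tauto
  have hcard : ((sievedIcc S a b).filter (fun m => (p : ℤ) ∣ m)).card
      = (sievedIcc S (a / p) (b / p)).card := by
    rw [himg, Finset.card_image_of_injective]
    intro x y hxy
    simpa [hp.ne_zero] using hxy
  rw [hneg, ← hcard, add_comm]
  exact Finset.card_filter_add_card_filter_not _

/-- The sieve of Eratosthenes–Legendre: expected count with error at most `2 ^ S.card`. -/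
lemma abs_card_sievedIcc_sub_le (S : Finset ℕ) (hS : ∀ p ∈ S, p.Prime) :
    ∀ a b : ℝ, a ≤ b →
      |((sievedIcc S a b).card : ℝ) - (∏ p ∈ S, (1 - 1 / (p : ℝ))) * (b - a)| ≤ 2 ^ S.card := by
  induction S using Finset.induction_on with
  | empty =>
    intro a b hab
    have h1 : ((sievedIcc ∅ a b).card : ℝ) = ((⌊b⌋ + 1 - ⌈a⌉ : ℤ) : ℝ) := by
      have : sievedIcc ∅ a b = Finset.Icc ⌈a⌉ ⌊b⌋ := by simp [sievedIcc]
      rw [this, Int.card_Icc]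
      have h0 : 0 ≤ ⌊b⌋ + 1 - ⌈a⌉ := by
        have h2 : (⌈a⌉ : ℝ) < ⌊b⌋ + 1 + 1 := by
          linarith [Int.ceil_lt_add_one a, Int.lt_floor_add_one b]
        have h3 : ⌈a⌉ < ⌊b⌋ + 1 + 1 := by exact_mod_cast h2
        omega
      exact_mod_cast Int.toNat_of_nonneg h0
    rw [h1]
    push_cast
    simp only [Finset.prod_empty, Finset.card_empty, pow_zero, abs_le]
    constructor <;>
    linarith [Int.ceil_lt_add_one a, Int.lt_floor_add_one b, Int.le_ceil a, Int.floor_le b]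
  | insert p S hpS ih =>
    intro a b hab
    have hp : p.Prime := hS p (by simp)
    have hS' : ∀ l ∈ S, l.Prime := fun l hl => hS l (by simp [hl])
    have hp0 : (0 : ℝ) < p := by exact_mod_cast hp.pos
    have h1 := ih hS' a b hab
    have h2 := ih hS' (a / p) (b / p) (by gcongr)
    have h3 : ((sievedIcc (insert p S) a b).card : ℝ) + (sievedIcc S (a / p) (b / p)).card
      = (sievedIcc S a b).card := by
      exact_mod_cast card_sievedIcc_insert S hS' p hp hpS a b
    rw [Finset.prod_insert hpS, Finset.card_insert_of_notMem hpS, pow_succ]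
    have h4 : (1 - 1 / (p : ℝ)) * (∏ p ∈ S, (1 - 1 / (p : ℝ))) * (b - a)
      = (∏ p ∈ S, (1 - 1 / (p : ℝ))) * (b - a)
        - (∏ p ∈ S, (1 - 1 / (p : ℝ))) * (b / p - a / p) := by
      field_simp
    rw [h4]
    rw [abs_le] at *
    constructor <;> linarith [h1.1, h1.2, h2.1, h2.2]

/-- The density `φ(q)/q` of the integers coprime to `q`, as an Euler product. -/
noncomputable def coprimeDensity (q : ℕ) : ℝ := ∏ p ∈ q.primeFactors, (1 - 1 / (p : ℝ))

/-- The number `2 ^ ω(q)` of squarefree divisors of `q`, which bounds the error of the sieve by the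
prime factors of `q`. -/
noncomputable def sieveError (q : ℕ) : ℝ := 2 ^ q.primeFactors.card

lemma one_le_sieveError (q : ℕ) : 1 ≤ sieveError q := one_le_pow₀ (by norm_num)

lemma coprimeDensity_le_one (q : ℕ) : coprimeDensity q ≤ 1 := by
  refine Finset.prod_le_one ?_ ?_
  · intro p hp
    have : (1 : ℝ) ≤ p := by exact_mod_cast (Nat.prime_of_mem_primeFactors hp).one_lt.le
    rw [sub_nonneg, div_le_one (by linarith)]; exact this
  · intro p hp
    have : (0 : ℝ) ≤ 1 / p := by positivity
    linarith

lemma one_le_density_mul_error (q : ℕ) : 1 ≤ coprimeDensity q * sieveError q := by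
  unfold coprimeDensity sieveError
  rw [← Finset.prod_const, ← Finset.prod_mul_distrib]
  refine Finset.one_le_prod ?_
  intro p hp
  have : (2 : ℝ) ≤ p := by exact_mod_cast (Nat.prime_of_mem_primeFactors hp).two_le
  have : (1 : ℝ) / p ≤ 1 / 2 := by gcongr
  linarith

lemma coprimeDensity_pos (q : ℕ) : 0 < coprimeDensity q := by
  have h1 := one_le_density_mul_error q
  have h2 := one_le_sieveError q
  by_contra h
  push Not at h
  nlinarith

lemma inv_error_le_density (q : ℕ) : (sieveError q)⁻¹ ≤ coprimeDensity q := by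
  have h2 := one_le_sieveError q
  rw [inv_le_iff_one_le_mul₀ (by linarith)]
  exact one_le_density_mul_error q

/-- The number of squarefree divisors of `q` is `O(q ^ ε)`: prime factors `p ≥ 2 ^ (1/ε)` contribute
`2 ≤ p ^ ε` each, and there are boundedly many smaller ones. -/
lemma sieveError_le_rpow (ε : ℝ) (hε : 0 < ε) :
    ∃ C : ℝ, 0 < C ∧ ∀ q : ℕ, 0 < q → sieveError q ≤ C * (q : ℝ) ^ ε := by
  obtain ⟨B, hB⟩ := exists_nat_ge ((2 : ℝ) ^ (1 / ε))
  refine ⟨2 ^ B, by positivity, fun q hq => ?_⟩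
  have hsplit : sieveError q = (∏ p ∈ q.primeFactors.filter (· < B), (2 : ℝ))
      * ∏ p ∈ q.primeFactors.filter (fun p => ¬ p < B), (2 : ℝ) := by
    rw [Finset.prod_filter_mul_prod_filter_not, Finset.prod_const, sieveError]
  rw [hsplit]
  refine mul_le_mul ?_ ?_ (by positivity) (by positivity)
  · rw [Finset.prod_const]
    refine pow_le_pow_right₀ (by norm_num) ?_
    calc _ ≤ (Finset.range B).card := Finset.card_le_card (by intro p; simp)
      _ = B := by simp
  · calc ∏ p ∈ q.primeFactors.filter (fun p => ¬ p < B), (2 : ℝ)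
        ≤ ∏ p ∈ q.primeFactors.filter (fun p => ¬ p < B), (p : ℝ) ^ ε := by
          refine Finset.prod_le_prod (fun _ _ => by norm_num) ?_
          intro p hp
          have hp2 : (B : ℝ) ≤ p := by
            have := (Finset.mem_filter.mp hp).2
            exact_mod_cast not_lt.mp this
          calc (2 : ℝ) = ((2 : ℝ) ^ (1 / ε)) ^ ε := by
                rw [← Real.rpow_mul (by norm_num)]; field_simp; simp
            _ ≤ _ := by
              refine Real.rpow_le_rpow (by positivity) (hB.trans hp2) hε.le
      _ ≤ ∏ p ∈ q.primeFactors, (p : ℝ) ^ ε := by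
          refine Finset.prod_le_prod_of_subset_of_one_le (Finset.filter_subset _ _) ?_ ?_
          · intro p hp; positivity
          · intro p hp _
            refine Real.one_le_rpow ?_ hε.le
            exact_mod_cast (Nat.prime_of_mem_primeFactors hp).one_lt.le
      _ = (∏ p ∈ q.primeFactors, (p : ℝ)) ^ ε := by
          rw [Real.finsetProd_rpow]; intro p _; positivity
      _ ≤ (q : ℝ) ^ ε := by
          refine Real.rpow_le_rpow (by positivity) ?_ hε.le
          have := Nat.le_of_dvd hq (Nat.prod_primeFactors_dvd q)
          rw [← Nat.cast_prod]
          exact_mod_cast this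

/-- For `a < b`, any constant multiple of `N ^ a` is eventually dominated by `N ^ b`. -/
lemma eventually_mul_rpow_le (C a b : ℝ) (hab : a < b) :
    ∀ᶠ N : ℕ in atTop, C * (N : ℝ) ^ a ≤ (N : ℝ) ^ b := by
  have h1 : Tendsto (fun N : ℕ => (N : ℝ) ^ (b - a)) atTop atTop :=
    (tendsto_rpow_atTop (by linarith)).comp tendsto_natCast_atTop_atTop
  filter_upwards [h1.eventually_ge_atTop C, eventually_gt_atTop 0] with N hN hN0
  have hN0' : (0 : ℝ) < N := by exact_mod_cast hN0
  calc C * (N : ℝ) ^ a ≤ (N : ℝ) ^ (b - a) * (N : ℝ) ^ a := by gcongr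
    _ = (N : ℝ) ^ b := by rw [← Real.rpow_add hN0']; congr 1; ring

lemma eventually_sieveError_le (ε : ℝ) (hε : 0 < ε) :
    ∀ᶠ N : ℕ in atTop, ∀ q : ℕ, N ≤ q → q < 2 * N → sieveError q ≤ (N : ℝ) ^ ε := by
  obtain ⟨C, hC, h⟩ := sieveError_le_rpow (ε / 2) (by linarith)
  filter_upwards [eventually_mul_rpow_le (C * 2 ^ (ε / 2)) (ε / 2) ε (by linarith),
    eventually_gt_atTop 0] with N hN hN0 q h1 h2
  have h2' : (q : ℝ) ≤ 2 * N := by exact_mod_cast h2.le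
  calc sieveError q ≤ C * (q : ℝ) ^ (ε / 2) := h q (by omega)
    _ ≤ C * (2 * N : ℝ) ^ (ε / 2) := by
        gcongr
    _ = C * 2 ^ (ε / 2) * (N : ℝ) ^ (ε / 2) := by
        rw [Real.mul_rpow (by norm_num) (by positivity)]; ring
    _ ≤ _ := hN

/-- The numerators `p` with all coordinates coprime to `q` and `|p/q - y| ≤ ρ` (for `q > 0`; see
`mem_reducedBox`). -/
noncomputable def reducedBox (n q : ℕ) (y : Fin n → ℝ) (ρ : ℝ) : Finset (Fin n → ℤ) :=
  Fintype.piFinset fun i => sievedIcc q.primeFactors (q * (y i - ρ)) (q * (y i + ρ))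

/-- The rational point `p/q` (the origin when `q = 0`). -/
noncomputable def ratPt (n : ℕ) (p : Fin n → ℤ) (q : ℕ) : Fin n → ℝ := fun i => (p i : ℝ) / q

/-- Each coordinate of `p` is coprime to `q`; this is stronger than `p/q` being in lowest terms. -/
def CoprimeCoords (n : ℕ) (p : Fin n → ℤ) (q : ℕ) : Prop := ∀ i, IsCoprime (p i) (q : ℤ)

lemma forall_primeFactors_not_dvd_iff {q : ℕ} (hq : 0 < q) (m : ℤ) :
    (∀ p ∈ q.primeFactors, ¬ ((p : ℤ) ∣ m)) ↔ IsCoprime m (q : ℤ) := by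
  rw [Int.isCoprime_iff_gcd_eq_one]
  constructor
  · intro h
    by_contra hne
    obtain ⟨p, hp, hd⟩ := Nat.exists_prime_and_dvd hne
    refine h p ?_ ((Int.natCast_dvd_natCast.mpr hd).trans (Int.gcd_dvd_left ..))
    rw [Nat.mem_primeFactors]
    refine ⟨hp, ?_, hq.ne'⟩
    exact_mod_cast (Int.natCast_dvd_natCast.mpr hd).trans (Int.gcd_dvd_right m (q : ℤ))
  · intro h p hp hd
    have h2 := Int.dvd_coe_gcd hd (Int.natCast_dvd_natCast.mpr (Nat.dvd_of_mem_primeFactors hp))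
    rw [h] at h2
    have : p ∣ 1 := by exact_mod_cast h2
    exact (Nat.prime_of_mem_primeFactors hp).one_lt.ne' (Nat.dvd_one.mp this)

lemma mem_reducedBox {n q : ℕ} (hq : 0 < q) {y : Fin n → ℝ} {ρ : ℝ} (hρ : 0 ≤ ρ)
    {p : Fin n → ℤ} :
    p ∈ reducedBox n q y ρ ↔ CoprimeCoords n p q ∧ ‖ratPt n p q - y‖ ≤ ρ := by
  have hq' : (0 : ℝ) < q := by exact_mod_cast hq
  simp only [reducedBox, Fintype.mem_piFinset, mem_sievedIcc, forall_primeFactors_not_dvd_iff hq,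
    CoprimeCoords, pi_norm_le_iff_of_nonneg hρ, ← forall_and]
  refine forall_congr' fun i => ?_
  rw [and_comm]
  refine and_congr Iff.rfl ?_
  simp only [ratPt, Pi.sub_apply, Real.norm_eq_abs, abs_le]
  refine and_congr ?_ ?_
  · rw [neg_le_sub_iff_le_add, ← sub_le_iff_le_add, le_div_iff₀ hq', mul_comm]
  · rw [sub_le_iff_le_add, div_le_iff₀ hq', mul_comm, add_comm]

lemma card_reducedBox_le (n q : ℕ) (y : Fin n → ℝ) (ρ : ℝ) (hρ : 0 ≤ ρ) :
    ((reducedBox n q y ρ).card : ℝ) ≤ (2 * coprimeDensity q * q * ρ + sieveError q) ^ n := by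
  rw [reducedBox, Fintype.card_piFinset]
  push_cast
  calc _ ≤ ∏ _i : Fin n, (2 * coprimeDensity q * q * ρ + sieveError q) := by
        refine Finset.prod_le_prod (fun _ _ => by positivity) fun i _ => ?_
        have := abs_card_sievedIcc_sub_le q.primeFactors
          (fun p hp => Nat.prime_of_mem_primeFactors hp) (q * (y i - ρ)) (q * (y i + ρ))
          (by gcongr; linarith)
        rw [abs_le] at this
        rw [coprimeDensity, sieveError]
        linarith [this.2]
    _ = _ := by simp

lemma le_card_reducedBox (n q : ℕ) (y : Fin n → ℝ) (ρ : ℝ) (hρ : 0 ≤ ρ)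
    (h : sieveError q ≤ 2 * coprimeDensity q * q * ρ) :
    (2 * coprimeDensity q * q * ρ - sieveError q) ^ n ≤ ((reducedBox n q y ρ).card : ℝ) := by
  rw [reducedBox, Fintype.card_piFinset]
  push_cast
  calc _ = ∏ _i : Fin n, (2 * coprimeDensity q * q * ρ - sieveError q) := by simp
    _ ≤ _ := by
        refine Finset.prod_le_prod (fun _ _ => by linarith) fun i _ => ?_
        have := abs_card_sievedIcc_sub_le q.primeFactors
          (fun p hp => Nat.prime_of_mem_primeFactors hp) (q * (y i - ρ)) (q * (y i + ρ))
          (by gcongr; linarith)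
        rw [abs_le] at this
        rw [coprimeDensity, sieveError]
        linarith [this.1]

/-! ### Reduced fractions near rationals of smaller height -/

lemma add_pow_le_two_pow (a b : ℝ) (ha : 0 ≤ a) (hb : 0 ≤ b) (n : ℕ) :
    (a + b) ^ n ≤ 2 ^ n * (a ^ n + b ^ n) := by
  have h1 : (a + b) ^ n ≤ (2 * max a b) ^ n := by
    gcongr
    linarith [le_max_left a b, le_max_right a b]
  have h2 : (max a b) ^ n ≤ a ^ n + b ^ n := by
    rcases max_choice a b with h | h <;> rw [h]
    · linarith [pow_nonneg hb n]
    · linarith [pow_nonneg ha n]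
  calc _ ≤ _ := h1
    _ = 2 ^ n * (max a b) ^ n := by rw [mul_pow]
    _ ≤ _ := by gcongr

/-- A finite set containing every numerator `p` with `|p/q - y| ≤ ρ` (for `q > 0`), without any
coprimality condition. -/
noncomputable def intBox (n q : ℕ) (y : Fin n → ℝ) (ρ : ℝ) : Finset (Fin n → ℤ) :=
  Fintype.piFinset fun i => sievedIcc ∅ (q * (y i - ρ)) (q * (y i + ρ))

lemma mem_intBox {n q : ℕ} (hq : 0 < q) {y : Fin n → ℝ} {ρ : ℝ} {p : Fin n → ℤ}
    (h : ‖ratPt n p q - y‖ ≤ ρ) : p ∈ intBox n q y ρ := by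
  have hq' : (0 : ℝ) < q := by exact_mod_cast hq
  have hρ : 0 ≤ ρ := (norm_nonneg _).trans h
  rw [pi_norm_le_iff_of_nonneg hρ] at h
  simp only [intBox, Fintype.mem_piFinset, mem_sievedIcc]
  intro i
  have hi := h i
  simp only [ratPt, Pi.sub_apply, Real.norm_eq_abs, abs_le] at hi
  refine ⟨⟨?_, ?_⟩, by simp⟩
  · have := hi.1
    rwa [neg_le_sub_iff_le_add, ← sub_le_iff_le_add, le_div_iff₀ hq', mul_comm] at this
  · have := hi.2
    rwa [sub_le_iff_le_add, div_le_iff₀ hq', mul_comm, add_comm ρ] at this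

lemma card_intBox_le (n q : ℕ) (y : Fin n → ℝ) (ρ : ℝ) (hρ : 0 ≤ ρ) :
    ((intBox n q y ρ).card : ℝ) ≤ (2 * q * ρ + 1) ^ n := by
  rw [intBox, Fintype.card_piFinset]
  push_cast
  calc _ ≤ ∏ _i : Fin n, (2 * (q : ℝ) * ρ + 1) := by
        refine Finset.prod_le_prod (fun _ _ => by positivity) fun i _ => ?_
        have := abs_card_sievedIcc_sub_le ∅ (by simp) (q * (y i - ρ)) (q * (y i + ρ))
          (by gcongr; linarith)
        rw [abs_le] at this
        simp only [Finset.prod_empty, Finset.card_empty, pow_zero] at this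
        linarith [this.2]
    _ = _ := by simp

/-- The point `p/q` is within `2 q'^{-τ}` of some rational point with denominator `q'`. -/
def NearRat (n : ℕ) (τ : ℝ) (p : Fin n → ℤ) (q q' : ℕ) : Prop :=
  ∃ p' : Fin n → ℤ, ‖ratPt n p q - ratPt n p' q'‖ ≤ 2 * (q' : ℝ) ^ (-τ)

open Classical in
/-- The union bound for the reduced fractions `p/q` in a ball of radius `r/2` that are near a rational
with denominator in `R`: there are at most `(2q'r + 1)^n` such rationals of denominator `q'`, each
with few reduced fractions `p/q` nearby. -/
lemma card_near_le (n q : ℕ) (hq : 0 < q) (τ : ℝ) (y : Fin n → ℝ) (r : ℝ) (hr : 0 < r)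
    (R : Finset ℕ) (hR : ∀ q' ∈ R, 0 < q' ∧ 2 * (q' : ℝ) ^ (-τ) ≤ r / 2) :
    (((reducedBox n q y (r / 2)).filter (fun p => ∃ q' ∈ R, NearRat n τ p q q')).card : ℝ)
      ≤ ∑ q' ∈ R, (2 * q' * r + 1) ^ n *
          (4 * coprimeDensity q * q * (q' : ℝ) ^ (-τ) + sieveError q) ^ n := by
  have hsub : (reducedBox n q y (r / 2)).filter (fun p => ∃ q' ∈ R, NearRat n τ p q q')
      ⊆ R.biUnion fun q' => (intBox n q' y r).biUnion fun p' =>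
        reducedBox n q (ratPt n p' q') (2 * (q' : ℝ) ^ (-τ)) := by
    intro p hp
    simp only [Finset.mem_filter] at hp
    obtain ⟨hp, q', hq', p', hp'⟩ := hp
    obtain ⟨h1, h2⟩ := (mem_reducedBox hq (by linarith)).mp hp
    simp only [Finset.mem_biUnion]
    refine ⟨q', hq', p', ?_, ?_⟩
    · refine mem_intBox (hR q' hq').1 ?_
      have : ratPt n p' q' - y = (ratPt n p q - y) - (ratPt n p q - ratPt n p' q') := by abel
      rw [this]
      refine (norm_sub_le _ _).trans ?_
      linarith [(hR q' hq').2]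
    · rw [mem_reducedBox hq (by positivity)]
      exact ⟨h1, hp'⟩
  calc _ ≤ ((R.biUnion fun q' => (intBox n q' y r).biUnion fun p' =>
        reducedBox n q (ratPt n p' q') (2 * (q' : ℝ) ^ (-τ))).card : ℝ) := by
        exact_mod_cast Finset.card_le_card hsub
    _ ≤ ∑ q' ∈ R, (((intBox n q' y r).biUnion fun p' =>
        reducedBox n q (ratPt n p' q') (2 * (q' : ℝ) ^ (-τ))).card : ℝ) := by
        exact_mod_cast Finset.card_biUnion_le
    _ ≤ _ := by
        refine Finset.sum_le_sum fun q' hq' => ?_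
        calc _ ≤ ∑ p' ∈ intBox n q' y r,
              ((reducedBox n q (ratPt n p' q') (2 * (q' : ℝ) ^ (-τ))).card : ℝ) := by
              exact_mod_cast Finset.card_biUnion_le
          _ ≤ ∑ p' ∈ intBox n q' y r,
              (4 * coprimeDensity q * q * (q' : ℝ) ^ (-τ) + sieveError q) ^ n := by
              refine Finset.sum_le_sum fun p' _ => ?_
              refine (card_reducedBox_le n q _ _ (by positivity)).trans (le_of_eq ?_)
              congr 1; ring
          _ = ((intBox n q' y r).card : ℝ) *
              (4 * coprimeDensity q * q * (q' : ℝ) ^ (-τ) + sieveError q) ^ n := by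
              rw [Finset.sum_const, nsmul_eq_mul]
          _ ≤ _ := by
              have h1 := coprimeDensity_pos q
              have h2 := one_le_sieveError q
              gcongr
              exact card_intBox_le n q' y r hr.le

/-- Bounds one term of the sum in `card_near_le`, with `u` standing for `a^{-τ}`, `θ` and `E` for the
density and error of the sieve, and `b` for the proportion of points that may be lost to the
denominator `a`. The three hypotheses dominate the three parts of the expanded product. -/
lemma near_term_le (n : ℕ) (a u r θ q E b : ℝ) (ha : 1 ≤ a) (hu : 0 < u) (hr : 0 < r)
    (hr2 : r ≤ 1 / 2) (hθ : 0 < θ) (hq : 0 < q) (hE : 0 < E)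
    (h1 : 64 ^ n * (a * u) ^ n ≤ b) (h2 : 32 ^ n * u ^ n ≤ r ^ n * b)
    (h3 : 4 ^ n * 2 * a ^ n * E ^ n ≤ b * (θ * q * r / 2) ^ n) :
    (2 * a * r + 1) ^ n * (4 * θ * q * u + E) ^ n ≤ 3 * b * (θ * q * r / 2) ^ n := by
  have e1 := add_pow_le_two_pow (2 * a * r) 1 (by positivity) (by positivity) n
  have e2 := add_pow_le_two_pow (4 * θ * q * u) E (by positivity) (by positivity) n
  have e3 : (2 * a * r) ^ n + 1 ≤ 2 * a ^ n := by
    have : (2 * a * r) ^ n ≤ a ^ n := by gcongr; nlinarith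
    have := one_le_pow₀ ha (n := n)
    linarith
  have p1 : 4 ^ n * ((2 * a * r) ^ n * (4 * θ * q * u) ^ n) ≤ b * (θ * q * r / 2) ^ n := by
    calc _ = 64 ^ n * (a * u) ^ n * (θ * q * r / 2) ^ n := by
          simp only [← mul_pow]; congr 1; ring
      _ ≤ _ := by gcongr
  have p2 : 4 ^ n * (4 * θ * q * u) ^ n ≤ b * (θ * q * r / 2) ^ n := by
    have : 4 ^ n * (4 * θ * q * u) ^ n = 32 ^ n * u ^ n * (θ * q / 2) ^ n := by
      simp only [← mul_pow]; congr 1; ring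
    rw [this]
    calc _ ≤ r ^ n * b * (θ * q / 2) ^ n := by gcongr
      _ = b * (r ^ n * (θ * q / 2) ^ n) := by ring
      _ = _ := by simp only [← mul_pow]; congr 2; ring
  have p3 : 4 ^ n * (((2 * a * r) ^ n + 1) * E ^ n) ≤ b * (θ * q * r / 2) ^ n := by
    calc _ ≤ 4 ^ n * ((2 * a ^ n) * E ^ n) := by gcongr
      _ = 4 ^ n * 2 * a ^ n * E ^ n := by ring
      _ ≤ _ := h3
  calc _ ≤ (2 ^ n * ((2 * a * r) ^ n + 1 ^ n)) * (2 ^ n * ((4 * θ * q * u) ^ n + E ^ n)) := by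
        gcongr
    _ = (2 ^ n * 2 ^ n) * ((2 * a * r) ^ n * (4 * θ * q * u) ^ n)
        + (2 ^ n * 2 ^ n) * (4 * θ * q * u) ^ n
        + (2 ^ n * 2 ^ n) * (((2 * a * r) ^ n + 1) * E ^ n) := by
        rw [one_pow]; ring
    _ = 4 ^ n * ((2 * a * r) ^ n * (4 * θ * q * u) ^ n)
        + 4 ^ n * (4 * θ * q * u) ^ n
        + 4 ^ n * (((2 * a * r) ^ n + 1) * E ^ n) := by
        rw [← mul_pow]; norm_num
    _ ≤ _ := by linarith

/-- The common radius `(2N)^{-τ} / 8` of the balls of the nodes of level `N`. -/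
noncomputable def rad (τ : ℝ) (N : ℕ) : ℝ := (2 * N : ℝ) ^ (-τ) / 8

lemma rad_pos (τ : ℝ) {N : ℕ} (hN : 0 < N) : 0 < rad τ N := by
  have : (0 : ℝ) < N := by exact_mod_cast hN
  unfold rad; positivity

lemma rad_le (τ : ℝ) (hτ : 0 < τ) {N : ℕ} (hN : 0 < N) : rad τ N ≤ 1 / 8 := by
  have : (1 : ℝ) ≤ N := by exact_mod_cast hN
  have h := Real.rpow_le_one_of_one_le_of_nonpos (by linarith : (1 : ℝ) ≤ 2 * N) (by linarith : -τ ≤ 0)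
  unfold rad; linarith

lemma rpow_pow_nat (x : ℝ) (hx : 0 ≤ x) (a : ℝ) (n : ℕ) : (x ^ a) ^ n = x ^ (a * n) := by
  rw [Real.rpow_mul hx, Real.rpow_natCast]

/-- The first two hypotheses of `near_term_le`, and the radius condition of `card_near_le`, hold for
every denominator `a` above the lower end `N^{τ-1} / 2` of the gap. Here `β < n (τ - 2)` is used. -/
lemma eventually_window (n : ℕ) (hn : 1 ≤ n) (τ β c : ℝ) (hτ : 2 < τ)
    (hβ2 : β < n * (τ - 2)) (hc : 0 < c) :
    ∀ᶠ N : ℕ in atTop, ∀ a : ℕ, (N : ℝ) ^ (τ - 1) ≤ 2 * a →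
      64 ^ n * ((a : ℝ) * (a : ℝ) ^ (-τ)) ^ n ≤ c * (a : ℝ) ^ (-β) ∧
      32 ^ n * ((a : ℝ) ^ (-τ)) ^ n ≤ rad τ N ^ n * (c * (a : ℝ) ^ (-β)) ∧
      2 * (a : ℝ) ^ (-τ) ≤ rad τ N / 2 := by
  have hn' : (1 : ℝ) ≤ n := by exact_mod_cast hn
  have hs : (0 : ℝ) < τ - 1 := by linarith
  -- lower bound of the radius in terms of `a`
  have hrad : ∀ N a : ℕ, 0 < N → (N : ℝ) ^ (τ - 1) ≤ 2 * a →
      (2 * 2 ^ (1 / (τ - 1))) ^ (-τ) / 8 * (a : ℝ) ^ (-(τ / (τ - 1))) ≤ rad τ N := by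
    intro N a hN h
    have hN' : (0 : ℝ) < N := by exact_mod_cast hN
    have ha : (0 : ℝ) < a := by
      have : (0 : ℝ) < (N : ℝ) ^ (τ - 1) := by positivity
      linarith
    have h1 : (N : ℝ) ≤ (2 * a : ℝ) ^ (1 / (τ - 1)) := by
      calc (N : ℝ) = ((N : ℝ) ^ (τ - 1)) ^ (1 / (τ - 1)) := by
            rw [← Real.rpow_mul hN'.le, mul_one_div_cancel hs.ne', Real.rpow_one]
        _ ≤ _ := by gcongr
    have h2 : (2 * (2 * a : ℝ) ^ (1 / (τ - 1))) ^ (-τ) ≤ (2 * N : ℝ) ^ (-τ) := by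
      refine Real.rpow_le_rpow_of_nonpos (by positivity) (by gcongr) (by linarith)
    have h3 : (2 * (2 * a : ℝ) ^ (1 / (τ - 1))) ^ (-τ)
        = (2 * 2 ^ (1 / (τ - 1))) ^ (-τ) * (a : ℝ) ^ (-(τ / (τ - 1))) := by
      rw [Real.mul_rpow (by norm_num : (0:ℝ) ≤ 2) ha.le, ← mul_assoc,
        Real.mul_rpow (by positivity) (by positivity), ← Real.rpow_mul ha.le]
      congr 2; ring
    unfold rad
    rw [h3] at h2
    linarith
  set κ : ℝ := (2 * 2 ^ (1 / (τ - 1))) ^ (-τ) / 8 with hκ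
  have hκ0 : 0 < κ := by positivity
  have E1 : ∀ᶠ a : ℕ in atTop, (64 ^ n / c) * (a : ℝ) ^ ((1 - τ) * n) ≤ (a : ℝ) ^ (-β) :=
    eventually_mul_rpow_le _ _ _ (by nlinarith)
  have hfr : τ / (τ - 1) = 1 + 1 / (τ - 1) := by field_simp; ring
  have hkey : -τ * n < -(τ / (τ - 1)) * n + -β := by
    have h1 : 1 / (τ - 1) < 1 := by rw [div_lt_one hs]; linarith
    rw [hfr]; nlinarith
  have E2 : ∀ᶠ a : ℕ in atTop, (32 ^ n / (κ ^ n * c)) * (a : ℝ) ^ (-τ * n)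
      ≤ (a : ℝ) ^ (-(τ / (τ - 1)) * n + -β) :=
    eventually_mul_rpow_le _ _ _ hkey
  have E3 : ∀ᶠ a : ℕ in atTop, (4 / κ) * (a : ℝ) ^ (-τ) ≤ (a : ℝ) ^ (-(τ / (τ - 1))) := by
    refine eventually_mul_rpow_le _ _ _ ?_
    have h1 : 1 / (τ - 1) < 1 := by rw [div_lt_one hs]; linarith
    rw [hfr]; linarith
  obtain ⟨A, hA⟩ := eventually_atTop.mp (E1.and (E2.and E3))
  filter_upwards [eventually_ge_atTop (2 * A + 1)] with N hN a h
  have hN1 : 1 ≤ N := by omega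
  have hN' : (1 : ℝ) ≤ N := by exact_mod_cast hN1
  have hNa : (N : ℝ) ≤ 2 * a := by
    calc (N : ℝ) = (N : ℝ) ^ (1 : ℝ) := (Real.rpow_one _).symm
      _ ≤ (N : ℝ) ^ (τ - 1) := Real.rpow_le_rpow_of_exponent_le hN' (by linarith)
      _ ≤ _ := h
  have hNa' : N ≤ 2 * a := by exact_mod_cast hNa
  obtain ⟨e1, e2, e3⟩ := hA a (by omega)
  have ha : (0 : ℝ) < a := by linarith
  have hr := hrad N a hN1 h
  refine ⟨?_, ?_, ?_⟩
  · have : (a : ℝ) * (a : ℝ) ^ (-τ) = (a : ℝ) ^ (1 - τ) := by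
      rw [sub_eq_add_neg, Real.rpow_add ha, Real.rpow_one]
    rw [this, rpow_pow_nat _ ha.le, ← div_le_iff₀' hc]
    calc _ = 64 ^ n / c * (a : ℝ) ^ ((1 - τ) * n) := by ring
      _ ≤ _ := e1
  · have h4 : (κ * (a : ℝ) ^ (-(τ / (τ - 1)))) ^ n ≤ rad τ N ^ n := by gcongr
    rw [mul_pow, rpow_pow_nat _ ha.le] at h4
    rw [rpow_pow_nat _ ha.le]
    rw [Real.rpow_add ha, div_mul_eq_mul_div, div_le_iff₀ (by positivity)] at e2
    calc _ ≤ _ := e2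
      _ = κ ^ n * (a : ℝ) ^ (-(τ / (τ - 1)) * n) * (c * (a : ℝ) ^ (-β)) := by ring
      _ ≤ _ := by gcongr
  · rw [div_mul_eq_mul_div, div_le_iff₀ hκ0] at e3
    linarith

/-- For denominators `q` in `[N, 2N)` with `N` large in terms of the radius `r`, the sieve error is
negligible, also in the third hypothesis of `near_term_le` for every `a` below the upper end of the
gap. -/
lemma eventually_error (n : ℕ) (τ β ε c r : ℝ) (hτ : 2 < τ) (hβ : 1 < β)
    (hε : 0 < ε) (hε1 : (n + β) / (τ - 1) + 2 * n * ε < n) (hε2 : 2 * ε < 1)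
    (hc : 0 < c) (hr : 0 < r) :
    ∀ᶠ N : ℕ in atTop, ∀ q : ℕ, N ≤ q → q < 2 * N →
      sieveError q ≤ coprimeDensity q * q * r / 2 ∧
      ∀ a : ℕ, 0 < a → (a : ℝ) ^ (τ - 1) ≤ 4 * N →
        4 ^ n * 2 * (a : ℝ) ^ n * sieveError q ^ n
          ≤ (c * (a : ℝ) ^ (-β)) * (coprimeDensity q * q * r / 2) ^ n := by
  have hs : (0 : ℝ) < τ - 1 := by linarith
  have E1 := eventually_mul_rpow_le (2 / r) (2 * ε) 1 hε2
  have E2 := eventually_mul_rpow_le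
    ((4 ^ n * 2 * 4 ^ ((n + β) / (τ - 1))) / (c * (r / 2) ^ n)) _ _ hε1
  filter_upwards [E1, E2, eventually_sieveError_le ε hε, eventually_gt_atTop 0]
    with N e1 e2 e3 hN q hq1 hq2
  have hN' : (0 : ℝ) < N := by exact_mod_cast hN
  have hE := e3 q hq1 hq2
  have hE1 := one_le_sieveError q
  have hθ : (N : ℝ) ^ (-ε) ≤ coprimeDensity q := by
    rw [Real.rpow_neg hN'.le]
    exact (inv_anti₀ (by linarith) hE).trans (inv_error_le_density q)
  have hθq : (N : ℝ) ^ (1 - ε) ≤ coprimeDensity q * q := by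
    have : (N : ℝ) ≤ q := by exact_mod_cast hq1
    have := (coprimeDensity_pos q).le
    rw [sub_eq_add_neg, Real.rpow_add hN', Real.rpow_one, mul_comm]
    gcongr
  constructor
  · rw [div_mul_eq_mul_div, div_le_iff₀ hr, Real.rpow_one] at e1
    have h1 : 2 * (N : ℝ) ^ ε ≤ (N : ℝ) ^ (1 - ε) * r := by
      have h2 : (N : ℝ) ^ (1 - ε) = N * (N : ℝ) ^ (-ε) := by
        rw [sub_eq_add_neg, Real.rpow_add hN', Real.rpow_one]
      have h3 : (N : ℝ) ^ ε = (N : ℝ) ^ (2 * ε) * (N : ℝ) ^ (-ε) := by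
        rw [← Real.rpow_add hN']; congr 1; ring
      rw [h2, h3]
      have : 0 < (N : ℝ) ^ (-ε) := by positivity
      nlinarith
    have : (N : ℝ) ^ (1 - ε) * r ≤ coprimeDensity q * q * r := by gcongr
    linarith
  · intro a ha h
    have ha' : (0 : ℝ) < a := by exact_mod_cast ha
    have h1 : (a : ℝ) ^ (n + β) ≤ 4 ^ ((n + β) / (τ - 1)) * (N : ℝ) ^ ((n + β) / (τ - 1)) := by
      calc (a : ℝ) ^ (n + β) = ((a : ℝ) ^ (τ - 1)) ^ ((n + β) / (τ - 1)) := by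
            rw [← Real.rpow_mul ha'.le]; congr 1; field_simp
        _ ≤ (4 * N : ℝ) ^ ((n + β) / (τ - 1)) := by gcongr
        _ = _ := by rw [Real.mul_rpow (by norm_num) hN'.le]
    have h2 : (a : ℝ) ^ n = (a : ℝ) ^ (n + β) * (a : ℝ) ^ (-β) := by
      rw [← Real.rpow_add ha', ← Real.rpow_natCast]; congr 1; ring
    have h3 : (N : ℝ) ^ n * (N : ℝ) ^ (-(ε * n)) * (r / 2) ^ n
        ≤ (coprimeDensity q * q * r / 2) ^ n := by
      have : (N : ℝ) ^ n * (N : ℝ) ^ (-(ε * n)) * (r / 2) ^ n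
          = ((N : ℝ) ^ (1 - ε) * (r / 2)) ^ n := by
        rw [mul_pow, rpow_pow_nat _ hN'.le, ← Real.rpow_natCast (N : ℝ), ← Real.rpow_add hN']
        congr 2; ring
      rw [this, mul_div_assoc]
      gcongr
    have h4 : sieveError q ^ n ≤ (N : ℝ) ^ (ε * n) := by
      rw [← rpow_pow_nat _ hN'.le]; gcongr
    rw [div_mul_eq_mul_div, div_le_iff₀ (by positivity), Real.rpow_add hN',
      Real.rpow_natCast] at e2
    have h5 : (N : ℝ) ^ (2 * n * ε) = (N : ℝ) ^ (ε * n) * (N : ℝ) ^ (ε * n) := by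
      rw [← Real.rpow_add hN']; congr 1; ring
    have h6 : (N : ℝ) ^ (ε * n) * (N : ℝ) ^ (-(ε * n)) = 1 := by
      rw [← Real.rpow_add hN']; simp
    have h7 : 0 < (N : ℝ) ^ (-(ε * n)) := by positivity
    calc 4 ^ n * 2 * (a : ℝ) ^ n * sieveError q ^ n
        ≤ 4 ^ n * 2 * ((4 ^ ((n + β) / (τ - 1)) * (N : ℝ) ^ ((n + β) / (τ - 1))) *
            (a : ℝ) ^ (-β)) * (N : ℝ) ^ (ε * n) := by
          rw [h2]; gcongr
      _ = (a : ℝ) ^ (-β) * ((4 ^ n * 2 * 4 ^ ((n + β) / (τ - 1)) *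
            ((N : ℝ) ^ ((n + β) / (τ - 1)) * (N : ℝ) ^ (2 * n * ε))) * (N : ℝ) ^ (-(ε * n))) := by
          rw [h5]; linear_combination (-(4 ^ n * 2 * ((4 ^ ((n + β) / (τ - 1)) * (N : ℝ) ^ ((n + β) / (τ - 1))) *
            (a : ℝ) ^ (-β)) * (N : ℝ) ^ (ε * n))) * h6
      _ ≤ (a : ℝ) ^ (-β) * (((N : ℝ) ^ n * (c * (r / 2) ^ n)) * (N : ℝ) ^ (-(ε * n))) := by
          gcongr
      _ = (c * (a : ℝ) ^ (-β)) * ((N : ℝ) ^ n * (N : ℝ) ^ (-(ε * n)) * (r / 2) ^ n) := by ring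
      _ ≤ _ := by gcongr

/-! ### Fractions avoiding the gap denominators -/

/-- The point `p/q` is far from all rational points whose denominator `a` lies in the gap
`N^{τ-1} ≤ 2a`, `a^{τ-1} ≤ 4N'` between the levels `N` and `N'`. -/
def Avoids (n : ℕ) (τ : ℝ) (N N' : ℕ) (p : Fin n → ℤ) (q : ℕ) : Prop :=
  ∀ a : ℕ, 0 < a → (N : ℝ) ^ (τ - 1) ≤ 2 * a → (a : ℝ) ^ (τ - 1) ≤ 4 * N' → ¬ NearRat n τ p q a

open Classical in
/-- In a ball of radius `rad τ N / 2`, a positive proportion of the reduced fractions of a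
given denominator `q` of level `N'` avoids the gap denominators between `N` and `N'`. The convergence
of `∑ a^{-β}` keeps the total number of excluded fractions small. -/
lemma card_avoids_ge (n : ℕ) (hn : 1 ≤ n) (τ β ε : ℝ) (hτ : 2 < τ) (hβ : 1 < β)
    (hβ2 : β < n * (τ - 2)) (hε : 0 < ε) (hε1 : (n + β) / (τ - 1) + 2 * n * ε < n)
    (hε2 : 2 * ε < 1) :
    ∀ᶠ N : ℕ in atTop, ∀ᶠ N' : ℕ in atTop, ∀ q : ℕ, N' ≤ q → q < 2 * N' → ∀ y : Fin n → ℝ,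
      1 / 2 * (coprimeDensity q * N' * rad τ N / 2) ^ n ≤
        (((reducedBox n q y (rad τ N / 2)).filter (Avoids n τ N N' · q)).card : ℝ) := by
  have hsum : Summable (fun a : ℕ => (a : ℝ) ^ (-β)) := Real.summable_nat_rpow.mpr (by linarith)
  -- `a` may remove the proportion `3 c a^{-β}`; `c` makes these proportions sum to at most `1/2`
  set Z : ℝ := (∑' a : ℕ, (a : ℝ) ^ (-β)) + 1 with hZ
  have hZ0 : 0 < Z := by
    have : 0 ≤ ∑' a : ℕ, (a : ℝ) ^ (-β) := tsum_nonneg fun a => by positivity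
    linarith
  set c : ℝ := 1 / (6 * Z) with hc
  have hc0 : 0 < c := by positivity
  filter_upwards [eventually_window n hn τ β c hτ hβ2 hc0, eventually_gt_atTop 0] with N hW hN
  have hr := rad_pos τ hN
  have hr8 := rad_le τ (by linarith) hN
  filter_upwards [eventually_error n τ β ε c (rad τ N) hτ hβ hε hε1 hε2 hc0 hr,
    eventually_gt_atTop 0] with N' hE hN' q hq1 hq2 y
  obtain ⟨hE1, hE2⟩ := hE q hq1 hq2
  have hN'' : (0 : ℝ) < N' := by exact_mod_cast hN'
  have hq : 0 < q := by omega
  have hq' : (0 : ℝ) < q := by exact_mod_cast hq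
  have hN'q : (N' : ℝ) ≤ q := by exact_mod_cast hq1
  have hθ := coprimeDensity_pos q
  have hEr := one_le_sieveError q
  set r := rad τ N with hrdef
  set R : Finset ℕ := (Finset.range (4 * N' + 1)).filter
    (fun a => 0 < a ∧ (N : ℝ) ^ (τ - 1) ≤ 2 * a ∧ (a : ℝ) ^ (τ - 1) ≤ 4 * N') with hR
  have hbad := card_near_le n q hq τ y r hr R (fun a ha => by
    simp only [hR, Finset.mem_filter] at ha
    exact ⟨ha.2.1, (hW a ha.2.2.1).2.2⟩)
  have hbad2 : ∑ a ∈ R, (2 * (a : ℝ) * r + 1) ^ n *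
      (4 * coprimeDensity q * q * (a : ℝ) ^ (-τ) + sieveError q) ^ n
      ≤ 1 / 2 * (coprimeDensity q * q * r / 2) ^ n := by
    calc _ ≤ ∑ a ∈ R, 3 * (c * (a : ℝ) ^ (-β)) * (coprimeDensity q * q * r / 2) ^ n := by
          refine Finset.sum_le_sum fun a ha => ?_
          simp only [hR, Finset.mem_filter] at ha
          have ha1 : (1 : ℝ) ≤ a := by exact_mod_cast ha.2.1
          obtain ⟨w1, w2, -⟩ := hW a ha.2.2.1
          exact near_term_le n a _ r _ q _ _ ha1 (by positivity) hr (by linarith) hθ hq'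
            (by linarith) w1 w2 (hE2 a ha.2.1 ha.2.2.2)
      _ = (∑ a ∈ R, (a : ℝ) ^ (-β)) * (3 * c * (coprimeDensity q * q * r / 2) ^ n) := by
          rw [Finset.sum_mul]; refine Finset.sum_congr rfl fun a _ => by ring
      _ ≤ Z * (3 * c * (coprimeDensity q * q * r / 2) ^ n) := by
          gcongr
          have := hsum.sum_le_tsum R (fun a _ => by positivity)
          linarith
      _ = _ := by rw [hc]; field_simp; norm_num
  have htot : (coprimeDensity q * q * r / 2) ^ n ≤ ((reducedBox n q y (r / 2)).card : ℝ) := by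
    refine le_trans ?_ (le_card_reducedBox n q y (r / 2) (by linarith) ?_)
    · gcongr
      linarith
    · have : 0 < coprimeDensity q * q * r := by positivity
      linarith
  have hsplit := Finset.card_filter_add_card_filter_not (s := reducedBox n q y (r / 2))
    (fun p => ∃ a ∈ R, NearRat n τ p q a)
  have hsplit' : (((reducedBox n q y (r / 2)).filter
      (fun p => ∃ a ∈ R, NearRat n τ p q a)).card : ℝ)
      + (((reducedBox n q y (r / 2)).filter (fun p => ¬ ∃ a ∈ R, NearRat n τ p q a)).card : ℝ)
      = ((reducedBox n q y (r / 2)).card : ℝ) := by exact_mod_cast hsplit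
  have hsub : (((reducedBox n q y (r / 2)).filter
      (fun p => ¬ ∃ a ∈ R, NearRat n τ p q a)).card : ℝ) ≤
      (((reducedBox n q y (r / 2)).filter (Avoids n τ N N' · q)).card : ℝ) := by
    have : (reducedBox n q y (r / 2)).filter (fun p => ¬ ∃ a ∈ R, NearRat n τ p q a) ⊆
      (reducedBox n q y (r / 2)).filter (Avoids n τ N N' · q) := by
      intro p hp
      simp only [Finset.mem_filter] at hp ⊢
      refine ⟨hp.1, fun a ha h1 h2 h3 => hp.2 ⟨a, ?_, h3⟩⟩
      simp only [hR, Finset.mem_filter, Finset.mem_range]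
      refine ⟨?_, ha, h1, h2⟩
      have ha1 : (1 : ℝ) ≤ a := by exact_mod_cast ha
      have : (a : ℝ) ≤ 4 * N' := by
        calc (a : ℝ) = (a : ℝ) ^ (1 : ℝ) := (Real.rpow_one _).symm
          _ ≤ (a : ℝ) ^ (τ - 1) := Real.rpow_le_rpow_of_exponent_le ha1 (by linarith)
          _ ≤ _ := h2
      have : a ≤ 4 * N' := by exact_mod_cast this
      omega
    exact_mod_cast Finset.card_le_card this
  have hfin : (coprimeDensity q * N' * r / 2) ^ n ≤ (coprimeDensity q * q * r / 2) ^ n := by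
    gcongr
  linarith

/-! ### Nodes and their balls -/

/-- The centre `p/q + (3/4) q^{-τ} (1, …, 1)` of the ball of the node `v = (p, q)`. The offset keeps
the ball away from `p/q`. -/
noncomputable def center (n : ℕ) (τ : ℝ) (v : (Fin n → ℤ) × ℕ) : Fin n → ℝ :=
  ratPt n v.1 v.2 + fun _ => 3 / 4 * (v.2 : ℝ) ^ (-τ)

/-- The pair `v = (p, q)` is a node of level `N`: `q ∈ Q ∩ [N, 2N)`, and the coordinates of `p` are
coprime to `q`. -/
structure IsNode (n : ℕ) (Q : Set ℕ) (N : ℕ) (v : (Fin n → ℤ) × ℕ) : Prop where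
  mem : v.2 ∈ Q
  le : N ≤ v.2
  lt : v.2 < 2 * N
  coprime : CoprimeCoords n v.1 v.2

lemma IsNode.pos {n : ℕ} {Q : Set ℕ} {N : ℕ} {v : (Fin n → ℤ) × ℕ} (h : IsNode n Q N v) :
    0 < v.2 := by have := h.le; have := h.lt; omega

lemma IsNode.rad_le {n : ℕ} {Q : Set ℕ} {N : ℕ} {v : (Fin n → ℤ) × ℕ} (h : IsNode n Q N v)
    {τ : ℝ} (hτ : 0 ≤ τ) : rad τ N ≤ (v.2 : ℝ) ^ (-τ) / 8 := by
  unfold rad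
  have h1 : (v.2 : ℝ) ≤ 2 * N := by exact_mod_cast h.lt.le
  have h0 : (0 : ℝ) < v.2 := by exact_mod_cast h.pos
  have := Real.rpow_le_rpow_of_nonpos h0 h1 (by linarith : -τ ≤ 0)
  linarith

lemma norm_const (n : ℕ) (hn : 1 ≤ n) (c : ℝ) (hc : 0 ≤ c) : ‖(fun _ : Fin n => c)‖ = c := by
  have : Nonempty (Fin n) := ⟨⟨0, hn⟩⟩
  rw [pi_norm_const, Real.norm_of_nonneg hc]

/-- The ball of a node `(p, q)` lies in the annulus `(5/8) q^{-τ} ≤ |x - p/q| < q^{-τ}`. -/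
lemma IsNode.annulus {n : ℕ} (hn : 1 ≤ n) {Q : Set ℕ} {N : ℕ} {v : (Fin n → ℤ) × ℕ}
    (h : IsNode n Q N v) {τ : ℝ} (hτ : 0 ≤ τ) {x : Fin n → ℝ} (hx : ‖x - center n τ v‖ ≤ rad τ N) :
    5 / 8 * (v.2 : ℝ) ^ (-τ) ≤ ‖x - ratPt n v.1 v.2‖ ∧
      ‖x - ratPt n v.1 v.2‖ < (v.2 : ℝ) ^ (-τ) := by
  have h1 := h.rad_le hτ
  have h0 : (0 : ℝ) < v.2 := by exact_mod_cast h.pos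
  have hu : 0 < (v.2 : ℝ) ^ (-τ) := by positivity
  have h2 := norm_const n hn (3 / 4 * (v.2 : ℝ) ^ (-τ)) (by positivity)
  have e : x - ratPt n v.1 v.2 = (x - center n τ v) + fun _ => 3 / 4 * (v.2 : ℝ) ^ (-τ) := by
    unfold center; abel
  constructor
  · have := norm_sub_norm_le (fun _ : Fin n => 3 / 4 * (v.2 : ℝ) ^ (-τ)) (-(x - center n τ v))
    rw [norm_neg, h2, sub_neg_eq_add, add_comm (fun _ : Fin n => 3 / 4 * (v.2 : ℝ) ^ (-τ)), ← e]
      at this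
    linarith
  · rw [e]
    refine (norm_add_le _ _).trans_lt ?_
    rw [h2]; linarith

lemma one_div_le_norm_ratPt_sub {n : ℕ} {p p' : Fin n → ℤ} {q q' : ℕ} (hq : 0 < q) (hq' : 0 < q')
    (h : ratPt n p q ≠ ratPt n p' q') :
    1 / ((q : ℝ) * q') ≤ ‖ratPt n p q - ratPt n p' q'‖ := by
  obtain ⟨i, hi⟩ := Function.ne_iff.mp h
  refine le_trans ?_ (norm_le_pi_norm _ i)
  have hq0 : (0 : ℝ) < q := by exact_mod_cast hq
  have hq0' : (0 : ℝ) < q' := by exact_mod_cast hq'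
  have e : (ratPt n p q - ratPt n p' q') i = ((p i * q' - p' i * q : ℤ) : ℝ) / (q * q') := by
    simp only [ratPt, Pi.sub_apply]; push_cast; field_simp
  rw [e, Real.norm_eq_abs, abs_div, abs_of_pos (by positivity : (0 : ℝ) < q * q')]
  gcongr
  rw [← Int.cast_abs]
  have hne : p i * q' - p' i * q ≠ 0 := by
    intro h0
    rw [Pi.sub_apply] at e
    rw [h0] at e
    simp only [Int.cast_zero, zero_div] at e
    exact hi (sub_eq_zero.mp e)
  exact_mod_cast Int.one_le_abs hne

/-- If `p/q` is in lowest terms and equals `p'/q'`, then `q ∣ q'`. -/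
lemma dvd_of_ratPt_eq {n : ℕ} (hn : 1 ≤ n) {p p' : Fin n → ℤ} {q q' : ℕ} (hq : 0 < q)
    (hq' : 0 < q') (hc : CoprimeCoords n p q) (h : ratPt n p q = ratPt n p' q') : q ∣ q' := by
  have hi := congrFun h ⟨0, hn⟩
  have hq0 : (q : ℝ) ≠ 0 := by exact_mod_cast hq.ne'
  have hq0' : (q' : ℝ) ≠ 0 := by exact_mod_cast hq'.ne'
  simp only [ratPt] at hi
  rw [div_eq_div_iff hq0 hq0'] at hi
  have hi' : p ⟨0, hn⟩ * q' = p' ⟨0, hn⟩ * q := by exact_mod_cast hi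
  have hd : (q : ℤ) ∣ p ⟨0, hn⟩ * q' := ⟨p' ⟨0, hn⟩, by rw [hi']; ring⟩
  exact_mod_cast (hc ⟨0, hn⟩).symm.dvd_of_dvd_mul_left hd

/-- For a point of the ball of a node `(p, q)` of level `N`, the only approximating denominator `q'`
with `4N ≤ q'^{τ-1}` and `2q' ≤ N^{τ-1}` is `q`. A rational other than `p/q` would be too close to
`p/q`, and a proper multiple `q'` of `q` is excluded by the inner radius of the annulus. -/
lemma IsNode.eq_of_approx {n : ℕ} (hn : 1 ≤ n) {Q : Set ℕ} {N : ℕ} {v : (Fin n → ℤ) × ℕ}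
    (h : IsNode n Q N v) {τ : ℝ} (hτ : 2 < τ) {x : Fin n → ℝ}
    (hx : ‖x - center n τ v‖ ≤ rad τ N) {p' : Fin n → ℤ} {q' : ℕ} (hq' : 0 < q')
    (h1 : 4 * (N : ℝ) ≤ (q' : ℝ) ^ (τ - 1)) (h2 : 2 * (q' : ℝ) ≤ (N : ℝ) ^ (τ - 1))
    (hap : ‖x - ratPt n p' q'‖ < (q' : ℝ) ^ (-τ)) : q' = v.2 := by
  obtain ⟨ha1, ha2⟩ := h.annulus hn (by linarith) hx
  have hq := h.pos
  have hq0 : (0 : ℝ) < v.2 := by exact_mod_cast hq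
  have hq0' : (0 : ℝ) < q' := by exact_mod_cast hq'
  have hNq : (N : ℝ) ≤ v.2 := by exact_mod_cast h.le
  have hqN : (v.2 : ℝ) < 2 * N := by exact_mod_cast h.lt
  have heq : ratPt n v.1 v.2 = ratPt n p' q' := by
    by_contra hne
    have h3 := one_div_le_norm_ratPt_sub hq hq' hne
    have h4 : ‖ratPt n v.1 v.2 - ratPt n p' q'‖ < (v.2 : ℝ) ^ (-τ) + (q' : ℝ) ^ (-τ) := by
      have : ratPt n v.1 v.2 - ratPt n p' q' = (x - ratPt n p' q') - (x - ratPt n v.1 v.2) := by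
        abel
      rw [this]
      refine (norm_sub_le _ _).trans_lt ?_
      linarith
    have key : ∀ a b : ℝ, 0 < a → a ≤ b → 1 / (a * b) < a ^ (-τ) + b ^ (-τ) →
        a ^ (τ - 1) < 2 * b := by
      intro a b ha hab hlt
      have hb : 0 < b := by linarith
      have h5 : b ^ (-τ) ≤ a ^ (-τ) := Real.rpow_le_rpow_of_nonpos ha hab (by linarith)
      have h6 : 1 / (a * b) < 2 * a ^ (-τ) := by linarith
      rw [div_lt_iff₀ (by positivity)] at h6
      have h7 : a ^ (τ - 1) * (a ^ (-τ) * a) = 1 := by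
        rw [← Real.rpow_add_one ha.ne', ← Real.rpow_add ha]
        have : τ - 1 + (-τ + 1) = 0 := by ring
        rw [this, Real.rpow_zero]
      have h8 : 0 < a ^ (τ - 1) := by positivity
      calc a ^ (τ - 1) = a ^ (τ - 1) * 1 := by ring
        _ < a ^ (τ - 1) * (2 * a ^ (-τ) * (a * b)) := by gcongr
        _ = 2 * b * (a ^ (τ - 1) * (a ^ (-τ) * a)) := by ring
        _ = 2 * b := by rw [h7]; ring
    rcases le_total (v.2 : ℝ) q' with hle | hle
    · have := key v.2 q' hq0 hle (by linarith)
      have h9 : (N : ℝ) ^ (τ - 1) ≤ (v.2 : ℝ) ^ (τ - 1) := by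
        refine Real.rpow_le_rpow (by positivity) hNq (by linarith)
      linarith
    · have := key q' v.2 hq0' hle (by rw [mul_comm]; linarith)
      linarith
  obtain ⟨m, hm⟩ := dvd_of_ratPt_eq hn hq hq' h.coprime heq
  rw [← heq] at hap
  by_contra hne
  have hm2 : 2 ≤ m := by
    rcases m with _ | _ | m
    · simp at hm; omega
    · simp at hm; omega
    · omega
  have h2q : 2 * (v.2 : ℝ) ≤ q' := by
    have : 2 * v.2 ≤ q' := by rw [hm]; nlinarith
    exact_mod_cast this
  have h10 : (q' : ℝ) ^ (-τ) ≤ (2 * v.2 : ℝ) ^ (-τ) :=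
    Real.rpow_le_rpow_of_nonpos (by positivity) h2q (by linarith)
  have h11 : (2 * v.2 : ℝ) ^ (-τ) ≤ 1 / 4 * (v.2 : ℝ) ^ (-τ) := by
    rw [Real.mul_rpow (by norm_num) hq0.le]
    gcongr
    calc (2 : ℝ) ^ (-τ) ≤ 2 ^ (-2 : ℝ) :=
          Real.rpow_le_rpow_of_exponent_le (by norm_num) (by linarith)
      _ = 1 / 4 := by rw [Real.rpow_neg (by norm_num)]; norm_num
  have : 0 < (v.2 : ℝ) ^ (-τ) := by positivity
  linarith

/-- Gap denominators do not approximate the points in the ball of a node which avoids them. -/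
lemma IsNode.not_approx_of_avoids {n : ℕ} (hn : 1 ≤ n) {Q : Set ℕ} {N N' : ℕ}
    {v : (Fin n → ℤ) × ℕ}
    (h : IsNode n Q N' v) {τ : ℝ} (hτ : 2 < τ) (hav : Avoids n τ N N' v.1 v.2) {x : Fin n → ℝ}
    (hx : ‖x - center n τ v‖ ≤ rad τ N') {p' : Fin n → ℤ} {q' : ℕ} (hq' : 0 < q') (hqN : q' ≤ N')
    (h1 : (N : ℝ) ^ (τ - 1) ≤ 2 * q') (h2 : (q' : ℝ) ^ (τ - 1) ≤ 4 * N') :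
    ¬ ‖x - ratPt n p' q'‖ < (q' : ℝ) ^ (-τ) := by
  intro hap
  obtain ⟨ha1, ha2⟩ := h.annulus hn (by linarith) hx
  refine hav q' hq' h1 h2 ⟨p', ?_⟩
  have hq0' : (0 : ℝ) < q' := by exact_mod_cast hq'
  have hle : (q' : ℝ) ≤ v.2 := by exact_mod_cast hqN.trans h.le
  have h3 : (v.2 : ℝ) ^ (-τ) ≤ (q' : ℝ) ^ (-τ) :=
    Real.rpow_le_rpow_of_nonpos hq0' hle (by linarith)
  have : ratPt n v.1 v.2 - ratPt n p' q' = (x - ratPt n p' q') - (x - ratPt n v.1 v.2) := by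
    abel
  rw [this]
  refine (norm_sub_le _ _).trans ?_
  linarith

/-- Distinct nodes of level `N` have centres `≫ N^{-2}` apart, like the rationals they stand for. -/
lemma IsNode.separated {n : ℕ} (hn : 1 ≤ n) {Q : Set ℕ} {N : ℕ} {v w : (Fin n → ℤ) × ℕ}
    (hv : IsNode n Q N v) (hw : IsNode n Q N w) (hvw : v ≠ w) {τ : ℝ} (hτ : 0 ≤ τ)
    (hN : 32 * (N : ℝ) ^ (-τ) ≤ (N : ℝ) ^ (-2 : ℝ)) :
    (N : ℝ) ^ (-2 : ℝ) / 8 ≤ ‖center n τ v - center n τ w‖ := by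
  have hv0 : (0 : ℝ) < v.2 := by exact_mod_cast hv.pos
  have hw0 : (0 : ℝ) < w.2 := by exact_mod_cast hw.pos
  have hN0' : 0 < N := by have := hv.lt; omega
  have hN0 : (0 : ℝ) < N := by exact_mod_cast hN0'
  have hne : ratPt n v.1 v.2 ≠ ratPt n w.1 w.2 := by
    intro h
    have h1 := dvd_of_ratPt_eq hn hv.pos hw.pos hv.coprime h
    have h2 := dvd_of_ratPt_eq hn hw.pos hv.pos hw.coprime h.symm
    have h3 := Nat.dvd_antisymm h1 h2
    apply hvw
    refine Prod.ext ?_ h3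
    funext i
    have hi := congrFun h i
    simp only [ratPt, ← h3] at hi
    have : (v.1 i : ℝ) = w.1 i := by field_simp at hi; exact hi
    exact_mod_cast this
  have h1 := one_div_le_norm_ratPt_sub hv.pos hw.pos hne
  have hv2 : (v.2 : ℝ) ≤ 2 * N := by exact_mod_cast hv.lt.le
  have hw2 : (w.2 : ℝ) ≤ 2 * N := by exact_mod_cast hw.lt.le
  have h2 : (N : ℝ) ^ (-2 : ℝ) / 4 ≤ 1 / ((v.2 : ℝ) * w.2) := by
    have : (N : ℝ) ^ (-2 : ℝ) / 4 = 1 / ((2 * N : ℝ) * (2 * N)) := by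
      rw [Real.rpow_neg hN0.le]; norm_num; field_simp; norm_num
    rw [this]; gcongr
  have hu : ∀ u : (Fin n → ℤ) × ℕ, IsNode n Q N u → (u.2 : ℝ) ^ (-τ) ≤ (N : ℝ) ^ (-τ) := by
    intro u hu
    exact Real.rpow_le_rpow_of_nonpos hN0 (by exact_mod_cast hu.le) (by linarith)
  have e : ratPt n v.1 v.2 - ratPt n w.1 w.2 = (center n τ v - center n τ w)
      - (fun _ => 3 / 4 * (v.2 : ℝ) ^ (-τ)) + (fun _ => 3 / 4 * (w.2 : ℝ) ^ (-τ)) := by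
    unfold center; abel
  have h3 : ‖ratPt n v.1 v.2 - ratPt n w.1 w.2‖ ≤ ‖center n τ v - center n τ w‖
      + 3 / 4 * (v.2 : ℝ) ^ (-τ) + 3 / 4 * (w.2 : ℝ) ^ (-τ) := by
    rw [e]
    refine (norm_add_le _ _).trans ?_
    rw [norm_const n hn _ (by positivity)]
    gcongr
    refine (norm_sub_le _ _).trans ?_
    rw [norm_const n hn _ (by positivity)]
  have h5 := hu v hv
  have h6 := hu w hw
  have h7 : 0 < (N : ℝ) ^ (-τ) := by positivity
  linarith

/-! ### Counting nodes in small balls -/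

/-- A `δ`-separated family of reals in an interval of length `L` has at most `1 + L/δ` members. -/
lemma card_le_of_separated {ι : Type*} (T : Finset ι) (f : ι → ℝ) (δ A L : ℝ) (hδ : 0 < δ)
    (hsep : ∀ v ∈ T, ∀ w ∈ T, v ≠ w → δ ≤ |f v - f w|)
    (hL : 0 ≤ L) (hI : ∀ v ∈ T, A ≤ f v ∧ f v ≤ A + L) : (T.card : ℝ) ≤ 1 + L / δ := by
  have hmaps : ∀ v ∈ T, ⌊(f v - A) / δ⌋ ∈ Finset.Icc 0 ⌊L / δ⌋ := by
    intro v hv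
    obtain ⟨h1, h2⟩ := hI v hv
    rw [Finset.mem_Icc]
    refine ⟨Int.floor_nonneg.mpr (div_nonneg (by linarith) hδ.le), Int.floor_le_floor ?_⟩
    gcongr; linarith
  have hinj : Set.InjOn (fun v => ⌊(f v - A) / δ⌋) (T : Set ι) := by
    intro v hv w hw hvw
    by_contra hne
    have h1 := Int.abs_sub_lt_one_of_floor_eq_floor hvw
    have h2 := hsep v hv w hw hne
    rw [← sub_div, abs_div, abs_of_pos hδ, div_lt_one hδ] at h1
    have : f v - A - (f w - A) = f v - f w := by ring
    rw [this] at h1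
    linarith
  have hcard := Finset.card_le_card_of_injOn _ hmaps hinj
  rw [Int.card_Icc] at hcard
  have h0 : 0 ≤ ⌊L / δ⌋ := Int.floor_nonneg.mpr (by positivity)
  have h1 : ((⌊L / δ⌋ + 1 - 0).toNat : ℝ) = ⌊L / δ⌋ + 1 := by
    have : ((⌊L / δ⌋ + 1 - 0).toNat : ℤ) = ⌊L / δ⌋ + 1 := by omega
    exact_mod_cast this
  calc (T.card : ℝ) ≤ ((⌊L / δ⌋ + 1 - 0).toNat : ℝ) := by exact_mod_cast hcard
    _ = ⌊L / δ⌋ + 1 := h1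
    _ ≤ _ := by linarith [Int.floor_le (L / δ)]

/-- At scales `ρ < 1/(8N)` a ball of radius `2ρ` contains at most one node for each denominator and
first numerator coordinate, so the nodes are counted by the separation of their first coordinates. -/
lemma card_nodes_small_scale {n : ℕ} (hn : 1 ≤ n) {Q : Set ℕ} {N : ℕ} {τ : ℝ} (hτ : 0 ≤ τ)
    (hN : 32 * (N : ℝ) ^ (-τ) ≤ (N : ℝ) ^ (-2 : ℝ)) (T : Finset ((Fin n → ℤ) × ℕ))
    (y : Fin n → ℝ) (ρ : ℝ) (hρ : 0 ≤ ρ) (hρN : 8 * ρ * N < 1)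
    (hT : ∀ v ∈ T, IsNode n Q N v ∧ ‖center n τ v - y‖ ≤ 2 * ρ) :
    (T.card : ℝ) ≤ 1 + 32 * (N : ℝ) ^ (2 : ℝ) * ρ := by
  rcases T.eq_empty_or_nonempty with rfl | ⟨v0, hv0⟩
  · simp; positivity
  have hN0' : 0 < N := by have := (hT v0 hv0).1.lt; omega
  have hN0 : (0 : ℝ) < N := by exact_mod_cast hN0'
  set i0 : Fin n := ⟨0, hn⟩
  have hcoord : ∀ v ∈ T, ∀ i, |center n τ v i - y i| ≤ 2 * ρ := by
    intro v hv i
    exact (norm_le_pi_norm (center n τ v - y) i).trans (hT v hv).2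
  -- the projection to the first coordinate is injective on `T` and reduces to dimension one
  let pr : (Fin n → ℤ) × ℕ → (Fin 1 → ℤ) × ℕ := fun v => (fun _ => v.1 i0, v.2)
  have hpr : ∀ v ∈ T, IsNode 1 Q N (pr v) := fun v hv =>
    ⟨(hT v hv).1.mem, (hT v hv).1.le, (hT v hv).1.lt, fun _ => (hT v hv).1.coprime i0⟩
  have hinj : ∀ v ∈ T, ∀ w ∈ T, v ≠ w → pr v ≠ pr w := by
    intro v hv w hw hne heq
    have hq : v.2 = w.2 := (Prod.mk.inj heq).2
    apply hne
    refine Prod.ext ?_ hq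
    funext i
    have h1 := hcoord v hv i
    have h2 := hcoord w hw i
    have hv2 : (v.2 : ℝ) < 2 * N := by exact_mod_cast (hT v hv).1.lt
    have hv0 : (0 : ℝ) < v.2 := by exact_mod_cast (hT v hv).1.pos
    have h3 : |(v.1 i : ℝ) / v.2 - w.1 i / v.2| ≤ 4 * ρ := by
      simp only [center, ratPt, Pi.add_apply, ← hq] at h1 h2
      rw [abs_le] at *
      constructor <;> linarith [h1.1, h1.2, h2.1, h2.2]
    rw [← sub_div, abs_div, abs_of_pos hv0, div_le_iff₀ hv0] at h3
    have h4 : |(v.1 i : ℝ) - w.1 i| < 1 := by nlinarith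
    have h5 : |v.1 i - w.1 i| < 1 := by exact_mod_cast h4
    exact sub_eq_zero.mp (Int.abs_lt_one_iff.mp h5)
  have hδ : 0 < (N : ℝ) ^ (-2 : ℝ) / 8 := by positivity
  have := card_le_of_separated T (fun v => center n τ v i0) ((N : ℝ) ^ (-2 : ℝ) / 8)
    (y i0 - 2 * ρ) (4 * ρ) hδ ?_ (by positivity) ?_
  · refine this.trans (le_of_eq ?_)
    rw [Real.rpow_neg hN0.le]
    field_simp
    ring
  · intro v hv w hw hne
    have h1 := (hpr v hv).separated le_rfl (hpr w hw) (hinj v hv w hw hne) hτ hN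
    refine h1.trans ?_
    rw [pi_norm_le_iff_of_nonneg (abs_nonneg _)]
    intro i
    rw [Real.norm_eq_abs]
    rfl
  · intro v hv
    have := hcoord v hv i0
    rw [abs_le] at this
    constructor <;> linarith [this.1, this.2]

/-- Counts the nodes in a ball of radius `2ρ` by sieving for each denominator separately. -/
lemma card_nodes_large_scale {n : ℕ} (τ : ℝ) (B : Finset ℕ) (hB : ∀ q ∈ B, 0 < q)
    (T : Finset ((Fin n → ℤ) × ℕ)) (y : Fin n → ℝ) (ρ : ℝ) (hρ : 0 ≤ ρ)
    (hT : ∀ v ∈ T, v.2 ∈ B ∧ CoprimeCoords n v.1 v.2 ∧ ‖center n τ v - y‖ ≤ 2 * ρ) :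
    (T.card : ℝ) ≤ ∑ q ∈ B, (4 * coprimeDensity q * q * ρ + sieveError q) ^ n := by
  rw [Finset.card_eq_sum_card_fiberwise (f := Prod.snd) (t := B) (fun v hv => (hT v hv).1)]
  push_cast
  refine Finset.sum_le_sum fun q hq => ?_
  have hsub : ((T.filter (fun v => v.2 = q)).card : ℝ) ≤
      ((reducedBox n q (y - fun _ => 3 / 4 * (q : ℝ) ^ (-τ)) (2 * ρ)).card : ℝ) := by
    have : (T.filter (fun v => v.2 = q)).card ≤
      (reducedBox n q (y - fun _ => 3 / 4 * (q : ℝ) ^ (-τ)) (2 * ρ)).card := by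
      refine Finset.card_le_card_of_injOn Prod.fst ?_ ?_
      · intro v hv
        simp only [Finset.coe_filter, Set.mem_ofPred_eq] at hv
        obtain ⟨hv, rfl⟩ := hv
        obtain ⟨h1, h2, h3⟩ := hT v hv
        rw [Finset.mem_coe, mem_reducedBox (hB _ hq) (by positivity)]
        refine ⟨h2, ?_⟩
        convert h3 using 2
        unfold center; abel
      · intro v hv w hw h
        simp only [Finset.coe_filter, Set.mem_ofPred_eq] at hv hw
        exact Prod.ext h (hv.2.trans hw.2.symm)
    exact_mod_cast this
  refine hsub.trans ((card_reducedBox_le n q _ _ (by positivity)).trans (le_of_eq ?_))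
  congr 1; ring

/-- The comparison of exponents behind the mass estimate. Here `K` is the number of denominators of
level `N`, `M` a number of children bounded below as in `card_avoids_ge`, and `c` the number of
children with centre in a ball of radius `2ρ`, subject to the large-scale and small-scale counts.
The first count gives the bound for `ρ ≥ N^{σ-2} / 16`, the second for smaller `ρ`. -/
lemma eventually_mass (n : ℕ) (τ t σ ε r : ℝ) (hτ : 2 < τ) (ht : 0 < t)
    (htn : t ≤ n) (hσ1 : σ ≤ 1) (hr : 0 < r) (hr1 : r ≤ 1)
    (h1 : (2 - σ) * t + (2 * n + 1) * ε < n) (hε : 0 < ε) (h2 : τ * t + (n + 1) * ε < n + σ) :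
    ∀ᶠ N : ℕ in atTop, ∀ K M : ℝ, (N : ℝ) ^ σ ≤ K →
      K * (1 / 2 * ((N : ℝ) ^ (1 - ε) * r / 2) ^ n) ≤ M →
      1 ≤ rad τ N ^ t * M ∧
      ∀ c ρ : ℝ, rad τ N ≤ ρ → ρ ≤ r →
        c ≤ 2 * 32 ^ n * (ρ / r) ^ n * M + K * (2 ^ n * (N : ℝ) ^ (ε * n)) →
        (8 * ρ * N < 1 → c ≤ 1 + 32 * (N : ℝ) ^ (2 : ℝ) * ρ) →
        c ≤ (2 * 32 ^ n + 2) * (ρ / r) ^ t * M := by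
  -- `M ≥ K N^{n-(n+1)ε}`
  have E0 := eventually_mul_rpow_le (2 / (r / 2) ^ n) (n - (n + 1) * ε) ((1 - ε) * n) (by linarith)
  have E1 := eventually_mul_rpow_le (1 / (2 ^ (-τ) / 8) ^ t) (τ * t) (n + σ - (n + 1) * ε)
    (by linarith)
  have E2 := eventually_mul_rpow_le (2 ^ n * 16 ^ t) (ε * n + (2 - σ) * t) (n - (n + 1) * ε)
    (by linarith)
  have E3 := eventually_mul_rpow_le 32 (2 + (σ - 2) * (1 - t)) (n + σ - (n + 1) * ε)
    (by nlinarith [mul_pos (Nat.cast_add_one_pos (α := ℝ) n) hε])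
  have E4 := eventually_mul_rpow_le (32 ^ t) (2 * t) (n + σ - (n + 1) * ε) (by nlinarith)
  filter_upwards [E0, E1, E2, E3, E4, eventually_gt_atTop 0] with N e0 e1 e2 e3 e4 hN K M hK hM
  have hN0 : (0 : ℝ) < N := by exact_mod_cast hN
  have hN1 : (1 : ℝ) ≤ N := by exact_mod_cast hN
  have hK0 : 0 < K := lt_of_lt_of_le (by positivity) hK
  have hM1 : K * (N : ℝ) ^ ((n : ℝ) - (n + 1) * ε) ≤ M := by
    refine le_trans ?_ hM
    gcongr
    have e5 : ((N : ℝ) ^ (1 - ε) * r / 2) ^ n = (N : ℝ) ^ ((1 - ε) * n) * (r / 2) ^ n := by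
      rw [mul_div_assoc, mul_pow, rpow_pow_nat _ hN0.le]
    rw [e5]
    rw [div_mul_eq_mul_div, div_le_iff₀ (by positivity)] at e0
    linarith
  have hM2 : (N : ℝ) ^ (n + σ - (n + 1) * ε) ≤ M := by
    refine le_trans ?_ hM1
    have : (N : ℝ) ^ (n + σ - (n + 1) * ε) = (N : ℝ) ^ σ * (N : ℝ) ^ ((n : ℝ) - (n + 1) * ε) := by
      rw [← Real.rpow_add hN0]; congr 1; ring
    rw [this]; gcongr
  have hM0 : 0 < M := lt_of_lt_of_le (by positivity) hM2
  have hrt : rad τ N ^ t * (N : ℝ) ^ (τ * t) = (2 ^ (-τ) / 8) ^ t := by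
    have : rad τ N = (2 ^ (-τ) / 8) * (N : ℝ) ^ (-τ) := by
      unfold rad; rw [Real.mul_rpow (by norm_num) hN0.le]; ring
    rw [this, Real.mul_rpow (by positivity) (by positivity), ← Real.rpow_mul hN0.le, mul_assoc,
      ← Real.rpow_add hN0]
    simp
  have hrp := rad_pos τ hN
  have hone : 1 ≤ rad τ N ^ t * M := by
    have h3 : (1 / (2 ^ (-τ) / 8) ^ t) * (N : ℝ) ^ (τ * t) ≤ M := e1.trans hM2
    rw [← hrt] at h3
    have h4 : 0 < rad τ N ^ t := by positivity
    have h5 : 1 / (rad τ N ^ t * (N : ℝ) ^ (τ * t)) * (N : ℝ) ^ (τ * t) = 1 / rad τ N ^ t := by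
      field_simp
    rw [h5, div_le_iff₀ h4] at h3
    linarith
  refine ⟨hone, fun c ρ hρ1 hρ2 hc1 hc2 => ?_⟩
  have hρ0 : 0 < ρ := by linarith
  have hρr : ρ ^ t ≤ (ρ / r) ^ t := by
    refine Real.rpow_le_rpow hρ0.le ?_ ht.le
    rw [le_div_iff₀ hr]; nlinarith
  have hρ1M : 1 ≤ ρ ^ t * M := hone.trans (by gcongr)
  have hρrM : ρ ^ t * M ≤ (ρ / r) ^ t * M := by gcongr
  have h32 : (0 : ℝ) < 32 ^ n := by positivity
  have hpos : 0 < (ρ / r) ^ t * M := by positivity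
  rcases le_or_gt ((N : ℝ) ^ (σ - 2) / 16) ρ with hcase | hcase
  · have hpw : (ρ / r) ^ n ≤ (ρ / r) ^ t := by
      rw [← Real.rpow_natCast]
      exact Real.rpow_le_rpow_of_exponent_ge (by positivity) ((div_le_one hr).mpr hρ2) htn
    have h6 : ((N : ℝ) ^ (σ - 2) / 16) ^ t ≤ ρ ^ t := by gcongr
    have h7 : 2 ^ n * (N : ℝ) ^ (ε * n) ≤ ρ ^ t * (N : ℝ) ^ ((n : ℝ) - (n + 1) * ε) := by
      have h8 : ((N : ℝ) ^ (σ - 2) / 16) ^ t * (2 ^ n * 16 ^ t * (N : ℝ) ^ (ε * n + (2 - σ) * t))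
          = 2 ^ n * (N : ℝ) ^ (ε * n) := by
        rw [Real.div_rpow (by positivity) (by norm_num), ← Real.rpow_mul hN0.le,
          Real.rpow_add hN0]
        have : (N : ℝ) ^ ((σ - 2) * t) * (N : ℝ) ^ ((2 - σ) * t) = 1 := by
          rw [← Real.rpow_add hN0]; ring_nf; simp
        field_simp
        rw [mul_comm t (2 - σ)]
        exact this
      rw [← h8]
      gcongr
    have h9 : K * (2 ^ n * (N : ℝ) ^ (ε * n)) ≤ ρ ^ t * M := by
      calc _ ≤ K * (ρ ^ t * (N : ℝ) ^ ((n : ℝ) - (n + 1) * ε)) := by gcongr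
        _ = ρ ^ t * (K * (N : ℝ) ^ ((n : ℝ) - (n + 1) * ε)) := by ring
        _ ≤ _ := by gcongr
    have h10 : 2 * 32 ^ n * (ρ / r) ^ n * M ≤ 2 * 32 ^ n * (ρ / r) ^ t * M := by gcongr
    calc c ≤ _ := hc1
      _ ≤ 2 * 32 ^ n * (ρ / r) ^ t * M + (ρ / r) ^ t * M := by linarith
      _ ≤ _ := by nlinarith
  · have h11 : 8 * ρ * N < 1 := by
      have : (N : ℝ) ^ (σ - 2) ≤ (N : ℝ) ^ (-1 : ℝ) :=
        Real.rpow_le_rpow_of_exponent_le hN1 (by linarith)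
      rw [Real.rpow_neg_one] at this
      have h12 : ρ < (N : ℝ)⁻¹ / 16 := by linarith
      have : ρ * N < 1 / 16 := by
        calc ρ * N < (N : ℝ)⁻¹ / 16 * N := by gcongr
          _ = 1 / 16 := by field_simp
      linarith
    have h13 := hc2 h11
    have h14 : 32 * (N : ℝ) ^ (2 : ℝ) * ρ ≤ ρ ^ t * M := by
      have hsplit : ρ = ρ ^ (1 - t) * ρ ^ t := by
        rw [← Real.rpow_add hρ0]; simp
      rcases le_or_gt t 1 with ht1 | ht1
      · have h15 : ρ ^ (1 - t) ≤ (N : ℝ) ^ ((σ - 2) * (1 - t)) := by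
          rw [Real.rpow_mul hN0.le]
          refine Real.rpow_le_rpow hρ0.le ?_ (by linarith)
          have : 0 < (N : ℝ) ^ (σ - 2) := by positivity
          linarith
        calc 32 * (N : ℝ) ^ (2 : ℝ) * ρ = 32 * (N : ℝ) ^ (2 : ℝ) * ρ ^ (1 - t) * ρ ^ t := by
              rw [mul_assoc _ (ρ ^ (1 - t)), ← hsplit]
          _ ≤ 32 * (N : ℝ) ^ (2 : ℝ) * (N : ℝ) ^ ((σ - 2) * (1 - t)) * ρ ^ t := by gcongr
          _ = 32 * (N : ℝ) ^ (2 + (σ - 2) * (1 - t)) * ρ ^ t := by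
              rw [Real.rpow_add hN0]; ring
          _ ≤ M * ρ ^ t := by gcongr; exact e3.trans hM2
          _ = _ := by ring
      · rcases le_or_gt (32 * (N : ℝ) ^ (2 : ℝ) * ρ) 1 with h16 | h16
        · linarith
        · have h17 : ρ⁻¹ ≤ 32 * (N : ℝ) ^ (2 : ℝ) := by
            rw [inv_le_iff_one_le_mul₀ hρ0]; exact h16.le
          have h18 : ρ ^ (1 - t) ≤ (32 * (N : ℝ) ^ (2 : ℝ)) ^ (t - 1) := by
            have : ρ ^ (1 - t) = (ρ⁻¹) ^ (t - 1) := by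
              rw [Real.inv_rpow hρ0.le, ← Real.rpow_neg hρ0.le]; congr 1; ring
            rw [this]
            exact Real.rpow_le_rpow (by positivity) h17 (by linarith)
          have h19 : 32 * (N : ℝ) ^ (2 : ℝ) * (32 * (N : ℝ) ^ (2 : ℝ)) ^ (t - 1)
              = 32 ^ t * (N : ℝ) ^ (2 * t) := by
            rw [Real.rpow_mul hN0.le, ← Real.mul_rpow (by norm_num) (by positivity),
              Real.rpow_sub_one (by positivity)]
            field_simp
          calc 32 * (N : ℝ) ^ (2 : ℝ) * ρ = 32 * (N : ℝ) ^ (2 : ℝ) * ρ ^ (1 - t) * ρ ^ t := by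
                rw [mul_assoc _ (ρ ^ (1 - t)), ← hsplit]
            _ ≤ 32 * (N : ℝ) ^ (2 : ℝ) * (32 * (N : ℝ) ^ (2 : ℝ)) ^ (t - 1) * ρ ^ t := by gcongr
            _ ≤ M * ρ ^ t := by rw [h19]; gcongr; exact e4.trans hM2
            _ = _ := by ring
    calc c ≤ _ := h13
      _ ≤ 2 * ((ρ / r) ^ t * M) := by linarith
      _ ≤ 2 * (32 ^ n * ((ρ / r) ^ t * M)) + 2 * ((ρ / r) ^ t * M) := by
          have := mul_pos h32 hpos
          linarith
      _ = _ := by ring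

/-! ### Children of a node -/

open Classical in
/-- The denominators `Q ∩ [N, 2N)` of level `N`. -/
noncomputable def block (Q : Set ℕ) (N : ℕ) : Finset ℕ := (Finset.Ico N (2 * N)).filter (· ∈ Q)

lemma mem_block {Q : Set ℕ} {N q : ℕ} : q ∈ block Q N ↔ (N ≤ q ∧ q < 2 * N) ∧ q ∈ Q := by
  simp [block]

/-- A reduced fraction of level `N` within `r/2` of `y` is a node whose ball lies in the ball of radius
`r` about `y`, provided `N` is large in terms of `r`. -/
lemma isNode_of_mem_reducedBox {n : ℕ} (hn : 1 ≤ n) {Q : Set ℕ} {τ r : ℝ} (hτ : 0 ≤ τ) {N : ℕ}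
    (hN : 0 < N) (hr : 0 ≤ r) (hsm : (N : ℝ) ^ (-τ) ≤ r / 2) {w : (Fin n → ℤ) × ℕ} {y : Fin n → ℝ}
    (hq : w.2 ∈ block Q N) (hp : w.1 ∈ reducedBox n w.2 y (r / 2)) :
    IsNode n Q N w ∧ ‖center n τ w - y‖ + rad τ N ≤ r := by
  obtain ⟨⟨hq1, hq2⟩, hq3⟩ := mem_block.mp hq
  rw [mem_reducedBox (by omega) (by linarith)] at hp
  have hnd : IsNode n Q N w := ⟨hq3, hq1, hq2, hp.1⟩
  refine ⟨hnd, ?_⟩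
  have h3 := hnd.rad_le hτ
  have hN0 : (0 : ℝ) < N := by exact_mod_cast hN
  have hw0 : (0 : ℝ) < w.2 := by exact_mod_cast hnd.pos
  have h4 : (w.2 : ℝ) ^ (-τ) ≤ (N : ℝ) ^ (-τ) :=
    Real.rpow_le_rpow_of_nonpos hN0 (by exact_mod_cast hq1) (by linarith)
  have h6 : ‖center n τ w - y‖ ≤ r / 2 + 3 / 4 * (w.2 : ℝ) ^ (-τ) := by
    have e : center n τ w - y = (ratPt n w.1 w.2 - y) + fun _ => 3 / 4 * (w.2 : ℝ) ^ (-τ) := by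
      unfold center; abel
    rw [e]
    refine (norm_add_le _ _).trans ?_
    rw [norm_const n hn _ (by positivity)]
    linarith [hp.2]
  linarith

open Classical in
/-- The inductive step of the Cantor construction. The number `M` of children depends on the levels `N`
and `N'` only, not on the centre `y` of the parent ball, and the children are evenly distributed in
the parent ball at all scales between the two radii. -/
lemma exists_children {n : ℕ} (hn : 1 ≤ n) (Q : Set ℕ) (τ t σ ε β : ℝ) (hτ : 2 < τ) (ht : 0 < t)
    (htn : t ≤ n) (hσ1 : σ ≤ 1) (hβ : 1 < β) (hβ2 : β < n * (τ - 2)) (hε : 0 < ε)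
    (hε1 : (n + β) / (τ - 1) + 2 * n * ε < n) (hε2 : 2 * ε < 1)
    (h1 : (2 - σ) * t + (2 * n + 1) * ε < n) (h2 : τ * t + (n + 1) * ε < n + σ) :
    ∀ᶠ N : ℕ in atTop, ∀ᶠ N' : ℕ in atTop, (N' : ℝ) ^ σ ≤ (block Q N').card →
      ∃ M : ℕ, 1 ≤ rad τ N' ^ t * M ∧ ∀ y : Fin n → ℝ, ∃ S : Finset ((Fin n → ℤ) × ℕ),
        S.card = M ∧
        (∀ w ∈ S, IsNode n Q N' w ∧ Avoids n τ N N' w.1 w.2 ∧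
          ‖center n τ w - y‖ + rad τ N' ≤ rad τ N) ∧
        ∀ (z : Fin n → ℝ) (ρ : ℝ), rad τ N' ≤ ρ → ρ ≤ rad τ N →
          ((S.filter (fun w => ‖center n τ w - z‖ ≤ 2 * ρ)).card : ℝ) ≤
            (2 * 32 ^ n + 2) * (ρ / rad τ N) ^ t * M := by
  filter_upwards [card_avoids_ge n hn τ β ε hτ hβ hβ2 hε hε1 hε2, eventually_gt_atTop 0]
    with N hav hN
  have hr := rad_pos τ hN
  have hr8 := rad_le τ (by linarith) hN
  set r := rad τ N with hrdef
  filter_upwards [hav, eventually_mass n τ t σ ε r hτ ht htn hσ1 hr (by linarith) h1 hε h2,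
    eventually_sieveError_le ε hε, eventually_mul_rpow_le (2 / r) (-τ) 0 (by linarith),
    eventually_mul_rpow_le 32 (-τ) (-2) (by linarith), eventually_gt_atTop 0]
    with N' hav' hmass hE hsm hsep hN' hK
  have hN0 : (0 : ℝ) < N' := by exact_mod_cast hN'
  have hr' := rad_pos τ hN'
  have hsm' : (N' : ℝ) ^ (-τ) ≤ r / 2 := by
    rw [Real.rpow_zero, div_mul_eq_mul_div, div_le_one hr] at hsm
    linarith
  -- `m q` children with denominator `q` are kept, a number that does not depend on the parent
  obtain ⟨m, hmge, hmle⟩ : ∃ m : ℕ → ℕ,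
      (∀ q, 1 / 2 * (coprimeDensity q * N' * r / 2) ^ n ≤ (m q : ℝ)) ∧
      ∀ q k : ℕ, 1 / 2 * (coprimeDensity q * N' * r / 2) ^ n ≤ (k : ℝ) → m q ≤ k :=
    ⟨fun q => ⌈1 / 2 * (coprimeDensity q * N' * r / 2) ^ n⌉₊, fun q => Nat.le_ceil _,
      fun q k h => Nat.ceil_le.mpr h⟩
  have hth : ∀ q ∈ block Q N', (N' : ℝ) ^ (-ε) ≤ coprimeDensity q := by
    intro q hq
    rw [mem_block] at hq
    refine le_trans ?_ (inv_error_le_density q)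
    rw [Real.rpow_neg hN0.le]
    have := one_le_sieveError q
    exact inv_anti₀ (by linarith) (hE q hq.1.1 hq.1.2)
  obtain ⟨M, hM⟩ : ∃ M : ℕ, M = ∑ q ∈ block Q N', m q := ⟨_, rfl⟩
  have hMge : ((block Q N').card : ℝ) * (1 / 2 * ((N' : ℝ) ^ (1 - ε) * r / 2) ^ n) ≤ M := by
    have hc : ((block Q N').card : ℝ) * (1 / 2 * ((N' : ℝ) ^ (1 - ε) * r / 2) ^ n) =
        ∑ _q ∈ block Q N', (1 / 2 * ((N' : ℝ) ^ (1 - ε) * r / 2) ^ n) := by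
      rw [Finset.sum_const, nsmul_eq_mul]
    rw [hc, hM, Nat.cast_sum]
    refine Finset.sum_le_sum fun q hq => le_trans ?_ (hmge q)
    have : (N' : ℝ) ^ (1 - ε) = (N' : ℝ) ^ (-ε) * N' := by
      rw [sub_eq_neg_add, Real.rpow_add hN0, Real.rpow_one]
    rw [this]
    have := hth q hq
    gcongr
  obtain ⟨hone, hball⟩ := hmass _ _ hK hMge
  refine ⟨M, hone, fun y => ?_⟩
  have hex : ∀ q, ∃ S : Finset (Fin n → ℤ), q ∈ block Q N' →
      S ⊆ (reducedBox n q y (r / 2)).filter (Avoids n τ N N' · q) ∧ S.card = m q := by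
    intro q
    by_cases hq : q ∈ block Q N'
    · have hq' := mem_block.mp hq
      obtain ⟨S, hS⟩ := Finset.exists_subset_card_eq (hmle q _ (hav' q hq'.1.1 hq'.1.2 y))
      exact ⟨S, fun _ => hS⟩
    · exact ⟨∅, fun h => absurd h hq⟩
  choose S hS using hex
  obtain ⟨T, hTcard, hprop⟩ : ∃ T : Finset ((Fin n → ℤ) × ℕ), T.card = M ∧
      ∀ w ∈ T, w.2 ∈ block Q N' ∧ w.1 ∈ S w.2 := by
    refine ⟨(block Q N').biUnion (fun q => S q ×ˢ {q}), ?_, fun w hw => ?_⟩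
    · rw [hM, Finset.card_biUnion]
      · refine Finset.sum_congr rfl fun q hq => ?_
        rw [Finset.card_product, Finset.card_singleton, mul_one, (hS q hq).2]
      · intro q _ q' _ hne
        simp only [Function.onFun]
        rw [Finset.disjoint_left]
        intro w hw hw'
        simp only [Finset.mem_product, Finset.mem_singleton] at hw hw'
        exact hne (hw.2.symm.trans hw'.2)
    · simp only [Finset.mem_biUnion, Finset.mem_product, Finset.mem_singleton] at hw
      obtain ⟨q, hq, hw1, rfl⟩ := hw
      exact ⟨hq, hw1⟩
  have hnode : ∀ w ∈ T, IsNode n Q N' w ∧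
      Avoids n τ N N' w.1 w.2 ∧ ‖center n τ w - y‖ + rad τ N' ≤ r := by
    intro w hw
    obtain ⟨hq, hw1⟩ := hprop w hw
    have hw2 := Finset.mem_filter.mp ((hS w.2 hq).1 hw1)
    obtain ⟨h3, h4⟩ := isNode_of_mem_reducedBox hn (by linarith) hN' hr.le hsm' hq hw2.1
    exact ⟨h3, hw2.2, h4⟩
  refine ⟨T, hTcard, hnode, ?_⟩
  · intro z ρ hρ1 hρ2
    have hρ0 : 0 < ρ := by linarith
    refine hball _ ρ hρ1 hρ2 ?_ ?_
    · refine (card_nodes_large_scale τ (block Q N') (fun q hq => ?_) _ z ρ hρ0.le ?_).trans ?_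
      · have := (mem_block.mp hq).1; omega
      · intro v hv
        rw [Finset.mem_filter] at hv
        exact ⟨(hprop v hv.1).1, (hnode v hv.1).1.coprime, hv.2⟩
      · calc _ ≤ ∑ q ∈ block Q N', (2 * 32 ^ n * (ρ / r) ^ n * (m q : ℝ)
              + 2 ^ n * (N' : ℝ) ^ (ε * n)) := by
              refine Finset.sum_le_sum fun q hq => ?_
              obtain ⟨⟨hq1, hq2⟩, -⟩ := mem_block.mp hq
              have hθ := coprimeDensity_pos q
              have hE1 := one_le_sieveError q
              have hq2' : (q : ℝ) ≤ 2 * N' := by exact_mod_cast hq2.le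
              calc _ ≤ (16 * (ρ / r) * (coprimeDensity q * N' * r / 2) + (N' : ℝ) ^ ε) ^ n := by
                    have e : 16 * (ρ / r) * (coprimeDensity q * N' * r / 2)
                      = 4 * coprimeDensity q * (2 * N') * ρ := by field_simp; ring
                    rw [e]
                    have := hE q hq1 hq2
                    gcongr
                _ ≤ 2 ^ n * ((16 * (ρ / r) * (coprimeDensity q * N' * r / 2)) ^ n
                    + ((N' : ℝ) ^ ε) ^ n) := add_pow_le_two_pow _ _ (by positivity) (by positivity) n
                _ = 2 * 32 ^ n * (ρ / r) ^ n * (1 / 2 * (coprimeDensity q * N' * r / 2) ^ n)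
                    + 2 ^ n * (N' : ℝ) ^ (ε * n) := by
                    rw [rpow_pow_nat _ hN0.le, mul_pow, mul_pow,
                      show (32 : ℝ) = 2 * 16 by norm_num, mul_pow 2 16]
                    ring
                _ ≤ _ := by gcongr; exact hmge q
          _ = _ := by
              rw [Finset.sum_add_distrib, ← Finset.mul_sum, Finset.sum_const, nsmul_eq_mul, hM]
              push_cast
              ring
    · intro hsmall
      refine card_nodes_small_scale hn (Q := Q) (τ := τ) (by linarith) hsep _ z ρ hρ0.le hsmall ?_
      intro v hv
      rw [Finset.mem_filter] at hv
      exact ⟨(hnode v hv.1).1, hv.2⟩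

/-! ### Mass distribution on Cantor sets -/

open Classical in
/-- The uniform measure of a set of branches that agree with `ω₀` before level `k` and have at most
`I.card` continuations at level `k`. -/
lemma infinitePi_cylinder_le (M : ℕ → ℕ) [∀ k, NeZero (M k)] (ω₀ : ∀ k, Fin (M k)) (k : ℕ)
    (I : Finset (Fin (M k))) (B : Set (∀ k, Fin (M k)))
    (hB : ∀ ω ∈ B, (∀ j < k, ω j = ω₀ j) ∧ ω k ∈ I) :
    Measure.infinitePi (fun k => (PMF.uniformOfFintype (Fin (M k))).toMeasure) B ≤
      ENNReal.ofReal ((∏ j ∈ Finset.range k, (M j : ℝ)⁻¹) * (I.card / M k)) := by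
  have hM : ∀ k, (0 : ℝ) < M k := fun k => by exact_mod_cast Nat.pos_of_neZero (M k)
  set T : ∀ j, Set (Fin (M j)) := Function.update (fun j => {ω₀ j}) k (I : Set (Fin (M k))) with hT
  have hsub : B ⊆ Set.pi (Finset.range (k + 1) : Finset ℕ) T := by
    intro ω hω j hj
    have hj' : j < k + 1 := by simpa using hj
    rcases Nat.lt_succ_iff_lt_or_eq.mp hj' with h | rfl
    · rw [hT, Function.update_of_ne h.ne]
      exact (hB ω hω).1 j h
    · rw [hT, Function.update_self]
      exact (hB ω hω).2
  refine (measure_mono hsub).trans ?_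
  rw [Measure.infinitePi_pi _ (fun i _ => Set.Finite.measurableSet (Set.toFinite _)),
    Finset.prod_range_succ, ENNReal.ofReal_mul (Finset.prod_nonneg fun j _ => by positivity),
    ENNReal.ofReal_prod_of_nonneg (fun j _ => by positivity)]
  refine mul_le_mul' (le_of_eq (Finset.prod_congr rfl fun j hj => ?_)) (le_of_eq ?_)
  · rw [hT, Function.update_of_ne (Finset.mem_range.mp hj).ne,
      PMF.toMeasure_uniformOfFintype_apply _ (Set.Finite.measurableSet (Set.toFinite _)),
      ENNReal.ofReal_inv_of_pos (hM j)]
    simp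
  · rw [hT, Function.update_self,
      PMF.toMeasure_uniformOfFintype_apply _ (Set.Finite.measurableSet (Set.toFinite _)),
      ENNReal.ofReal_div_of_pos (hM k)]
    simp

/-- The mass distribution principle, for the image under `f` of a probability measure `P`. Neither `f`
nor the sets `A` need be measurable, since only the countable subadditivity of the outer measure
`P` is used. -/
lemma le_dimH_of_mass {Ω X : Type*} [MeasurableSpace Ω] (P : Measure Ω) [IsProbabilityMeasure P]
    [MetricSpace X] (f : Ω → X) (E : Set X) (hf : ∀ ω, f ω ∈ E) (t C r₀ : ℝ) (ht : 0 < t)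
    (hC : 0 < C) (hr₀ : 0 < r₀)
    (h : ∀ (A : Set X) (ρ : ℝ), 0 < ρ → ρ < r₀ → (∀ x ∈ A, ∀ y ∈ A, dist x y ≤ ρ) →
      P (f ⁻¹' A) ≤ ENNReal.ofReal (C * ρ ^ t)) :
    ENNReal.ofReal t ≤ dimH E := by
  borelize X
  -- the estimate in terms of the diameter, including sets of diameter zero
  have hdiam : ∀ A : Set X, Metric.ediam A ≤ ENNReal.ofReal (r₀ / 2) →
      P (f ⁻¹' A) ≤ ENNReal.ofReal C * Metric.ediam A ^ t := by
    intro A hA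
    have hfin : Metric.ediam A ≠ ⊤ := (hA.trans_lt ENNReal.ofReal_lt_top).ne
    have hdist : ∀ x ∈ A, ∀ y ∈ A, dist x y ≤ (Metric.ediam A).toReal := by
      intro x hx y hy
      rw [dist_edist]
      exact ENNReal.toReal_mono hfin (Metric.edist_le_ediam_of_mem hx hy)
    have hd0 : 0 ≤ (Metric.ediam A).toReal := ENNReal.toReal_nonneg
    have hd1 : (Metric.ediam A).toReal ≤ r₀ / 2 := ENNReal.toReal_le_of_le_ofReal (by positivity) hA
    set d := (Metric.ediam A).toReal with hd
    have hlim : Tendsto (fun ρ : ℝ => ENNReal.ofReal (C * ρ ^ t)) (nhdsWithin d (Set.Ioi d))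
        (nhds (ENNReal.ofReal (C * d ^ t))) := by
      refine tendsto_nhdsWithin_of_tendsto_nhds (ENNReal.tendsto_ofReal ?_)
      exact ((Real.continuousAt_rpow_const _ _ (Or.inr ht.le)).const_mul C)
    have hle : P (f ⁻¹' A) ≤ ENNReal.ofReal (C * d ^ t) := by
      refine ge_of_tendsto hlim ?_
      filter_upwards [Ioo_mem_nhdsGT (show d < r₀ by linarith)] with ρ hρ
      exact h A ρ (by linarith [hρ.1]) hρ.2 fun x hx y hy => (hdist x hx y hy).trans hρ.1.le
    refine hle.trans (le_of_eq ?_)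
    rw [ENNReal.ofReal_mul hC.le, ← ENNReal.ofReal_rpow_of_nonneg hd0 ht.le, hd,
      ENNReal.ofReal_toReal hfin]
  have hmain : (ENNReal.ofReal C)⁻¹ ≤ Measure.hausdorffMeasure t E := by
    rw [Measure.hausdorffMeasure_apply]
    refine le_iSup₂_of_le (ENNReal.ofReal (r₀ / 2)) (ENNReal.ofReal_pos.mpr (by positivity)) ?_
    refine le_iInf fun A => le_iInf fun hcov => le_iInf fun hA => ?_
    rw [ENNReal.inv_le_iff_le_mul (by simp [hC]) (by simp)]
    calc (1 : ℝ≥0∞) = P (f ⁻¹' (⋃ i, A i)) := by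
          have : f ⁻¹' (⋃ i, A i) = Set.univ := Set.eq_univ_of_forall fun ω => hcov (hf ω)
          rw [this, measure_univ]
      _ ≤ ∑' i, P (f ⁻¹' A i) := by rw [Set.preimage_iUnion]; exact measure_iUnion_le _
      _ ≤ ∑' i, ENNReal.ofReal C * ⨆ _ : (A i).Nonempty, Metric.ediam (A i) ^ t := by
          refine ENNReal.tsum_le_tsum fun i => ?_
          rcases (A i).eq_empty_or_nonempty with he | he
          · simp [he]
          · simpa [he] using hdiam _ (hA i)
      _ = _ := by rw [ENNReal.tsum_mul_left]
  have hne : Measure.hausdorffMeasure ((t.toNNReal : NNReal) : ℝ) E ≠ 0 := by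
    rw [Real.coe_toNNReal t ht.le]
    exact (lt_of_lt_of_le (ENNReal.inv_pos.mpr ENNReal.ofReal_ne_top) hmain).ne'
  exact le_dimH_of_hausdorffMeasure_ne_zero hne

open Classical in
/-- Dimension of a Cantor set with `M k` children for each node of level `k`. A branch is a sequence
`ω`, its node of level `k` has centre `c k ω` and radius `r k`, and `f ω` is its limit point. The
bound holds if `M k ≥ r (k + 1) ^ (-t)` and the children of a node of radius `r k` with centre in a
ball of radius `2ρ` make up a proportion at most `C (ρ / r k) ^ t`, for `r (k + 1) ≤ ρ ≤ r k`. -/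
lemma le_dimH_of_cantor {X : Type*} [MetricSpace X] (M : ℕ → ℕ) [∀ k, NeZero (M k)] (r : ℕ → ℝ)
    (c : ℕ → (∀ k, Fin (M k)) → X) (f : (∀ k, Fin (M k)) → X) (E : Set X) (t C : ℝ) (ht : 0 < t)
    (hC : 0 < C) (hr0 : ∀ k, 0 < r k) (hrlim : Tendsto r atTop (nhds 0))
    (hdep : ∀ k ω ω', (∀ j < k, ω j = ω' j) → c k ω = c k ω')
    (hf : ∀ ω k, dist (f ω) (c k ω) ≤ r k) (hfE : ∀ ω, f ω ∈ E)
    (hsep : ∀ k ω ω', dist (c k ω) (c k ω') ≤ 3 * r k → ∀ j < k, ω j = ω' j)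
    (hmass : ∀ k, 1 ≤ r (k + 1) ^ t * M k)
    (hcount : ∀ k ω z ρ, r (k + 1) ≤ ρ → ρ ≤ r k →
      ((Finset.univ.filter (fun i : Fin (M k) =>
        dist (c (k + 1) (Function.update ω k i)) z ≤ 2 * ρ)).card : ℝ) ≤ C * (ρ / r k) ^ t * M k) :
    ENNReal.ofReal t ≤ dimH E := by
  have hM : ∀ k, (1 : ℝ) ≤ M k := fun k => by exact_mod_cast Nat.pos_of_neZero (M k)
  have hr0t : 0 < r 0 ^ t := Real.rpow_pos_of_pos (hr0 0) t
  obtain ⟨D, hD0, hD⟩ : ∃ D : ℝ, 0 < D ∧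
      ∀ k, ∏ j ∈ Finset.range k, (M j : ℝ)⁻¹ ≤ D * r k ^ t := by
    refine ⟨max 1 (r 0 ^ t)⁻¹, by positivity, fun k => ?_⟩
    rcases k with _ | k
    · rw [Finset.prod_range_zero, ← inv_mul_cancel₀ hr0t.ne']
      gcongr
      exact le_max_right _ _
    · have hrk : 0 < r (k + 1) ^ t := Real.rpow_pos_of_pos (hr0 _) t
      have h1 : ∏ j ∈ Finset.range k, (M j : ℝ)⁻¹ ≤ 1 :=
        Finset.prod_le_one (fun j _ => by positivity) fun j _ => inv_le_one_of_one_le₀ (hM j)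
      have h2 : (M k : ℝ)⁻¹ ≤ r (k + 1) ^ t := by
        rw [inv_le_iff_one_le_mul₀ (by linarith [hM k])]
        exact hmass k
      rw [Finset.prod_range_succ]
      calc _ ≤ 1 * r (k + 1) ^ t := by
            have := hM k
            gcongr
        _ ≤ _ := by gcongr; exact le_max_left _ _
  refine le_dimH_of_mass
    (Measure.infinitePi (fun k => (PMF.uniformOfFintype (Fin (M k))).toMeasure)) f E hfE t (D * C)
    (r 0) ht (by positivity) (hr0 0) fun A ρ hρ0 hρr hA => ?_
  have hex : ∃ k, r (k + 1) ≤ ρ := by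
    have := (tendsto_add_atTop_iff_nat 1).mpr hrlim
    exact (this.eventually (eventually_le_nhds hρ0)).exists
  obtain ⟨k, hk1, hk2⟩ : ∃ k, r (k + 1) ≤ ρ ∧ ρ < r k := by
    refine ⟨Nat.find hex, Nat.find_spec hex, ?_⟩
    rcases hk : Nat.find hex with _ | k
    · exact hρr
    · exact not_le.mp (Nat.find_min hex (m := k) (by omega))
  rcases (f ⁻¹' A).eq_empty_or_nonempty with he | ⟨ω₀, hω₀⟩
  · simp [he]
  have hpre : ∀ ω ∈ f ⁻¹' A, (∀ j < k, ω j = ω₀ j) ∧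
      ω k ∈ Finset.univ.filter (fun i : Fin (M k) =>
        dist (c (k + 1) (Function.update ω₀ k i)) (f ω₀) ≤ 2 * ρ) := by
    intro ω hω
    have hd : dist (f ω) (f ω₀) ≤ ρ := hA _ hω _ hω₀
    have hagree : ∀ j < k, ω j = ω₀ j := by
      refine hsep k ω ω₀ ?_
      have h1 := hf ω k
      have h2 := hf ω₀ k
      have h3 := dist_triangle4 (c k ω) (f ω) (f ω₀) (c k ω₀)
      rw [dist_comm (c k ω) (f ω)] at h3
      linarith
    refine ⟨hagree, ?_⟩
    rw [Finset.mem_filter]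
    refine ⟨Finset.mem_univ _, ?_⟩
    have he : c (k + 1) (Function.update ω₀ k (ω k)) = c (k + 1) ω := by
      refine hdep _ _ _ fun j hj => ?_
      rcases Nat.lt_succ_iff_lt_or_eq.mp hj with h | rfl
      · rw [Function.update_of_ne h.ne, hagree j h]
      · rw [Function.update_self]
    rw [he]
    have h1 := hf ω (k + 1)
    have h3 := dist_triangle (c (k + 1) ω) (f ω) (f ω₀)
    rw [dist_comm (c (k + 1) ω) (f ω)] at h3
    linarith
  refine (infinitePi_cylinder_le M ω₀ k _ _ hpre).trans (ENNReal.ofReal_le_ofReal ?_)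
  have hMk := hM k
  have hrk : 0 < r k ^ t := Real.rpow_pos_of_pos (hr0 _) t
  calc _ ≤ (D * r k ^ t) * (C * (ρ / r k) ^ t * M k / M k) := by
        gcongr
        · exact hD k
        · exact hcount k ω₀ (f ω₀) ρ hk1 hk2.le
    _ = D * C * ρ ^ t := by
        rw [Real.div_rpow hρ0.le (hr0 k).le]
        field_simp

/-! ### Points of nested node balls lie in the liminf set -/

/-- A point in the balls of nodes of rapidly growing levels, each avoiding the gap denominators of the
previous level, lies in `W*`: a denominator outside `Q` that approximates it is at most `N 0`. -/
lemma mem_WStar_of_nodes {n : ℕ} (hn : 1 ≤ n) {Q : Set ℕ} {τ : ℝ} (hτ : 2 < τ) (N : ℕ → ℕ)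
    (v : ℕ → (Fin n → ℤ) × ℕ) (hv : ∀ k, IsNode n Q (N k) (v k))
    (hav : ∀ k, Avoids n τ (N k) (N (k + 1)) (v (k + 1)).1 (v (k + 1)).2)
    (hbig : ∀ k, 4 * (N k : ℝ) ≤ (N k : ℝ) ^ (τ - 1)) (hgrow : ∀ k, 2 * N k ≤ N (k + 1))
    (x : Fin n → ℝ) (hx : ∀ k, ‖x - center n τ (v k)‖ ≤ rad τ (N k)) : x ∈ WStar n τ Q := by
  have hmono : StrictMono (fun k => (v k).2) := strictMono_nat_of_lt_succ fun k =>
    ((hv k).lt.trans_le (hgrow k)).trans_le (hv (k + 1)).le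
  refine ⟨Set.infinite_of_injective_forall_mem (f := v) ?_ ?_, ?_⟩
  · intro a b hab
    exact hmono.injective (congrArg Prod.snd hab)
  · intro k
    exact ⟨(hv k).mem, ((hv k).annulus hn (by linarith) (hx k)).2⟩
  have hsmall : ∀ (q' : ℕ) (k : ℕ), (q' : ℝ) ^ (τ - 1) ≤ 4 * N k → q' ≤ N k := by
    intro q' k h
    by_contra! hlt
    have h1 : (N k : ℝ) ^ (τ - 1) < (q' : ℝ) ^ (τ - 1) :=
      Real.rpow_lt_rpow (by positivity) (by exact_mod_cast hlt) (by linarith)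
    linarith [hbig k]
  have hNmono : StrictMono N := strictMono_nat_of_lt_succ fun k => by
    have h1 := (hv k).lt
    have h2 := (hv k).le
    have h3 := hgrow k
    omega
  have hden : ∀ pq ∈ approxPairs n τ ({q | 0 < q} \ Q) x, pq.2 ≤ N 0 := by
    rintro ⟨p', q'⟩ ⟨⟨hq0, hqQ⟩, hap⟩
    change 0 < q' at hq0
    change q' ∉ Q at hqQ
    change ‖x - ratPt n p' q'‖ < (q' : ℝ) ^ (-τ) at hap
    by_contra! hlt
    change N 0 < q' at hlt
    have h0 : ¬ (q' : ℝ) ^ (τ - 1) ≤ 4 * N 0 := fun h => absurd (hsmall q' 0 h) (by omega)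
    have hex : ∃ k, (q' : ℝ) ^ (τ - 1) ≤ 4 * N k := by
      obtain ⟨k, hk⟩ := exists_nat_ge ((q' : ℝ) ^ (τ - 1))
      refine ⟨k, hk.trans ?_⟩
      have : (k : ℝ) ≤ N k := by exact_mod_cast hNmono.le_apply
      have : (0 : ℝ) ≤ N k := by positivity
      linarith
    -- `q'` lies either in the window of level `k` or in the gap between levels `k` and `k + 1`
    obtain ⟨k, hk1, hk2⟩ : ∃ k, (q' : ℝ) ^ (τ - 1) ≤ 4 * N (k + 1) ∧
        ¬ (q' : ℝ) ^ (τ - 1) ≤ 4 * N k := by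
      rcases hk : Nat.find hex with _ | k
      · exact absurd (hk ▸ Nat.find_spec hex) h0
      · exact ⟨k, hk ▸ Nat.find_spec hex, Nat.find_min hex (by omega)⟩
    rcases le_total (2 * (q' : ℝ)) ((N k : ℝ) ^ (τ - 1)) with hc | hc
    · exact hqQ ((hv k).eq_of_approx hn hτ (hx k) hq0 (not_le.mp hk2).le hc hap ▸ (hv k).mem)
    · exact (hv (k + 1)).not_approx_of_avoids hn hτ (hav k) (hx (k + 1)) hq0
        (hsmall q' (k + 1) hk1) hc hk1 hap
  set B : ℤ := ⌈(N 0 : ℝ) * (‖x‖ + 1)⌉ with hB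
  refine ((Set.finite_Icc (fun _ : Fin n => -B) (fun _ => B)).prod (Set.finite_Iic (N 0))).subset ?_
  intro pq hpq
  have hq := hden pq hpq
  obtain ⟨⟨hq0, -⟩, hap⟩ := hpq
  change 0 < pq.2 at hq0
  have hq1 : (1 : ℝ) ≤ pq.2 := by exact_mod_cast hq0
  have hqN : (pq.2 : ℝ) ≤ N 0 := by exact_mod_cast hq
  have hp : ∀ i, |pq.1 i| ≤ B := by
    intro i
    have h1 : |x i - (pq.1 i : ℝ) / pq.2| ≤ 1 := by
      refine ((norm_le_pi_norm (x - fun i => (pq.1 i : ℝ) / pq.2) i).trans hap.le).trans ?_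
      exact Real.rpow_le_one_of_one_le_of_nonpos hq1 (by linarith)
    have h2 : |x i| ≤ ‖x‖ := norm_le_pi_norm x i
    have h3 : |(pq.1 i : ℝ) / pq.2| ≤ ‖x‖ + 1 := by
      rw [abs_le] at *
      constructor <;> linarith [h1.1, h1.2, h2.1, h2.2]
    rw [abs_div, abs_of_pos (by linarith : (0 : ℝ) < pq.2), div_le_iff₀ (by linarith)] at h3
    have h4 : |(pq.1 i : ℝ)| ≤ (N 0 : ℝ) * (‖x‖ + 1) := by
      refine h3.trans ?_
      rw [mul_comm]; gcongr
    have h5 : ((|pq.1 i| : ℤ) : ℝ) ≤ B := by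
      push_cast
      exact h4.trans (Int.le_ceil _)
    exact_mod_cast h5
  exact ⟨⟨fun i => (abs_le.mp (hp i)).1, fun i => (abs_le.mp (hp i)).2⟩, hq⟩

/-- Dependent choice for a relation `R` on the naturals satisfying `G`. -/
lemma exists_seq_of_step {G : ℕ → Prop} {R : ℕ → ℕ → Prop} (h0 : ∃ a, G a)
    (h : ∀ a, G a → ∃ b, G b ∧ R a b) :
    ∃ N : ℕ → ℕ, (∀ k, G (N k)) ∧ ∀ k, R (N k) (N (k + 1)) := by
  obtain ⟨a, ha⟩ := h0
  choose! next hnext using h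
  have hG : ∀ k, G (Nat.rec a (fun _ => next) k) := fun k => by
    induction k with
    | zero => exact ha
    | succ k ih => exact (hnext _ ih).1
  exact ⟨fun k => Nat.rec a (fun _ => next) k, hG, fun k => (hnext _ (hG k)).2⟩

/-- The nodes along the branch `ω` of the tree with root `v₀`, where `ch k v` enumerates the children
of a node `v` of level `k`. -/
def nodeSeq {α : Type*} {M : ℕ → ℕ} (v₀ : α) (ch : ∀ k, α → Fin (M k) → α)
    (ω : ∀ k, Fin (M k)) : ℕ → α
  | 0 => v₀
  | k + 1 => ch k (nodeSeq v₀ ch ω k) (ω k)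

lemma nodeSeq_congr {α : Type*} {M : ℕ → ℕ} (v₀ : α) (ch : ∀ k, α → Fin (M k) → α)
    {ω ω' : ∀ k, Fin (M k)} : ∀ k, (∀ j < k, ω j = ω' j) → nodeSeq v₀ ch ω k = nodeSeq v₀ ch ω' k
  | 0, _ => rfl
  | k + 1, h => by
    rw [nodeSeq, nodeSeq, nodeSeq_congr v₀ ch k fun j hj => h j (by omega), h k (by omega)]

/-! ### The Cantor set inside the liminf set -/

lemma three_rad_lt {τ : ℝ} (hτ : 0 ≤ τ) {N : ℕ} (hN : 0 < N)
    (h : 32 * (N : ℝ) ^ (-τ) ≤ (N : ℝ) ^ (-2 : ℝ)) : 3 * rad τ N < (N : ℝ) ^ (-2 : ℝ) / 8 := by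
  have hN0 : (0 : ℝ) < N := by exact_mod_cast hN
  have h1 : (2 * N : ℝ) ^ (-τ) ≤ (N : ℝ) ^ (-τ) :=
    Real.rpow_le_rpow_of_nonpos hN0 (by linarith) (by linarith)
  have h2 : 0 < (N : ℝ) ^ (-2 : ℝ) := by positivity
  unfold rad
  linarith

/-- Nested closed balls in `ℝⁿ` have a common point. -/
lemma exists_mem_closedBalls {n : ℕ} (c : ℕ → Fin n → ℝ) (r : ℕ → ℝ) (hr : ∀ k, 0 < r k)
    (h : ∀ k, ‖c (k + 1) - c k‖ + r (k + 1) ≤ r k) : ∃ x, ∀ k, ‖x - c k‖ ≤ r k := by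
  obtain ⟨x, hx⟩ := IsCompact.nonempty_iInter_of_sequence_nonempty_isCompact_isClosed
    (fun k => Metric.closedBall (c k) (r k))
    (fun k => Metric.closedBall_subset_closedBall' (by rw [dist_eq_norm]; linarith [h k]))
    (fun k => Metric.nonempty_closedBall.mpr (hr k).le) (isCompact_closedBall _ _)
    (fun k => Metric.isClosed_closedBall)
  exact ⟨x, fun k => by simpa [dist_eq_norm] using Set.mem_iInter.mp hx k⟩

open Classical in
/-- The bound `dim W* ≥ t` under the numerical conditions on `t` and the auxiliary exponents `σ`, `ε`,
`β`, provided `#(Q ∩ [N, 2N)) ≥ N ^ σ` infinitely often. -/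
lemma le_dimH_WStar {n : ℕ} (hn : 1 ≤ n) (Q : Set ℕ) (τ t σ ε β : ℝ) (hτ : 2 < τ) (ht : 0 < t)
    (htn : t ≤ n) (hσ1 : σ ≤ 1) (hβ : 1 < β) (hβ2 : β < n * (τ - 2)) (hε : 0 < ε)
    (hε1 : (n + β) / (τ - 1) + 2 * n * ε < n) (hε2 : 2 * ε < 1)
    (h1 : (2 - σ) * t + (2 * n + 1) * ε < n) (h2 : τ * t + (n + 1) * ε < n + σ)
    (hfreq : ∃ᶠ N : ℕ in atTop, (N : ℝ) ^ σ ≤ (block Q N).card) :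
    ENNReal.ofReal t ≤ dimH (WStar n τ Q) := by
  have hstep := exists_children hn Q τ t σ ε β hτ ht htn hσ1 hβ hβ2 hε hε1 hε2 h1 h2
  have hgood : ∀ᶠ N : ℕ in atTop, 0 < N ∧ 32 * (N : ℝ) ^ (-τ) ≤ (N : ℝ) ^ (-2 : ℝ) ∧
      4 * (N : ℝ) ^ (1 : ℝ) ≤ (N : ℝ) ^ (τ - 1) :=
    (eventually_gt_atTop 0).and ((eventually_mul_rpow_le 32 (-τ) (-2) (by linarith)).and
      (eventually_mul_rpow_le 4 1 (τ - 1) (by linarith)))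
  obtain ⟨N, hG, hR⟩ := exists_seq_of_step
    (hfreq.and_eventually (hgood.and hstep)).exists
    (R := fun a b => 2 * a ≤ b ∧ _) (by
      rintro a ⟨-, -, ha⟩
      obtain ⟨b, ⟨hb1, hb2⟩, hb3, hb4⟩ := ((hfreq.and_eventually (hgood.and hstep)).and_eventually
        (ha.and (eventually_ge_atTop (2 * a)))).exists
      exact ⟨b, ⟨hb1, hb2⟩, hb4, hb3 hb1⟩)
  choose hgrow M hmass S hScard hSnode hScount using hR
  have hN0 : ∀ k, 0 < N k := fun k => (hG k).2.1.1
  have hsep := fun k => (hG k).2.1.2.1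
  have hbig : ∀ k, 4 * (N k : ℝ) ≤ (N k : ℝ) ^ (τ - 1) := fun k => by
    simpa using (hG k).2.1.2.2
  have hr0 : ∀ k, 0 < rad τ (N k) := fun k => rad_pos τ (hN0 k)
  have : ∀ k, NeZero (M k) := fun k => ⟨fun h => by
    have := hmass k
    rw [h] at this
    norm_num at this⟩
  -- the root of the tree is `(1, …, 1) / q₀` for any denominator `q₀` of the lowest level
  obtain ⟨q₀, hq₀⟩ : (block Q (N 0)).Nonempty := by
    rw [← Finset.card_pos]
    have h3 : (0 : ℝ) < (N 0 : ℝ) ^ σ := Real.rpow_pos_of_pos (by exact_mod_cast hN0 0) _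
    exact_mod_cast h3.trans_le (hG 0).1
  have hroot : IsNode n Q (N 0) (fun _ => 1, q₀) := by
    obtain ⟨⟨ha, hb⟩, hc⟩ := mem_block.mp hq₀
    exact ⟨hc, ha, hb, fun _ => isCoprime_one_left⟩
  let ch : ∀ k, (Fin n → ℤ) × ℕ → Fin (M k) → (Fin n → ℤ) × ℕ := fun k v i =>
    ((S k (center n τ v)).equivFinOfCardEq (hScard k _)).symm i
  have hchmem : ∀ k v i, ch k v i ∈ S k (center n τ v) := fun k v i => Subtype.coe_prop _
  have hchinj : ∀ k v, Function.Injective (ch k v) := fun k v =>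
    Subtype.val_injective.comp (Equiv.injective _)
  let nd : (∀ k, Fin (M k)) → ℕ → (Fin n → ℤ) × ℕ := nodeSeq (fun _ => 1, q₀) ch
  have hnd : ∀ ω k, IsNode n Q (N k) (nd ω k) := by
    rintro ω (_ | k)
    · exact hroot
    · exact (hSnode k _ _ (hchmem k _ _)).1
  have hndav : ∀ ω k, Avoids n τ (N k) (N (k + 1)) (nd ω (k + 1)).1 (nd ω (k + 1)).2 :=
    fun ω k => (hSnode k _ _ (hchmem k _ _)).2.1
  have hnest : ∀ ω k, ‖center n τ (nd ω (k + 1)) - center n τ (nd ω k)‖ + rad τ (N (k + 1)) ≤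
      rad τ (N k) := fun ω k => (hSnode k _ _ (hchmem k _ _)).2.2
  choose f hf using fun ω => exists_mem_closedBalls (fun k => center n τ (nd ω k))
    (fun k => rad τ (N k)) hr0 (hnest ω)
  have hNtop : Tendsto N atTop atTop := by
    refine (strictMono_nat_of_lt_succ fun k => ?_).tendsto_atTop
    have := hgrow k
    have := hN0 k
    omega
  have hrlim : Tendsto (fun k => rad τ (N k)) atTop (nhds 0) := by
    have h3 : Tendsto (fun k => 2 * (N k : ℝ)) atTop atTop :=
      (tendsto_natCast_atTop_atTop.comp hNtop).const_mul_atTop (by norm_num)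
    have h4 := ((tendsto_rpow_neg_atTop (show 0 < τ by linarith)).comp h3).div_const 8
    simpa [rad] using h4
  -- nodes of one level are separated by more than three radii, so close nodes coincide
  have hpar : ∀ k ω ω', ‖center n τ (nd ω k) - center n τ (nd ω' k)‖ ≤ 3 * rad τ (N k) →
      nd ω k = nd ω' k := by
    intro k ω ω' hle
    by_contra hne
    have h3 := (hnd ω k).separated hn (hnd ω' k) hne (show 0 ≤ τ by linarith) (hsep k)
    have h4 := three_rad_lt (show 0 ≤ τ by linarith) (hN0 k) (hsep k)
    linarith
  have hagree : ∀ k ω ω', ‖center n τ (nd ω k) - center n τ (nd ω' k)‖ ≤ 3 * rad τ (N k) →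
      ∀ j < k, ω j = ω' j := by
    intro k
    induction k with
    | zero => intro _ _ _ j hj; omega
    | succ k ih =>
      intro ω ω' hle j hj
      have heq := hpar (k + 1) ω ω' hle
      have h3 := hnest ω k
      have h4 := hnest ω' k
      rw [← heq] at h4
      have h5 : ‖center n τ (nd ω k) - center n τ (nd ω' k)‖ ≤ 3 * rad τ (N k) := by
        have h6 := norm_sub_le_norm_sub_add_norm_sub (center n τ (nd ω k))
          (center n τ (nd ω (k + 1))) (center n τ (nd ω' k))
        rw [norm_sub_rev (center n τ (nd ω k)) (center n τ (nd ω (k + 1)))] at h6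
        linarith [hr0 k, hr0 (k + 1)]
      have h6 := ih ω ω' h5
      rcases Nat.lt_succ_iff_lt_or_eq.mp hj with h | rfl
      · exact h6 j h
      · have h7 := hpar j ω ω' h5
        have h8 : ch j (nd ω j) (ω j) = ch j (nd ω' j) (ω' j) := heq
        rw [← h7] at h8
        exact hchinj j _ h8
  refine le_dimH_of_cantor M (fun k => rad τ (N k)) (fun k ω => center n τ (nd ω k)) f _ t
    (2 * 32 ^ n + 2) ht (by positivity) hr0 hrlim ?_ ?_ ?_ ?_ hmass ?_
  · intro k ω ω' h
    exact congrArg _ (nodeSeq_congr _ ch k h)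
  · intro ω k
    rw [dist_eq_norm]; exact hf ω k
  · intro ω
    exact mem_WStar_of_nodes hn hτ N (nd ω) (hnd ω) (hndav ω) hbig hgrow (f ω) (hf ω)
  · intro k ω ω' h
    rw [dist_eq_norm] at h
    exact hagree k ω ω' h
  · intro k ω z ρ hρ1 hρ2
    refine le_trans ?_ (hScount k (center n τ (nd ω k)) z ρ hρ1 hρ2)
    have hcard : (Finset.univ.filter (fun i : Fin (M k) =>
        dist (center n τ (nd (Function.update ω k i) (k + 1))) z ≤ 2 * ρ)).card ≤
        ((S k (center n τ (nd ω k))).filter (fun w => ‖center n τ w - z‖ ≤ 2 * ρ)).card := by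
      refine Finset.card_le_card_of_injOn (ch k (nd ω k)) ?_ (hchinj k _).injOn
      intro i hi
      have hi' := (Finset.mem_filter.mp (Finset.mem_coe.mp hi)).2
      rw [Finset.mem_coe, Finset.mem_filter]
      refine ⟨hchmem k _ i, ?_⟩
      have he : nd (Function.update ω k i) (k + 1) = ch k (nd ω k) i := by
        change ch k (nodeSeq _ ch (Function.update ω k i) k) (Function.update ω k i k) = _
        rw [Function.update_self, nodeSeq_congr (ω' := ω) _ ch k fun j hj =>
          Function.update_of_ne hj.ne _ _]
      rw [he, dist_eq_norm] at hi'
      exact hi'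
    exact_mod_cast hcard

/-! ### The exponent of convergence and the dimension bound -/

/-- The case `σ = 0` of the lower bound on dyadic blocks of `Q`, valid for every infinite `Q`. -/
lemma frequently_block_nonempty {Q : Set ℕ} (hQ : Q.Infinite) :
    ∃ᶠ N : ℕ in atTop, (N : ℝ) ^ (0 : ℝ) ≤ (block Q N).card := by
  rw [Filter.frequently_atTop]
  intro a
  obtain ⟨q, hq, haq⟩ := hQ.exists_gt a
  refine ⟨q, haq.le, ?_⟩
  have : 0 < (block Q q).card := Finset.card_pos.mpr ⟨q, mem_block.mpr ⟨⟨le_rfl, by omega⟩, hq⟩⟩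
  rw [Real.rpow_zero]
  exact_mod_cast this

/-- A nonnegative series converges if its dyadic blocks are bounded by a convergent series. -/
lemma summable_of_dyadic (g a : ℕ → ℝ) (hg : ∀ q, 0 ≤ g q) (ha0 : ∀ k, 0 ≤ a k) (ha : Summable a)
    (h : ∀ k, ∑ q ∈ Finset.Ico (2 ^ k) (2 ^ (k + 1)), g q ≤ a k) : Summable g := by
  have hdy : ∀ m, ∑ q ∈ Finset.range (2 ^ m), g q ≤ g 0 + ∑ k ∈ Finset.range m, a k := by
    intro m
    induction m with
    | zero => simp
    | succ m ih =>
      rw [Finset.sum_range_succ, ← Finset.sum_range_add_sum_Ico g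
        (Nat.pow_le_pow_right (by norm_num : 0 < 2) (Nat.le_succ m))]
      linarith [h m]
  refine summable_of_sum_range_le (c := g 0 + ∑' k, a k) hg fun m => ?_
  calc ∑ q ∈ Finset.range m, g q ≤ ∑ q ∈ Finset.range (2 ^ m), g q :=
        Finset.sum_le_sum_of_subset_of_nonneg
          (Finset.range_mono Nat.lt_two_pow_self.le) fun q _ _ => hg q
    _ ≤ _ := hdy m
    _ ≤ _ := by gcongr; exact ha.sum_le_tsum _ fun k _ => ha0 k

/-- If `s < ν(Q)`, then `Q` has at least `N ^ s` elements in `[N, 2N)` for arbitrarily large `N`;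
otherwise `∑ q^{-ν}` would converge for some `ν < ν(Q)`, by comparison of its dyadic blocks with a
geometric series. -/
lemma frequently_block_card {Q : Set ℕ} {s : ℝ} (hs0 : 0 ≤ s) (hs : s < expConv Q) :
    ∃ᶠ N : ℕ in atTop, (N : ℝ) ^ s ≤ (block Q N).card := by
  by_contra hcon
  rw [Filter.not_frequently] at hcon
  set ν := (s + expConv Q) / 2 with hν
  have hsν : s < ν := by rw [hν]; linarith
  have hνe : ν < expConv Q := by rw [hν]; linarith
  suffices hsum : Summable (fun q : Q => ((q : ℕ) : ℝ) ^ (-ν)) by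
    have : expConv Q ≤ ν := csInf_le ⟨0, fun x hx => hx.1.le⟩ ⟨by linarith, hsum⟩
    linarith
  change Summable ((fun q : ℕ => (q : ℝ) ^ (-ν)) ∘ ((↑) : Q → ℕ))
  rw [summable_subtype_iff_indicator]
  have h2 : ∀ k : ℕ, (0 : ℝ) < 2 ^ k := fun k => by positivity
  refine summable_of_dyadic _ (fun k => ((block Q (2 ^ k)).card : ℝ) * (2 ^ k : ℝ) ^ (-ν))
    (fun q => Set.indicator_nonneg (fun q _ => by positivity) q) (fun k => by positivity) ?_ ?_
  · have hgeo : Summable (fun k : ℕ => ((2 : ℝ) ^ (s - ν)) ^ k) :=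
      summable_geometric_of_lt_one (by positivity)
        (Real.rpow_lt_one_of_one_lt_of_neg (by norm_num) (by linarith))
    refine hgeo.of_norm_bounded_eventually_nat ?_
    have htop : Tendsto (fun k : ℕ => 2 ^ k) atTop (atTop : Filter ℕ) :=
      tendsto_pow_atTop_atTop_of_one_lt (by norm_num)
    filter_upwards [htop.eventually hcon] with k hk
    rw [not_le] at hk
    push_cast at hk
    rw [Real.norm_of_nonneg (by positivity)]
    calc _ ≤ ((2 : ℝ) ^ k) ^ s * ((2 : ℝ) ^ k) ^ (-ν) := by gcongr
      _ = _ := by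
        rw [← Real.rpow_add (h2 k), ← Real.rpow_natCast, ← Real.rpow_natCast,
          ← Real.rpow_mul (by norm_num), ← Real.rpow_mul (by norm_num)]
        congr 1; ring
  · intro k
    have hsub : ∑ q ∈ Finset.Ico (2 ^ k) (2 ^ (k + 1)), Q.indicator (fun q : ℕ => (q : ℝ) ^ (-ν)) q
        = ∑ q ∈ block Q (2 ^ k), (q : ℝ) ^ (-ν) := by
      classical
      rw [block, Finset.sum_filter, pow_succ' 2 k]
      refine Finset.sum_congr (by rfl) fun q _ => ?_
      rw [Set.indicator_apply]
    rw [hsub, ← nsmul_eq_mul]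
    refine Finset.sum_le_card_nsmul _ _ _ fun q hq => ?_
    have hq1 : ((2 : ℝ) ^ k) ≤ q := by exact_mod_cast (mem_block.mp hq).1.1
    exact Real.rpow_le_rpow_of_nonpos (h2 k) hq1 (by linarith)

/-- The exponent `s` is at most `1`, because `[N, 2N)` contains only `N` integers. -/
lemma le_one_of_frequently_block {Q : Set ℕ} {s : ℝ}
    (h : ∃ᶠ N : ℕ in atTop, (N : ℝ) ^ s ≤ (block Q N).card) : s ≤ 1 := by
  obtain ⟨N, hN, hN2⟩ := (h.and_eventually (eventually_ge_atTop 2)).exists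
  by_contra! hs
  have h1 : (N : ℝ) ^ (1 : ℝ) < (N : ℝ) ^ s :=
    Real.rpow_lt_rpow_of_exponent_lt (by exact_mod_cast (by omega : 1 < N)) hs
  have h2 : (block Q N).card ≤ N := by
    have h4 : block Q N ⊆ Finset.Ico N (2 * N) := fun q hq =>
      Finset.mem_Ico.mpr (mem_block.mp hq).1
    have h5 := Finset.card_le_card h4
    rw [Nat.card_Ico] at h5
    omega
  have h3 : ((block Q N).card : ℝ) ≤ N := by exact_mod_cast h2
  rw [Real.rpow_one] at h1
  linarith

lemma expConv_nonneg (Q : Set ℕ) : 0 ≤ expConv Q := Real.sInf_nonneg fun _ hx => hx.1.le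

lemma le_dimH_WStar_of_lt {n : ℕ} (hn : 1 ≤ n) {Q : Set ℕ} (hQ : Q.Infinite) {τ t : ℝ}
    (hτ : 2 + 1 / (n : ℝ) < τ) (ht : 0 < t) (htτ : t < (n + expConv Q) / τ) :
    ENNReal.ofReal t ≤ dimH (WStar n τ Q) := by
  have hn1 : (1 : ℝ) ≤ n := by exact_mod_cast hn
  have hτ2 : 2 < τ := by
    have : 0 < 1 / (n : ℝ) := by positivity
    linarith
  have hnτ : 1 < n * (τ - 2) := by
    have h : 1 / (n : ℝ) < τ - 2 := by linarith
    rwa [div_lt_iff₀' (by linarith)] at h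
  rw [lt_div_iff₀ (by linarith)] at htτ
  obtain ⟨σ, hσ0, hσt, hfreq⟩ : ∃ σ : ℝ, 0 ≤ σ ∧ t * τ < n + σ ∧
      ∃ᶠ N : ℕ in atTop, (N : ℝ) ^ σ ≤ (block Q N).card := by
    rcases lt_or_ge (t * τ) n with h | h
    · exact ⟨0, le_rfl, by linarith, frequently_block_nonempty hQ⟩
    · exact ⟨(t * τ - n + expConv Q) / 2, by linarith [expConv_nonneg Q], by linarith,
        frequently_block_card (by linarith [expConv_nonneg Q]) (by linarith)⟩
  have hσ1 := le_one_of_frequently_block hfreq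
  have htn : t < n := by
    by_contra! h
    nlinarith
  have h2t : (2 - σ) * t < n := by
    have e1 : (2 - σ) * (t * τ) ≤ (2 - σ) * (n + σ) := by
      have : 0 ≤ 2 - σ := by linarith
      gcongr
    have e2 : (2 - σ) * (n + σ) < n * τ := by nlinarith
    have e3 : ((2 - σ) * t) * τ < n * τ := by linarith
    exact lt_of_mul_lt_mul_right e3 (by linarith)
  -- `τ > 2 + 1/n` leaves room for `β` strictly between `1` and `n (τ - 2)`
  set β : ℝ := (1 + n * (τ - 2)) / 2 with hβ
  have hβ1 : 1 < β := by rw [hβ]; linarith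
  have hβ2 : β < n * (τ - 2) := by rw [hβ]; linarith
  have hβ3 : (n + β) / (τ - 1) < n := by
    rw [div_lt_iff₀ (by linarith)]; linarith
  have hlin : ∀ a b c : ℝ, a < c → ∀ᶠ ε in nhdsWithin (0 : ℝ) (Set.Ioi 0), a + b * ε < c := by
    intro a b c hac
    have : Tendsto (fun ε : ℝ => a + b * ε) (nhds 0) (nhds (a + b * 0)) :=
      (Continuous.tendsto (by fun_prop) 0)
    rw [mul_zero, add_zero] at this
    exact tendsto_nhdsWithin_of_tendsto_nhds this |>.eventually_lt_const hac
  -- all remaining conditions are strict at `ε = 0`, so a small `ε > 0` meets them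
  obtain ⟨ε, ⟨⟨⟨e1, e2⟩, e3⟩, e4⟩, e5⟩ := ((((hlin _ (2 * n) _ hβ3).and
    (hlin 0 2 1 one_pos)).and (hlin _ (2 * n + 1) _ h2t)).and
    (hlin (τ * t) (n + 1) (n + σ) (by linarith))).and self_mem_nhdsWithin |>.exists
  exact le_dimH_WStar hn Q τ t σ ε β hτ2 ht htn.le hσ1 hβ1 hβ2 e5 e1 (by linarith) e3 e4 hfreq

theorem dimH_WStar_ge (Q : Set ℕ) (hQpos : ∀ q ∈ Q, 0 < q) (hQinf : Q.Infinite)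
    (n : ℕ) (hn : 1 ≤ n) (τ : ℝ) (hτ : 2 + 1 / (n : ℝ) < τ) :
    ENNReal.ofReal ((n + expConv Q) / τ) ≤ dimH (WStar n τ Q) ∧
    (WStar n τ Q).Nonempty := by
  have hn1 : (1 : ℝ) ≤ n := by exact_mod_cast hn
  have hτ0 : 0 < τ := by
    have : 0 < 1 / (n : ℝ) := by positivity
    linarith
  have hpos : 0 < (n + expConv Q) / τ := div_pos (by linarith [expConv_nonneg Q]) hτ0
  have hdim : ENNReal.ofReal ((n + expConv Q) / τ) ≤ dimH (WStar n τ Q) := by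
    have hlim : Tendsto ENNReal.ofReal
        (nhdsWithin ((n + expConv Q) / τ) (Set.Iio ((n + expConv Q) / τ)))
        (nhds (ENNReal.ofReal ((n + expConv Q) / τ))) :=
      tendsto_nhdsWithin_of_tendsto_nhds ENNReal.continuous_ofReal.continuousAt
    refine le_of_tendsto hlim ?_
    filter_upwards [Ioo_mem_nhdsLT hpos] with t ht
    exact le_dimH_WStar_of_lt hn hQinf hτ ht.1 ht.2
  refine ⟨hdim, ?_⟩
  by_contra hemp
  rw [Set.not_nonempty_iff_eq_empty] at hemp
  rw [hemp, dimH_empty] at hdim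
  exact absurd (ENNReal.ofReal_pos.mpr hpos) (not_lt.mpr hdim)
end

section
/- For every infinite set S of positive integers, ν(S) = limsup_{n→∞} log(δ_{2n}(S) − δ_n(S)) / log n, where the limsup is taken with the convention that terms with δ_{2n}(S) − δ_n(S) = 0 are interpreted as −∞ (equivalently, the limsup is taken along those n for which δ_{2n}(S) > δ_n(S)). -/
/-!
Write `D n = #(S ∩ (n, 2n])`, which equals `δ_{2n}(S) - δ_n(S)`. Both inequalities compare `D` with
a power of `n`.

If `∑_{q ∈ S} q^{-ν}` converges with sum `C`, then the block `(n, 2n]` alone contributes at least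
`D n * (2n)^{-ν}`, so `D n ≤ C (2n)^ν`, and this is eventually at most `n^c` for every `c > ν`.
Hence the limsup is at most `ν(S)` (`limsup_le_expConv`).

Conversely, if the limsup is less than `c`, then `D n ≤ M n^c` for all `n ≥ 1`. Cutting the sum at
the powers of two, the block `(2^k, 2^{k+1}]` contributes at most `M (2^{c-ν})^k`, so for `ν > c`
the partial sums are bounded by a geometric series and `ν(S) ≤ ν` (`summable_of_block_bound`). That
`c` is automatically positive comes from `S` being infinite: infinitely many terms of the limsup
are nonnegative.
-/

open Filter
open scoped ENNReal

/-- `δ_n(S) = #(S ∩ {1, …, n})`. -/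
noncomputable def deltaCount (S : Set ℕ) (n : ℕ) : ℕ :=
  (S ∩ Set.Icc 1 n).ncard

open Classical in
/-- The number of elements of `S` in the dyadic block `(n, 2n]`. -/
noncomputable def blockCount (S : Set ℕ) (n : ℕ) : ℕ :=
  ((Finset.Ioc n (2 * n)).filter (· ∈ S)).card

lemma deltaCount_two_mul (S : Set ℕ) (n : ℕ) :
    deltaCount S (2 * n) = deltaCount S n + blockCount S n := by
  classical
  have h : ∀ m, deltaCount S m = ((Finset.Ioc 0 m).filter (· ∈ S)).card := by
    intro m
    rw [deltaCount, ← Set.ncard_coe_finset]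
    congr 1
    ext q
    simp only [Set.mem_inter_iff, Set.mem_Icc, Finset.coe_filter, Finset.mem_Ioc,
      Set.mem_ofPred_eq, Nat.lt_iff_add_one_le, zero_add]
    tauto
  rw [h, h, blockCount, ← Finset.Ioc_union_Ioc_eq_Ioc (Nat.zero_le n) (by omega : n ≤ 2 * n),
    Finset.filter_union, Finset.card_union_of_disjoint]
  rw [Finset.disjoint_left]
  intro q h1 h2
  simp only [Finset.mem_filter, Finset.mem_Ioc] at h1 h2
  omega

lemma blockCount_le (S : Set ℕ) (n : ℕ) : blockCount S n ≤ n := by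
  classical
  refine (Finset.card_filter_le _ _).trans ?_
  simp
  omega

/-- The sequence in the theorem, rewritten in terms of `blockCount`. -/
lemma term_eq (S : Set ℕ) :
    (fun n : ℕ =>
      if deltaCount S (2 * n) = deltaCount S n then (⊥ : EReal)
      else ((Real.log ((deltaCount S (2 * n) : ℝ) - (deltaCount S n : ℝ)) /
        Real.log n : ℝ) : EReal)) =
    fun n : ℕ => if blockCount S n = 0 then (⊥ : EReal)
      else ((Real.log (blockCount S n) / Real.log n : ℝ) : EReal) := by
  funext n
  rw [deltaCount_two_mul]
  simp

/-- A convergent series bounds each of its blocks `(n, 2n]` from above. -/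
lemma blockCount_le_of_summable {S : Set ℕ} {ν : ℝ} (hν : 0 < ν)
    (hs : Summable (fun q : S => ((q : ℕ) : ℝ) ^ (-ν))) :
    ∃ C : ℝ, 0 < C ∧ ∀ n : ℕ, 0 < n → (blockCount S n : ℝ) ≤ C * (n : ℝ) ^ ν := by
  classical
  have hs' : Summable (S.indicator (fun q : ℕ => (q : ℝ) ^ (-ν))) :=
    summable_subtype_iff_indicator.mp hs
  have hnn : ∀ q, 0 ≤ S.indicator (fun q : ℕ => (q : ℝ) ^ (-ν)) q := fun q =>
    Set.indicator_nonneg (fun q _ => by positivity) q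
  set T := ∑' q, S.indicator (fun q : ℕ => (q : ℝ) ^ (-ν)) q with hT
  have hT0 : 0 ≤ T := tsum_nonneg hnn
  refine ⟨(T + 1) * 2 ^ ν, by positivity, fun n hn => ?_⟩
  have hn' : (0 : ℝ) < n := by exact_mod_cast hn
  have h1 : (blockCount S n : ℝ) * (2 * n : ℝ) ^ (-ν) ≤ T := by
    refine le_trans ?_ (hs'.sum_le_tsum ((Finset.Ioc n (2 * n)).filter (· ∈ S))
      (fun q _ => hnn q))
    rw [blockCount, ← nsmul_eq_mul]
    refine Finset.card_nsmul_le_sum _ _ _ fun q hq => ?_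
    simp only [Finset.mem_filter, Finset.mem_Ioc] at hq
    rw [Set.indicator_of_mem hq.2]
    have hq0 : (0 : ℝ) < q := by exact_mod_cast (by omega : 0 < q)
    have hq2 : (q : ℝ) ≤ 2 * n := by exact_mod_cast hq.1.2
    exact Real.rpow_le_rpow_of_nonpos hq0 hq2 (by linarith)
  rw [Real.rpow_neg (by positivity), ← div_eq_mul_inv, div_le_iff₀ (by positivity),
    Real.mul_rpow (by norm_num) hn'.le] at h1
  have : 0 ≤ (2 : ℝ) ^ ν * (n : ℝ) ^ ν := by positivity
  nlinarith

lemma term_le {D n : ℕ} {c : ℝ} (hn : 1 < n) (h : (D : ℝ) ≤ (n : ℝ) ^ c) :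
    (if D = 0 then (⊥ : EReal) else ((Real.log D / Real.log n : ℝ) : EReal)) ≤ c := by
  split_ifs with h0
  · exact bot_le
  · have hn' : (1 : ℝ) < n := by exact_mod_cast hn
    have hD : (0 : ℝ) < D := by exact_mod_cast Nat.pos_of_ne_zero h0
    rw [EReal.coe_le_coe_iff, div_le_iff₀ (Real.log_pos hn'), ← Real.log_rpow (by linarith)]
    exact Real.log_le_log hD h

lemma le_of_term_lt {D n : ℕ} {c : ℝ} (hn : 1 < n)
    (h : (if D = 0 then (⊥ : EReal) else ((Real.log D / Real.log n : ℝ) : EReal)) < c) :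
    (D : ℝ) ≤ (n : ℝ) ^ c := by
  split_ifs at h with h0
  · rw [h0, Nat.cast_zero]
    positivity
  · have hn' : (1 : ℝ) < n := by exact_mod_cast hn
    have hD : (0 : ℝ) < D := by exact_mod_cast Nat.pos_of_ne_zero h0
    rw [EReal.coe_lt_coe_iff, div_lt_iff₀ (Real.log_pos hn'), ← Real.log_rpow (by linarith)] at h
    exact ((Real.log_lt_log_iff hD (by positivity)).mp h).le

lemma expConv_set_bddBelow (S : Set ℕ) :
    BddBelow {ν : ℝ | 0 < ν ∧ Summable (fun q : S => ((q : ℕ) : ℝ) ^ (-ν))} :=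
  ⟨0, fun _ h => h.1.le⟩

lemma expConv_set_nonempty (S : Set ℕ) :
    {ν : ℝ | 0 < ν ∧ Summable (fun q : S => ((q : ℕ) : ℝ) ^ (-ν))}.Nonempty := by
  refine ⟨2, by norm_num, ?_⟩
  have : Summable (fun q : ℕ => (q : ℝ) ^ (-2 : ℝ)) := Real.summable_nat_rpow.mpr (by norm_num)
  exact this.subtype S

lemma limsup_le_expConv (S : Set ℕ) :
    limsup (fun n : ℕ => if blockCount S n = 0 then (⊥ : EReal)
      else ((Real.log (blockCount S n) / Real.log n : ℝ) : EReal)) atTop ≤ expConv S := by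
  refine EReal.le_of_forall_lt_iff_le.mp fun c hc => ?_
  rw [EReal.coe_lt_coe_iff] at hc
  obtain ⟨ν, ⟨hν, hs⟩, hνc⟩ := exists_lt_of_csInf_lt (expConv_set_nonempty S) hc
  obtain ⟨C, hC, hb⟩ := blockCount_le_of_summable hν hs
  refine limsup_le_of_le (by isBoundedDefault) ?_
  have ht : Tendsto (fun n : ℕ => (n : ℝ) ^ (c - ν)) atTop atTop :=
    (tendsto_rpow_atTop (by linarith)).comp tendsto_natCast_atTop_atTop
  filter_upwards [ht.eventually_ge_atTop C, eventually_gt_atTop 1] with n h1 h2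
  refine term_le h2 ((hb n (by omega)).trans ?_)
  have hn : (0 : ℝ) < n := by exact_mod_cast (by omega : 0 < n)
  calc C * (n : ℝ) ^ ν ≤ (n : ℝ) ^ (c - ν) * (n : ℝ) ^ ν := by gcongr
    _ = (n : ℝ) ^ c := by rw [← Real.rpow_add hn]; simp

/-- Summation over dyadic blocks: a bound `D n ≤ M n^c` gives convergence beyond the exponent
`c`. -/
lemma summable_of_block_bound {S : Set ℕ} {c ν M : ℝ} (hν : 0 < ν) (hcν : c < ν) (hM : 0 ≤ M)
    (hb : ∀ n : ℕ, 0 < n → (blockCount S n : ℝ) ≤ M * (n : ℝ) ^ c) :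
    Summable (fun q : S => ((q : ℕ) : ℝ) ^ (-ν)) := by
  classical
  refine (summable_subtype_iff_indicator (f := fun q : ℕ => (q : ℝ) ^ (-ν))).mpr ?_
  set f := S.indicator (fun q : ℕ => (q : ℝ) ^ (-ν)) with hf
  have hnn : ∀ q, 0 ≤ f q := fun q => Set.indicator_nonneg (fun q _ => by positivity) q
  set r : ℝ := 2 ^ (c - ν) with hr
  have hr0 : 0 ≤ r := by positivity
  have hr1 : r < 1 := Real.rpow_lt_one_of_one_lt_of_neg (by norm_num) (by linarith)
  have hblock : ∀ k : ℕ, ∑ q ∈ Finset.Ioc (2 ^ k) (2 * 2 ^ k), f q ≤ M * r ^ k := by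
    intro k
    have hk : (0 : ℝ) < 2 ^ k := by positivity
    calc ∑ q ∈ Finset.Ioc (2 ^ k) (2 * 2 ^ k), f q
        = ∑ q ∈ (Finset.Ioc (2 ^ k) (2 * 2 ^ k)).filter (· ∈ S), (q : ℝ) ^ (-ν) := by
          rw [Finset.sum_filter]
          exact Finset.sum_congr rfl fun q _ => by rw [hf, Set.indicator_apply]
      _ ≤ blockCount S (2 ^ k) • ((2 : ℝ) ^ k) ^ (-ν) := by
          refine Finset.sum_le_card_nsmul _ _ _ fun q hq => ?_
          simp only [Finset.mem_filter, Finset.mem_Ioc] at hq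
          have : ((2 : ℝ) ^ k) ≤ q := by exact_mod_cast hq.1.1.le
          exact Real.rpow_le_rpow_of_nonpos hk this (by linarith)
      _ ≤ (M * ((2 : ℝ) ^ k) ^ c) * ((2 : ℝ) ^ k) ^ (-ν) := by
          rw [nsmul_eq_mul]
          have := hb (2 ^ k) (by positivity)
          push_cast at this
          gcongr
      _ = M * r ^ k := by
          rw [mul_assoc, ← Real.rpow_add hk, hr, ← Real.rpow_natCast, ← Real.rpow_natCast,
            ← Real.rpow_mul (by norm_num), ← Real.rpow_mul (by norm_num)]
          congr 2
          ring
  have hpart : ∀ k : ℕ, ∑ q ∈ Finset.range (2 ^ k + 1), f q ≤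
      (f 0 + f 1) + ∑ j ∈ Finset.range k, M * r ^ j := by
    intro k
    induction k with
    | zero => simp [Finset.sum_range_succ]
    | succ k ih =>
      rw [Finset.sum_range_succ _ k]
      have hsplit : ∑ q ∈ Finset.range (2 ^ (k + 1) + 1), f q =
          ∑ q ∈ Finset.range (2 ^ k + 1), f q + ∑ q ∈ Finset.Ioc (2 ^ k) (2 * 2 ^ k), f q := by
        rw [← Finset.sum_range_add_sum_Ico f (by rw [pow_succ]; omega : 2 ^ k + 1 ≤ 2 ^ (k + 1) + 1)]
        congr 1
        refine Finset.sum_congr ?_ fun _ _ => rfl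
        ext q
        simp only [Finset.mem_Ico, Finset.mem_Ioc, pow_succ]
        omega
      rw [hsplit]
      linarith [hblock k]
  have hg : Summable fun j : ℕ => M * r ^ j := (summable_geometric_of_lt_one hr0 hr1).mul_left M
  refine summable_of_sum_range_le (c := (f 0 + f 1) + ∑' j : ℕ, M * r ^ j) hnn fun n => ?_
  calc ∑ q ∈ Finset.range n, f q ≤ ∑ q ∈ Finset.range (2 ^ n + 1), f q :=
        Finset.sum_le_sum_of_subset_of_nonneg
          (Finset.range_subset_range.mpr (Nat.lt_two_pow_self.le.trans (Nat.le_succ _)))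
          fun q _ _ => hnn q
    _ ≤ _ := hpart n
    _ ≤ _ := by
        gcongr
        exact hg.sum_le_tsum _ fun j _ => by positivity

lemma frequently_blockCount_ne_zero {S : Set ℕ} (hSinf : S.Infinite) :
    ∃ᶠ n in atTop, blockCount S n ≠ 0 := by
  classical
  rw [frequently_atTop]
  intro N
  obtain ⟨q, hq, hqN⟩ := hSinf.exists_gt (N + 1)
  -- `q` lies in the block `(q - 1, 2(q - 1)]`, since `q ≥ 2`.
  refine ⟨q - 1, by omega, ?_⟩
  rw [blockCount, Finset.card_ne_zero]
  exact ⟨q, by simp only [Finset.mem_filter, Finset.mem_Ioc]; exact ⟨by omega, hq⟩⟩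

lemma expConv_le_limsup {S : Set ℕ} (hSinf : S.Infinite) :
    (expConv S : EReal) ≤ limsup (fun n : ℕ => if blockCount S n = 0 then (⊥ : EReal)
      else ((Real.log (blockCount S n) / Real.log n : ℝ) : EReal)) atTop := by
  refine EReal.le_of_forall_lt_iff_le.mp fun c hc => ?_
  have hev := eventually_lt_of_limsup_lt hc (by isBoundedDefault)
  have hc0 : 0 < c := by
    obtain ⟨n, hn0, hn⟩ := ((frequently_blockCount_ne_zero hSinf).and_eventually hev).exists
    rw [if_neg hn0, EReal.coe_lt_coe_iff] at hn
    exact lt_of_le_of_lt (div_nonneg (Real.log_natCast_nonneg _) (Real.log_natCast_nonneg _)) hn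
  obtain ⟨N, hN⟩ := eventually_atTop.mp (hev.and (eventually_gt_atTop 1))
  -- For `n < N` the trivial bound `D n ≤ n` costs only the constant factor `N + 1`.
  have hb : ∀ n : ℕ, 0 < n → (blockCount S n : ℝ) ≤ (N + 1 : ℝ) * (n : ℝ) ^ c := by
    intro n hn
    have h1 : (1 : ℝ) ≤ (n : ℝ) ^ c := Real.one_le_rpow (by exact_mod_cast hn) hc0.le
    have hN0 : (0 : ℝ) ≤ N := Nat.cast_nonneg N
    rcases le_or_gt N n with h | h
    · have := le_of_term_lt (hN n h).2 (hN n h).1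
      nlinarith
    · have h2 : (blockCount S n : ℝ) ≤ N := by exact_mod_cast (blockCount_le S n).trans h.le
      nlinarith
  rw [EReal.coe_le_coe_iff]
  refine le_of_forall_gt_imp_ge_of_dense fun ν hν => ?_
  exact csInf_le (expConv_set_bddBelow S)
    ⟨hc0.trans hν, summable_of_block_bound (hc0.trans hν) hν (by positivity) hb⟩

theorem expConv_eq_limsup_log_delta (S : Set ℕ) (hSpos : ∀ q ∈ S, 0 < q)
    (hSinf : S.Infinite) :
    (expConv S : EReal) =
      Filter.limsup
        (fun n : ℕ =>
          if deltaCount S (2 * n) = deltaCount S n then (⊥ : EReal)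
          else ((Real.log ((deltaCount S (2 * n) : ℝ) - (deltaCount S n : ℝ)) /
            Real.log n : ℝ) : EReal))
        Filter.atTop := by
  rw [term_eq]
  exact le_antisymm (expConv_le_limsup hSinf) (limsup_le_expConv S)
end

section
/- Let S be an infinite set of positive integers with ν(S) > 0 and let ν ∈ (0, ν(S)). Let (α_n)_{n≥0} be a sequence of positive reals such that the sequence (n^ν α_n)_{n≥0} is increasing and log α_n / log n → 0 as n → ∞. Then there exists a subset S_ν ⊆ S such that: (i) for all n ≥ 1, δ_{2n}(S_ν) − δ_n(S_ν) ≤ n^ν α_n; and (ii) there exists a strictly increasing sequence of positive integers (n_k) with δ_{2n_k}(S_ν) − δ_{n_k}(S_ν) ∼ n_k^ν α_{n_k} as k → ∞. In particular, ν(S_ν) = ν. -/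
/-!
Write `f n = n ^ ν * α n`; the hypothesis on `α` says `f n = n ^ (ν + o(1))`. The set `Sν` is a
maximal subset of `S` satisfying the window bound `#(Sν ∩ (n, 2n]) ≤ f n` for all `n ≥ 1`; it
exists by Zorn's lemma because each window is finite.

A set obeying the window bound has a convergent series `∑ q ^ (-s)` for every `s > ν`, by summing
over dyadic blocks (`summable_of_window`). Hence `S \ Sν` is infinite, as otherwise `S` would have
exponent of convergence at most `ν`. By maximality every `q ∈ S \ Sν` lies in some window
`(m, 2m]` with `#(Sν ∩ (m, 2m]) + 1 > f m`, so there are infinitely many such `m`. Along these `m`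
the window count lies in `(f m - 1, f m]`, and since `f m → ∞` it is asymptotic to `f m`. The same
windows make `∑ q ^ (-s)` over `Sν` diverge for `s < ν`, whence `ν(Sν) = ν`.
-/

open Filter
open scoped ENNReal

open Classical in
/-- The number of elements of `T` in the window `(n, 2n]`. -/
noncomputable def windowCount (T : Set ℕ) (n : ℕ) : ℕ :=
  ((Finset.Ioc n (2 * n)).filter (· ∈ T)).card

lemma deltaCount_sub (T : Set ℕ) (n : ℕ) :
    (deltaCount T (2 * n) : ℝ) - (deltaCount T n : ℝ) = windowCount T n := by
  classical
  have key : ∀ m, deltaCount T m = ((Finset.Icc 1 m).filter (· ∈ T)).card := by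
    intro m
    rw [deltaCount, ← Set.ncard_coe_finset]
    congr 1
    ext x
    simp only [Set.mem_inter_iff, Set.mem_Icc, Finset.coe_filter, Finset.mem_Icc, Set.mem_ofPred_eq]
    tauto
  rw [sub_eq_iff_eq_add, key, key, windowCount, ← Nat.cast_add, Nat.cast_inj,
    ← Finset.card_union_of_disjoint]
  · congr 1
    ext x
    simp only [Finset.mem_union, Finset.mem_filter, Finset.mem_Icc, Finset.mem_Ioc]
    constructor
    · rintro ⟨⟨h1, h2⟩, h3⟩
      by_cases h : x ≤ n
      · exact Or.inr ⟨⟨h1, h⟩, h3⟩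
      · exact Or.inl ⟨⟨by omega, h2⟩, h3⟩
    · rintro (⟨⟨h1, h2⟩, h3⟩ | ⟨⟨h1, h2⟩, h3⟩)
      · exact ⟨⟨by omega, h2⟩, h3⟩
      · exact ⟨⟨h1, by omega⟩, h3⟩
  · rw [Finset.disjoint_left]
    intro x
    simp only [Finset.mem_filter, Finset.mem_Icc, Finset.mem_Ioc]
    omega

/-- `α n = n ^ o(1)`, in two-sided form. -/
lemma eventually_alpha_bounds {α : ℕ → ℝ} (hαpos : ∀ n, 0 < α n)
    (hαlog : Tendsto (fun n : ℕ => Real.log (α n) / Real.log n) atTop (nhds 0))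
    {ε : ℝ} (hε : 0 < ε) :
    ∀ᶠ n : ℕ in atTop, (n : ℝ) ^ (-ε) ≤ α n ∧ α n ≤ (n : ℝ) ^ ε := by
  have h := Metric.tendsto_nhds.1 hαlog ε hε
  filter_upwards [h, eventually_ge_atTop 2] with n hn h2
  have hn1 : (1 : ℝ) < n := by exact_mod_cast h2
  have hlog : 0 < Real.log n := Real.log_pos hn1
  rw [Real.dist_eq, sub_zero, abs_lt, lt_div_iff₀ hlog, div_lt_iff₀ hlog] at hn
  rw [Real.le_rpow_iff_log_le (hαpos n) (by linarith),
    Real.rpow_le_iff_le_log (by linarith) (hαpos n)]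
  exact ⟨hn.1.le, hn.2.le⟩

lemma eventually_rpow_le {ν : ℝ} {α : ℕ → ℝ} (hαpos : ∀ n, 0 < α n)
    (hαlog : Tendsto (fun n : ℕ => Real.log (α n) / Real.log n) atTop (nhds 0))
    {r : ℝ} (hr : r < ν) :
    ∀ᶠ n : ℕ in atTop, (n : ℝ) ^ r ≤ (n : ℝ) ^ ν * α n := by
  filter_upwards [eventually_alpha_bounds hαpos hαlog (sub_pos.2 hr), eventually_ge_atTop 1]
    with n hn h1
  have hn1 : (0 : ℝ) < n := by exact_mod_cast h1
  calc (n : ℝ) ^ r = (n : ℝ) ^ ν * (n : ℝ) ^ (-(ν - r)) := by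
        rw [← Real.rpow_add hn1]; ring_nf
    _ ≤ _ := by gcongr; exact hn.1

lemma eventually_le_rpow {ν : ℝ} {α : ℕ → ℝ} (hαpos : ∀ n, 0 < α n)
    (hαlog : Tendsto (fun n : ℕ => Real.log (α n) / Real.log n) atTop (nhds 0))
    {r : ℝ} (hr : ν < r) :
    ∀ᶠ n : ℕ in atTop, (n : ℝ) ^ ν * α n ≤ (n : ℝ) ^ r := by
  filter_upwards [eventually_alpha_bounds hαpos hαlog (sub_pos.2 hr), eventually_ge_atTop 1]
    with n hn h1
  have hn1 : (0 : ℝ) < n := by exact_mod_cast h1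
  calc (n : ℝ) ^ ν * α n ≤ (n : ℝ) ^ ν * (n : ℝ) ^ (r - ν) := by gcongr; exact hn.2
    _ = _ := by rw [← Real.rpow_add hn1]; ring_nf

/-- If the windows `(n, 2n]` contain eventually at most `n ^ r` elements of `T`, then `∑ q ^ (-s)`
over `T` converges for `s > r`: on the dyadic block `(2 ^ j, 2 ^ (j + 1)]` the terms are at most
`2 ^ (-j s)`. -/
lemma summable_of_window {f : ℕ → ℝ} {T : Set ℕ} {r s : ℝ} (hs : 0 < s) (hrs : r < s)
    (hf : ∀ᶠ n : ℕ in atTop, f n ≤ (n : ℝ) ^ r)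
    (hT : ∀ n, 1 ≤ n → (windowCount T n : ℝ) ≤ f n) :
    Summable (T.indicator fun q : ℕ => (q : ℝ) ^ (-s)) := by
  classical
  set g : ℕ → ℝ := T.indicator fun q : ℕ => (q : ℝ) ^ (-s) with hg
  have g0 : ∀ q, 0 ≤ g q := fun q => Set.indicator_nonneg (fun _ _ => by positivity) q
  set b : ℕ → ℝ := fun j => f (2 ^ j) * ((2 : ℝ) ^ j) ^ (-s) with hb
  have b0 : ∀ j, 0 ≤ b j := fun j =>
    mul_nonneg (le_trans (Nat.cast_nonneg _) (hT _ Nat.one_le_two_pow)) (by positivity)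
  have hbs : Summable b := by
    have hgeo : Summable fun j : ℕ => ((2 : ℝ) ^ (r - s)) ^ j :=
      summable_geometric_of_lt_one (by positivity)
        (Real.rpow_lt_one_of_one_lt_of_neg (by norm_num) (by linarith))
    refine Summable.of_norm_bounded_eventually_nat hgeo ?_
    have htend : Tendsto (fun j : ℕ => 2 ^ j) atTop atTop :=
      tendsto_pow_atTop_atTop_of_one_lt (by norm_num : (1 : ℕ) < 2)
    filter_upwards [htend.eventually hf] with j hj
    rw [Real.norm_of_nonneg (b0 j)]
    have h2 : (0 : ℝ) < 2 ^ j := by positivity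
    push_cast at hj
    calc b j ≤ ((2 : ℝ) ^ j) ^ r * ((2 : ℝ) ^ j) ^ (-s) := by
          simp only [hb]; gcongr
      _ = ((2 : ℝ) ^ j) ^ (r - s) := by rw [← Real.rpow_add h2]; ring_nf
      _ = _ := by
          rw [← Real.rpow_natCast, ← Real.rpow_natCast, ← Real.rpow_mul (by norm_num),
            ← Real.rpow_mul (by norm_num), mul_comm]
  have block : ∀ j : ℕ, ∑ q ∈ Finset.Ioc (2 ^ j) (2 * 2 ^ j), g q ≤ b j := by
    intro j
    have h2 : (0 : ℝ) < 2 ^ j := by positivity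
    calc ∑ q ∈ Finset.Ioc (2 ^ j) (2 * 2 ^ j), g q
        = ∑ q ∈ (Finset.Ioc (2 ^ j) (2 * 2 ^ j)).filter (· ∈ T), (q : ℝ) ^ (-s) := by
          rw [Finset.sum_filter]
          exact Finset.sum_congr rfl fun q _ => by simp [hg, Set.indicator_apply]
      _ ≤ ∑ q ∈ (Finset.Ioc (2 ^ j) (2 * 2 ^ j)).filter (· ∈ T), ((2 : ℝ) ^ j) ^ (-s) := by
          refine Finset.sum_le_sum fun q hq => ?_
          simp only [Finset.mem_filter, Finset.mem_Ioc] at hq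
          refine Real.rpow_le_rpow_of_nonpos h2 ?_ (by linarith)
          exact_mod_cast hq.1.1.le
      _ = (windowCount T (2 ^ j) : ℝ) * ((2 : ℝ) ^ j) ^ (-s) := by
          rw [Finset.sum_const, nsmul_eq_mul, windowCount]
      _ ≤ b j := by
          simp only [hb]
          gcongr
          exact hT _ Nat.one_le_two_pow
  have dyadic_le : ∀ J : ℕ, ∑ q ∈ Finset.range (2 ^ J + 1), g q ≤
      (g 0 + g 1) + ∑ j ∈ Finset.range J, b j := by
    intro J
    induction J with
    | zero => simp [Finset.sum_range_succ]
    | succ J ih =>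
      have hsplit : ∑ q ∈ Finset.range (2 ^ (J + 1) + 1), g q =
          ∑ q ∈ Finset.range (2 ^ J + 1), g q + ∑ q ∈ Finset.Ioc (2 ^ J) (2 * 2 ^ J), g q := by
        rw [← Finset.sum_union]
        · congr 1
          ext x
          simp only [Finset.mem_union, Finset.mem_range, Finset.mem_Ioc, pow_succ]
          omega
        · rw [Finset.disjoint_left]
          intro x
          simp only [Finset.mem_range, Finset.mem_Ioc]
          omega
      rw [hsplit, Finset.sum_range_succ b]
      linarith [block J]
  refine summable_of_sum_range_le (c := (g 0 + g 1) + ∑' j, b j) g0 fun n => ?_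
  have hn : n ≤ 2 ^ n + 1 := by have := n.lt_two_pow_self; omega
  calc ∑ q ∈ Finset.range n, g q ≤ ∑ q ∈ Finset.range (2 ^ n + 1), g q :=
        Finset.sum_le_sum_of_subset_of_nonneg (Finset.range_mono hn) fun q _ _ => g0 q
    _ ≤ _ := dyadic_le n
    _ ≤ _ := by gcongr; exact hbs.sum_le_tsum _ fun j _ => b0 j

lemma expConv_le {T : Set ℕ} {ν : ℝ} (hν : 0 < ν)
    (h : ∀ s, ν < s → Summable (T.indicator fun q : ℕ => (q : ℝ) ^ (-s))) :
    expConv T ≤ ν := by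
  refine le_of_forall_gt_imp_ge_of_dense fun s hs => ?_
  refine csInf_le ⟨0, fun x hx => hx.1.le⟩ ⟨hν.trans hs, ?_⟩
  exact summable_subtype_iff_indicator.2 (h s hs)

/-- The window bound passes to unions of chains, since every window is finite; hence there is a
maximal set satisfying it. -/
lemma exists_maximal_window (S : Set ℕ) {f : ℕ → ℝ} (hf : ∀ n, 0 ≤ f n) :
    ∃ T : Set ℕ, Maximal
      (· ∈ {T : Set ℕ | T ⊆ S ∧ ∀ n, 1 ≤ n → (windowCount T n : ℝ) ≤ f n}) T := by
  classical
  refine zorn_subset _ fun c hc hchain => ⟨⋃₀ c, ⟨?_, ?_⟩, fun s hs => Set.subset_sUnion_of_mem hs⟩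
  · exact Set.sUnion_subset fun t ht => (hc ht).1
  · intro n hn
    rcases c.eq_empty_or_nonempty with rfl | hne
    · simpa [windowCount] using hf n
    obtain ⟨t, htc, ht⟩ := DirectedOn.exists_mem_subset_of_finset_subset_biUnion hne
      (f := fun t : Set ℕ => t) (s := (Finset.Ioc n (2 * n)).filter (· ∈ ⋃₀ c))
      hchain.directedOn (by
        intro x hx
        have := (Finset.mem_filter.1 hx).2
        rwa [Set.sUnion_eq_biUnion] at this)
    refine le_trans ?_ ((hc htc).2 n hn)
    rw [Nat.cast_le, windowCount, windowCount]
    refine Finset.card_le_card fun x hx => Finset.mem_filter.2 ⟨(Finset.mem_filter.1 hx).1, ht hx⟩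

/-- If `q ∈ S` cannot be added to a maximal set `T`, the obstruction is an almost full window
`(m, 2m]` containing `q`; only `q ≤ 2m` is recorded, which forces `m` to be large with `q`. -/
lemma exists_full_window {S T : Set ℕ} {f : ℕ → ℝ}
    (hT : Maximal (· ∈ {T : Set ℕ | T ⊆ S ∧ ∀ n, 1 ≤ n → (windowCount T n : ℝ) ≤ f n}) T)
    {q : ℕ} (hqS : q ∈ S) (hqT : q ∉ T) :
    ∃ m, 1 ≤ m ∧ q ≤ 2 * m ∧ f m - 1 < windowCount T m := by
  classical
  by_contra! hcon
  refine hqT (hT.2 (y := insert q T) ⟨Set.insert_subset hqS hT.1.1, fun n hn => ?_⟩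
    (Set.subset_insert q T) (Set.mem_insert q T))
  by_cases hq : q ≤ 2 * n
  · have h1 := hcon n hn hq
    have h2 : windowCount (insert q T) n ≤ windowCount T n + 1 := by
      rw [windowCount, windowCount]
      refine (Finset.card_le_card (t := insert q ((Finset.Ioc n (2 * n)).filter (· ∈ T))) ?_).trans
        (Finset.card_insert_le _ _)
      intro x hx
      simp only [Finset.mem_filter, Set.mem_insert_iff, Finset.mem_insert] at hx ⊢
      tauto
    have h3 : (windowCount (insert q T) n : ℝ) ≤ windowCount T n + 1 := by exact_mod_cast h2
    linarith
  · have h2 : windowCount (insert q T) n = windowCount T n := by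
      rw [windowCount, windowCount]
      congr 1
      ext x
      simp only [Finset.mem_filter, Finset.mem_Ioc, Set.mem_insert_iff]
      constructor
      · rintro ⟨hx, rfl | hxT⟩
        · exact absurd hx.2 hq
        · exact ⟨hx, hxT⟩
      · exact fun hx => ⟨hx.1, Or.inr hx.2⟩
    rw [h2]
    exact hT.1.2 n hn

/-- Chebyshev-type bound of a window count by the full series. -/
lemma windowCount_le_of_summable {T : Set ℕ} {s : ℝ} (hs : 0 < s)
    (h : Summable (T.indicator fun q : ℕ => (q : ℝ) ^ (-s))) {n : ℕ} (hn : 1 ≤ n) :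
    (windowCount T n : ℝ) ≤
      (∑' q, T.indicator (fun q : ℕ => (q : ℝ) ^ (-s)) q) * (2 ^ s * (n : ℝ) ^ s) := by
  classical
  have hn0 : (0 : ℝ) < n := by exact_mod_cast hn
  have h1 : (windowCount T n : ℝ) * (2 * n : ℝ) ^ (-s) ≤
      ∑' q, T.indicator (fun q : ℕ => (q : ℝ) ^ (-s)) q := by
    refine le_trans ?_ (h.sum_le_tsum ((Finset.Ioc n (2 * n)).filter (· ∈ T))
      fun q _ => Set.indicator_nonneg (fun _ _ => by positivity) q)
    rw [windowCount, ← nsmul_eq_mul, ← Finset.sum_const]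
    refine Finset.sum_le_sum fun q hq => ?_
    simp only [Finset.mem_filter, Finset.mem_Ioc] at hq
    rw [Set.indicator_of_mem hq.2]
    have hq0 : (0 : ℝ) < q := by exact_mod_cast (by omega : 0 < q)
    refine Real.rpow_le_rpow_of_nonpos hq0 ?_ (by linarith)
    exact_mod_cast hq.1.2
  rw [← Real.mul_rpow (by norm_num) hn0.le]
  rwa [Real.rpow_neg (by positivity), ← div_eq_mul_inv, div_le_iff₀ (by positivity)] at h1

theorem exists_subset_with_prescribed_density
    (S : Set ℕ) (hSpos : ∀ q ∈ S, 0 < q) (hSinf : S.Infinite)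
    (hSconv : 0 < expConv S) (ν : ℝ) (hν0 : 0 < ν) (hνS : ν < expConv S)
    (α : ℕ → ℝ) (hαpos : ∀ n, 0 < α n)
    (hαmono : Monotone fun n : ℕ => (n : ℝ) ^ ν * α n)
    (hαlog : Tendsto (fun n : ℕ => Real.log (α n) / Real.log n) atTop (nhds 0)) :
    ∃ Sν : Set ℕ, Sν ⊆ S ∧
      (∀ n : ℕ, 1 ≤ n →
        (deltaCount Sν (2 * n) : ℝ) - (deltaCount Sν n : ℝ) ≤ (n : ℝ) ^ ν * α n) ∧
      (∃ nk : ℕ → ℕ, StrictMono nk ∧ (∀ k, 0 < nk k) ∧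
        Tendsto
          (fun k : ℕ =>
            ((deltaCount Sν (2 * nk k) : ℝ) - (deltaCount Sν (nk k) : ℝ)) /
              ((nk k : ℝ) ^ ν * α (nk k)))
          atTop (nhds 1)) ∧
      expConv Sν = ν := by
  simp only [deltaCount_sub]
  set f : ℕ → ℝ := fun n => (n : ℝ) ^ ν * α n with hf
  have f0 : ∀ n, 0 ≤ f n := fun n => mul_nonneg (by positivity) (hαpos n).le
  have ftop : Tendsto f atTop atTop := by
    refine tendsto_atTop_mono' atTop
      (eventually_rpow_le (ν := ν) (r := ν / 2) hαpos hαlog (by linarith)) ?_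
    exact (tendsto_rpow_atTop (by linarith)).comp tendsto_natCast_atTop_atTop
  obtain ⟨T, hT⟩ := exists_maximal_window S f0
  obtain ⟨hTS, hTw⟩ := hT.1
  have hTsum : ∀ s, ν < s → Summable (T.indicator fun q : ℕ => (q : ℝ) ^ (-s)) := by
    intro s hs
    obtain ⟨r, hr1, hr2⟩ := exists_between hs
    exact summable_of_window (hν0.trans hs) hr2 (eventually_le_rpow hαpos hαlog hr1) hTw
  have hdiff : (S \ T).Infinite := by
    intro hfin
    refine absurd (expConv_le hν0 fun s hs => ?_) (not_le.2 hνS)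
    refine (hTsum s hs).congr_cofinite ?_
    filter_upwards [hfin.compl_mem_cofinite] with q hq
    by_cases hqT : q ∈ T
    · rw [Set.indicator_of_mem hqT, Set.indicator_of_mem (hTS hqT)]
    · rw [Set.indicator_of_notMem hqT, Set.indicator_of_notMem fun hqS => hq ⟨hqS, hqT⟩]
  have hfreq : ∃ᶠ m : ℕ in atTop, 1 ≤ m ∧ f m - 1 < windowCount T m := by
    rw [frequently_atTop]
    intro N
    obtain ⟨q, hq, hqN⟩ := hdiff.exists_gt (2 * N)
    obtain ⟨m, hm1, hqm, hm⟩ := exists_full_window hT hq.1 hq.2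
    exact ⟨m, by omega, hm1, hm⟩
  refine ⟨T, hTS, hTw, ?_, le_antisymm (expConv_le hν0 hTsum) ?_⟩
  · obtain ⟨nk, hmono, hnk⟩ := extraction_of_frequently_atTop hfreq
    refine ⟨nk, hmono, fun k => (hnk k).1, ?_⟩
    have hftop : Tendsto (fun k => f (nk k)) atTop atTop := ftop.comp hmono.tendsto_atTop
    have hlow : Tendsto (fun k => 1 - (f (nk k))⁻¹) atTop (nhds 1) := by
      simpa using hftop.inv_tendsto_atTop.const_sub 1
    refine tendsto_of_tendsto_of_tendsto_of_le_of_le' hlow tendsto_const_nhds ?_ ?_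
    · filter_upwards [hftop.eventually_gt_atTop 0] with k hk
      change _ ≤ _ / f (nk k)
      rw [le_div_iff₀ hk, sub_mul, inv_mul_cancel₀ hk.ne', one_mul]
      exact (hnk k).2.le
    · exact Eventually.of_forall fun k => div_le_one_of_le₀ (hTw _ (hnk k).1) (f0 _)
  · refine le_csInf ⟨ν + 1, by linarith, summable_subtype_iff_indicator.2 (hTsum _ (by linarith))⟩ ?_
    rintro s ⟨hs0, hs⟩
    by_contra! hsν
    have hs' : Summable (T.indicator fun q : ℕ => (q : ℝ) ^ (-s)) :=
      summable_subtype_iff_indicator.1 hs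
    obtain ⟨r, hr1, hr2⟩ := exists_between hsν
    set M := ∑' q, T.indicator (fun q : ℕ => (q : ℝ) ^ (-s)) q
    -- On almost full windows `n ^ r - 1 < M * 2 ^ s * n ^ s`, which bounds `n ^ (r - s)`.
    have hbig : Tendsto (fun n : ℕ => (n : ℝ) ^ (r - s)) atTop atTop :=
      (tendsto_rpow_atTop (sub_pos.2 hr1)).comp tendsto_natCast_atTop_atTop
    obtain ⟨n, ⟨hn1, hn⟩, hnr, hnM⟩ := (hfreq.and_eventually
      ((eventually_rpow_le (ν := ν) hαpos hαlog hr2).and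
        (hbig.eventually_gt_atTop (M * 2 ^ s + 1)))).exists
    have hw := windowCount_le_of_summable hs0 hs' hn1
    have hn0 : (1 : ℝ) ≤ n := by exact_mod_cast hn1
    have hns : 1 ≤ (n : ℝ) ^ s := Real.one_le_rpow hn0 hs0.le
    have hmul : (n : ℝ) ^ (r - s) * (n : ℝ) ^ s = (n : ℝ) ^ r := by
      rw [← Real.rpow_add (by linarith)]; ring_nf
    have hlt := mul_lt_mul_of_pos_right hnM (by linarith : 0 < (n : ℝ) ^ s)
    simp only [hf] at hn
    change _ ≤ M * _ at hw
    nlinarith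
end

section
/- For every ε ∈ (0,1) there exist constants c_1, c_2 > 0 and Q_0 ∈ ℕ, depending only on ε, such that for every integer q ≥ Q_0, every real η > q^{−1+ε} and every real γ ≥ 0, c_1 η φ(q) ≤ #{p ∈ ℤ : γq ≤ p ≤ (γ+η)q and gcd(p,q) = 1} ≤ c_2 η φ(q), where φ denotes Euler's totient function. -/
/-!
Put `X = η q`. Sieving the integers of an interval of length `X` by the primes dividing `q` one at a
time gives `#{…} = X ∏_{p ∣ q} (1 - 1/p) + O(2^{ω(q)})` with implied constant `1`
(`abs_siftedCount_sub_le`), and the main term is `X φ(q) / q = η φ(q)`. Since `1 - 1/p ≥ 1/2`, the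
main term is at least `X / 2^{ω(q)}`, so the error is at most half of it as soon as
`2 · 4^{ω(q)} ≤ X`. As `X > q^ε`, this holds for large `q` by the bound `4^{ω(q)} ≪ q^{ε/2}`
(`four_pow_card_primeFactors_le`). The constants are thus `c₁ = 1/2` and `c₂ = 3/2`.
-/

open Filter

/-- The integers in the closed real interval `[a, b]` divisible by no element of `S`. -/
noncomputable def sifted (S : Finset ℕ) (a b : ℝ) : Finset ℤ :=
  (Finset.Icc ⌈a⌉ ⌊b⌋).filter (fun n => ∀ p ∈ S, ¬ (p : ℤ) ∣ n)

lemma mem_sifted {S : Finset ℕ} {a b : ℝ} {n : ℤ} :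
    n ∈ sifted S a b ↔ (a ≤ n ∧ (n : ℝ) ≤ b) ∧ ∀ p ∈ S, ¬ (p : ℤ) ∣ n := by
  simp [sifted, Int.ceil_le, Int.le_floor]

/-- Sieving by one further prime `p` removes the multiples `p m`, where `m` runs over the sifted
integers of the interval shrunk by the factor `p`. -/
lemma card_sifted_insert {S : Finset ℕ} {p : ℕ} (hp : p.Prime) (hS : ∀ r ∈ S, r.Prime)
    (hpS : p ∉ S) (a b : ℝ) :
    (sifted (insert p S) a b).card + (sifted S (a / p) (b / p)).card = (sifted S a b).card := by
  have hp0 : (0 : ℝ) < p := by exact_mod_cast hp.pos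
  have hpz : (p : ℤ) ≠ 0 := by exact_mod_cast hp.ne_zero
  have h1 : (sifted S a b).filter (fun n => ¬ (p : ℤ) ∣ n) = sifted (insert p S) a b := by
    ext n
    simp only [Finset.mem_filter, mem_sifted, Finset.forall_mem_insert]
    tauto
  have h2 : (sifted S a b).filter (fun n => (p : ℤ) ∣ n) =
      (sifted S (a / p) (b / p)).image (fun m => (p : ℤ) * m) := by
    ext n
    simp only [Finset.mem_filter, mem_sifted, Finset.mem_image]
    -- a prime `r ∈ S` divides `p m` exactly when it divides `m`, because `r ≠ p`
    have key : ∀ m : ℤ, ∀ r ∈ S, (r : ℤ) ∣ p * m ↔ (r : ℤ) ∣ m := by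
      intro m r hr
      refine ⟨fun h => ?_, fun h => h.mul_left _⟩
      refine IsCoprime.dvd_of_dvd_mul_left ?_ h
      rw [Nat.isCoprime_iff_coprime]
      exact (Nat.coprime_primes (hS r hr) hp).2 (fun e => hpS (e ▸ hr))
    constructor
    · rintro ⟨⟨⟨h1, h2⟩, h3⟩, m, rfl⟩
      push_cast at h1 h2
      refine ⟨m, ⟨⟨?_, ?_⟩, fun r hr => fun h => h3 r hr ((key m r hr).2 h)⟩, rfl⟩
      · rw [div_le_iff₀ hp0]; linarith
      · rw [le_div_iff₀ hp0]; linarith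
    · rintro ⟨m, ⟨⟨h1, h2⟩, h3⟩, rfl⟩
      rw [div_le_iff₀ hp0] at h1
      rw [le_div_iff₀ hp0] at h2
      refine ⟨⟨⟨?_, ?_⟩, fun r hr => fun h => h3 r hr ((key m r hr).1 h)⟩, dvd_mul_right _ _⟩
      · push_cast; linarith
      · push_cast; linarith
  have h3 := Finset.card_filter_add_card_filter_not (s := sifted S a b) (fun n => (p : ℤ) ∣ n)
  rw [h1, h2, Finset.card_image_of_injective _ (mul_right_injective₀ hpz)] at h3
  omega

/-- The sieve of Eratosthenes–Legendre with explicit error term; each prime doubles the error. -/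
lemma abs_siftedCount_sub_le (S : Finset ℕ) : (∀ r ∈ S, r.Prime) → ∀ a b : ℝ, a ≤ b →
    |((sifted S a b).card : ℝ) - (b - a) * ∏ p ∈ S, (1 - (p : ℝ)⁻¹)| ≤ 2 ^ S.card := by
  induction S using Finset.induction_on with
  | empty =>
    intro _ a b hab
    have h0 : (0 : ℤ) ≤ ⌊b⌋ + 1 - ⌈a⌉ := by
      have h1 : (a : ℝ) < ⌊b⌋ + 1 := hab.trans_lt (Int.lt_floor_add_one b)
      have : ⌈a⌉ ≤ ⌊b⌋ + 1 := Int.ceil_le.2 (by push_cast; exact h1.le)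
      linarith
    have h2 : ((sifted ∅ a b).card : ℝ) = ⌊b⌋ + 1 - ⌈a⌉ := by
      have : ((sifted ∅ a b).card : ℤ) = ⌊b⌋ + 1 - ⌈a⌉ := by
        simp only [sifted, Finset.notMem_empty, false_imp_iff, implies_true, Finset.filter_true,
          Int.card_Icc]
        exact Int.toNat_of_nonneg h0
      exact_mod_cast this
    rw [h2]
    simp only [Finset.prod_empty, Finset.card_empty, pow_zero, mul_one]
    have := Int.lt_floor_add_one b
    have := Int.floor_le b
    have := Int.ceil_lt_add_one a
    have := Int.le_ceil a
    rw [abs_le]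
    constructor <;> linarith
  | insert p S hpS ih =>
    intro hS a b hab
    have hp : p.Prime := hS p (Finset.mem_insert_self _ _)
    have hS' : ∀ r ∈ S, r.Prime := fun r hr => hS r (Finset.mem_insert_of_mem hr)
    have e1 := ih hS' a b hab
    have e2 := ih hS' (a / p) (b / p) (by gcongr)
    have e3 : ((sifted (insert p S) a b).card : ℝ) =
        (sifted S a b).card - (sifted S (a / p) (b / p)).card := by
      rw [← card_sifted_insert hp hS' hpS a b]
      push_cast
      ring
    rw [e3, Finset.prod_insert hpS, Finset.card_insert_of_notMem hpS, pow_succ]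
    rw [abs_le] at e1 e2 ⊢
    have e4 : (b / p - a / p) * ∏ r ∈ S, (1 - (r : ℝ)⁻¹) =
      (b - a) * ((p : ℝ)⁻¹ * ∏ r ∈ S, (1 - (r : ℝ)⁻¹)) := by ring
    rw [e4] at e2
    constructor <;> nlinarith

/-- The bound `4 ^ ω(q) ≪ q ^ δ`: the primes `p` with `4 ≤ p ^ δ` contribute at most `q ^ δ`, and
there are boundedly many others. -/
lemma four_pow_card_primeFactors_le (δ : ℝ) (hδ : 0 < δ) :
    ∃ C : ℝ, 0 < C ∧ ∀ q : ℕ, 0 < q → (4 : ℝ) ^ q.primeFactors.card ≤ C * (q : ℝ) ^ δ := by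
  obtain ⟨B, hB⟩ : ∃ B : ℕ, ∀ n : ℕ, B ≤ n → (4 : ℝ) ≤ (n : ℝ) ^ δ := by
    have := ((tendsto_rpow_atTop hδ).comp tendsto_natCast_atTop_atTop).eventually_ge_atTop (4 : ℝ)
    exact eventually_atTop.1 this
  refine ⟨4 ^ B, by positivity, fun q hq => ?_⟩
  have h1 : (4 : ℝ) ^ (q.primeFactors.filter (· < B)).card ≤ 4 ^ B := by
    refine pow_le_pow_right₀ (by norm_num) ?_
    calc _ ≤ (Finset.range B).card :=
          Finset.card_le_card (fun x hx => by simpa using (Finset.mem_filter.1 hx).2)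
      _ = B := Finset.card_range B
  have h2 : (4 : ℝ) ^ (q.primeFactors.filter (¬ · < B)).card ≤ (q : ℝ) ^ δ := by
    calc (4 : ℝ) ^ (q.primeFactors.filter (¬ · < B)).card
        = ∏ p ∈ q.primeFactors.filter (¬ · < B), (4 : ℝ) := by rw [Finset.prod_const]
      _ ≤ ∏ p ∈ q.primeFactors.filter (¬ · < B), (p : ℝ) ^ δ :=
          Finset.prod_le_prod (fun _ _ => by norm_num)
            (fun p hp => hB p (not_lt.1 (Finset.mem_filter.1 hp).2))
      _ = (∏ p ∈ q.primeFactors.filter (¬ · < B), (p : ℝ)) ^ δ :=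
          Real.finsetProd_rpow _ _ (fun _ _ => by positivity) _
      _ ≤ (q : ℝ) ^ δ := by
          refine Real.rpow_le_rpow (by positivity) ?_ hδ.le
          have : ∏ p ∈ q.primeFactors.filter (¬ · < B), p ≤ q :=
            Nat.le_of_dvd hq ((Finset.prod_dvd_prod_of_subset _ _ _
              (Finset.filter_subset _ _)).trans (Nat.prod_primeFactors_dvd q))
          rw [← Nat.cast_prod]
          exact Nat.cast_le.2 this
  rw [← Finset.card_filter_add_card_filter_not (s := q.primeFactors) (· < B), pow_add]
  exact mul_le_mul h1 h2 (by positivity) (by positivity)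

/-- Every factor of the Euler product of `φ(q) / q` is at least `1 / 2`. -/
lemma one_le_two_pow_mul_prod (q : ℕ) :
    1 ≤ (2 : ℝ) ^ q.primeFactors.card * ∏ p ∈ q.primeFactors, (1 - (p : ℝ)⁻¹) := by
  rw [← Finset.prod_const, ← Finset.prod_mul_distrib]
  refine (Finset.prod_const_one (s := q.primeFactors)).ge.trans ?_
  refine Finset.prod_le_prod (fun _ _ => zero_le_one) (fun p hp => ?_)
  have h2 : (2 : ℝ) ≤ p := by exact_mod_cast (Nat.prime_of_mem_primeFactors hp).two_le
  have := inv_anti₀ (by norm_num) h2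
  linarith

lemma int_gcd_eq_one_iff {q : ℕ} (hq : q ≠ 0) (n : ℤ) :
    Int.gcd n q = 1 ↔ ∀ p ∈ q.primeFactors, ¬ (p : ℤ) ∣ n := by
  rw [Int.gcd_eq_natAbs, Int.natAbs_natCast, ← Nat.coprime_iff_gcd_eq_one]
  constructor
  · intro h p hp hd
    exact Nat.Prime.not_coprime_iff_dvd.2 ⟨p, Nat.prime_of_mem_primeFactors hp,
      Int.natCast_dvd.1 hd, Nat.dvd_of_mem_primeFactors hp⟩ h
  · intro h
    by_contra hc
    obtain ⟨p, hp, h1, h2⟩ := Nat.Prime.not_coprime_iff_dvd.1 hc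
    exact h p (Nat.mem_primeFactors.2 ⟨hp, h2, hq⟩) (Int.natCast_dvd.2 h1)

theorem coprime_count_in_interval (ε : ℝ) (hε0 : 0 < ε) (hε1 : ε < 1) :
    ∃ c₁ : ℝ, 0 < c₁ ∧ ∃ c₂ : ℝ, 0 < c₂ ∧ ∃ Q₀ : ℕ,
      ∀ q : ℕ, Q₀ ≤ q → ∀ η : ℝ, (q : ℝ) ^ (-1 + ε) < η → ∀ γ : ℝ, 0 ≤ γ →
        c₁ * η * (Nat.totient q : ℝ) ≤
          (({p : ℤ | γ * q ≤ (p : ℝ) ∧ (p : ℝ) ≤ (γ + η) * q ∧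
            Int.gcd p (q : ℤ) = 1}).ncard : ℝ) ∧
        (({p : ℤ | γ * q ≤ (p : ℝ) ∧ (p : ℝ) ≤ (γ + η) * q ∧
            Int.gcd p (q : ℤ) = 1}).ncard : ℝ) ≤
          c₂ * η * (Nat.totient q : ℝ) := by
  obtain ⟨C, hC0, hC⟩ := four_pow_card_primeFactors_le (ε / 2) (by positivity)
  obtain ⟨B, hB⟩ : ∃ B : ℕ, ∀ n : ℕ, B ≤ n → 2 * C ≤ (n : ℝ) ^ (ε / 2) := by
    have := ((tendsto_rpow_atTop (half_pos hε0)).comp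
      tendsto_natCast_atTop_atTop).eventually_ge_atTop (2 * C)
    exact eventually_atTop.1 this
  refine ⟨1 / 2, by norm_num, 3 / 2, by norm_num, max B 1, fun q hq η hη γ _ => ?_⟩
  have hq1 : 0 < q := (le_max_right B 1).trans hq
  have hqR : (0 : ℝ) < q := by exact_mod_cast hq1
  have hη0 : 0 < η := lt_trans (by positivity) hη
  have hset : {p : ℤ | γ * q ≤ (p : ℝ) ∧ (p : ℝ) ≤ (γ + η) * q ∧ Int.gcd p (q : ℤ) = 1} =
      (sifted q.primeFactors (γ * q) ((γ + η) * q) : Set ℤ) := by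
    ext n
    simp only [Set.mem_ofPred_eq, Finset.mem_coe, mem_sifted, int_gcd_eq_one_iff hq1.ne', and_assoc]
  rw [hset, Set.ncard_coe_finset]
  have hmain := abs_siftedCount_sub_le q.primeFactors
    (fun r hr => Nat.prime_of_mem_primeFactors hr) (γ * q) ((γ + η) * q) (by nlinarith)
  set P : ℝ := ∏ p ∈ q.primeFactors, (1 - (p : ℝ)⁻¹) with hP
  have htot : (q.totient : ℝ) = q * P := by
    have := congrArg (Rat.cast : ℚ → ℝ) (Nat.totient_eq_mul_prod_factors q)
    push_cast at this
    exact this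
  have hprod := one_le_two_pow_mul_prod q
  rw [← hP] at hprod
  have hX : (q : ℝ) ^ ε < η * q := by
    have : (q : ℝ) ^ ε = (q : ℝ) ^ (-1 + ε) * q := by
      nth_rewrite 3 [← Real.rpow_one (q : ℝ)]
      rw [← Real.rpow_add hqR]
      congr 1
      ring
    rw [this]
    gcongr
  have h4 : 2 * (4 : ℝ) ^ q.primeFactors.card ≤ η * q := by
    have h5 := hB q ((le_max_left B 1).trans hq)
    have h6 : (q : ℝ) ^ ε = (q : ℝ) ^ (ε / 2) * (q : ℝ) ^ (ε / 2) := by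
      rw [← Real.rpow_add hqR]
      congr 1
      ring
    have h7 := mul_le_mul_of_nonneg_right h5 (by positivity : 0 ≤ (q : ℝ) ^ (ε / 2))
    have h8 := hC q hq1
    linarith
  set w : ℝ := (2 : ℝ) ^ q.primeFactors.card with hw
  have hw0 : 0 < w := by positivity
  have h44 : (4 : ℝ) ^ q.primeFactors.card = w * w := by
    rw [hw, ← mul_pow]
    norm_num
  rw [h44] at h4
  have hP0 : 0 < P := by
    by_contra h
    nlinarith
  -- the error term `w` is at most half of the main term: `2 w ≤ 2 w (w P) ≤ η q P`
  have herr : 2 * w ≤ η * q * P := by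
    have h9 := mul_le_mul_of_nonneg_right h4 hP0.le
    have h10 := mul_le_mul_of_nonneg_left hprod hw0.le
    linarith
  rw [abs_le] at hmain
  rw [htot]
  constructor <;> linarith [hmain.1, hmain.2]
end
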